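/- arXiv:1104.5007 — 2 statements merged into one kernel-verified Lean document; each statement's English description precedes it below -/
import Mathlib

section
/- For every integer k ≥ 1 there exists a constant γ₀ > 0 with the following property. Let γ_k(n) := γ₀·(β_{k+1}(n)+2), let n ≥ 1, and let 𝒫 be a nonempty family of n-permutations with VC-dimension at most k such that v(𝒫) ≥ 2·γ_k(n). Then there exists a subfamily 𝒫′ ⊆ 𝒫 with v(𝒫′) ≤ v(𝒫) − v(𝒫)²/(γ_k(n)²·n) and |𝒫′| ≥ |𝒫|/(2·v(𝒫)^{2k}). -/
/-! ## Inverse Ackermann hierarchy -/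

/-- Bounded-fuel iteration counter: number of applications of `f` needed to bring `m`
down to a value `≤ 1` (assuming `f` strictly decreases on values `≥ 2`). -/
def iterCount (f : ℕ → ℕ) : ℕ → ℕ → ℕ
  | 0, _ => 0
  | fuel + 1, m => if m ≤ 1 then 0 else 1 + iterCount f fuel (f m)

/-- The inverse Ackermann hierarchy: `alphaHier 1 m = ⌈m/2⌉`, `alphaHier d 1 = 0` for `d ≥ 2`,
and `alphaHier d m = 1 + alphaHier d (alphaHier (d-1) m)` for `m, d ≥ 2`. -/
def alphaHier : ℕ → ℕ → ℕ
  | 0, m => m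
  | 1, m => (m + 1) / 2
  | d + 2, m => iterCount (alphaHier (d + 1)) m m

/-- The inverse Ackermann function `α(m) = min {k ≥ 1 : α_k(m) ≤ 3}`. -/
noncomputable def invAck (m : ℕ) : ℕ := sInf {k : ℕ | 1 ≤ k ∧ alphaHier k m ≤ 3}

/-! ## Permutations, restrictions, VC-dimension -/

/-- The restriction of the `n`-permutation `π` to the (increasing) `k`-tuple of positions `a`
is the `k`-permutation `σ`. -/
def PermRestrictionIs {n k : ℕ} (π : Equiv.Perm (Fin n)) (a : Fin k → Fin n)
    (σ : Equiv.Perm (Fin k)) : Prop :=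
  ∀ i j : Fin k, σ i < σ j ↔ π (a i) < π (a j)

/-- The `k`-tuple of positions `a` is shattered by the family `P` of `n`-permutations. -/
def Shatters {n k : ℕ} (P : Finset (Equiv.Perm (Fin n))) (a : Fin k → Fin n) : Prop :=
  StrictMono a ∧ ∀ σ : Equiv.Perm (Fin k), ∃ π ∈ P, PermRestrictionIs π a σ

/-- The family `P` of `n`-permutations has VC-dimension at most `k`:
no `(k+1)`-tuple of positions is shattered by `P`. -/
def VCDimLE (n k : ℕ) (P : Finset (Equiv.Perm (Fin n))) : Prop :=
  ∀ a : Fin (k + 1) → Fin n, ¬ Shatters P a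

/-- The number of `1`-entries of the union of the permutation matrices of a family `P`
of `n`-permutations. -/
noncomputable def permOnes {n : ℕ} (P : Finset (Equiv.Perm (Fin n))) : ℕ :=
  Nat.card {p : Fin n × Fin n // ∃ π ∈ P, π p.2 = p.1}

/-- `v(P) = |M_P| / n`, the average number of `1`-entries per column of the union
of the permutation matrices of the family `P`. -/
noncomputable def vPerm {n : ℕ} (P : Finset (Equiv.Perm (Fin n))) : ℝ :=
  (permOnes P : ℝ) / (n : ℝ)

/-! ## (0,1)-matrices -/

/-- The number of `1`-entries of a `(0,1)`-matrix (represented as a `Bool` matrix). -/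
noncomputable def matOnes {m n : ℕ} (M : Fin m → Fin n → Bool) : ℕ :=
  Nat.card {p : Fin m × Fin n // M p.1 p.2 = true}

/-- The number of `1`-entries in column `j` of a `(0,1)`-matrix. -/
noncomputable def colOnes {m n : ℕ} (M : Fin m → Fin n → Bool) (j : Fin n) : ℕ :=
  Nat.card {i : Fin m // M i j = true}

/-- The matrix `B` contains the matrix `S`. -/
def MatContains {m n p q : ℕ} (B : Fin m → Fin n → Bool) (S : Fin p → Fin q → Bool) : Prop :=
  ∃ (r : Fin p → Fin m) (c : Fin q → Fin n), StrictMono r ∧ StrictMono c ∧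
    ∀ a b, S a b = true → B (r a) (c b) = true

/-- The `s × 2` matrix `DS_s`, with a `1`-entry in (1-indexed) row `i` and column `j`
exactly when `i + j` is odd. -/
def DS (s : ℕ) : Fin s → Fin 2 → Bool :=
  fun i j => decide ((i.val + j.val) % 2 = 1)

/-- The maximum number of `1`-entries in an `n × n` matrix avoiding `S`. -/
noncomputable def exMat {p q : ℕ} (S : Fin p → Fin q → Bool) (n : ℕ) : ℕ :=
  sSup {x : ℕ | ∃ M : Fin n → Fin n → Bool, ¬ MatContains M S ∧ matOnes M = x}

/-- An `n × n` matrix is `k`-full if some increasing `k`-tuple of columns contains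
every `k`-permutation matrix. -/
def IsFull (k : ℕ) {n : ℕ} (M : Fin n → Fin n → Bool) : Prop :=
  ∃ c : Fin k → Fin n, StrictMono c ∧ ∀ σ : Equiv.Perm (Fin k),
    ∃ r : Fin k → Fin n, StrictMono r ∧ ∀ b : Fin k, M (r (σ b)) (c b) = true

/-- `pFull k n` is the maximum number of `1`-entries in an `n × n` matrix that is
not `(k+1)`-full. -/
noncomputable def pFull (k n : ℕ) : ℕ :=
  sSup {x : ℕ | ∃ M : Fin n → Fin n → Bool, ¬ IsFull (k + 1) M ∧ matOnes M = x}

/-! ## Formations -/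

/-- `M` contains a `B`-fat `(r,s)`-formation: there are an `s`-partition of the rows into
intervals (the fibers of a monotone map `g`) and `r` columns, each having at least `B`
`1`-entries in every interval. -/
def FatFormation (B r s : ℕ) {m n : ℕ} (M : Fin m → Fin n → Bool) : Prop :=
  ∃ g : Fin m → Fin s, Monotone g ∧ ∃ c : Fin r → Fin n, StrictMono c ∧
    ∀ (j : Fin r) (i : Fin s), B ≤ Nat.card {x : Fin m // g x = i ∧ M x (c j) = true}

/-- `M` contains a doubled `(r,s)`-formation: there are an `s`-partition of the rows into
intervals and `r` columns, each having at least one `1`-entry in the first and last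
interval and at least two `1`-entries in every other interval. -/
def DoubledFormation (r s : ℕ) {m n : ℕ} (M : Fin m → Fin n → Bool) : Prop :=
  ∃ g : Fin m → Fin s, Monotone g ∧ ∃ c : Fin r → Fin n, StrictMono c ∧
    ∀ (j : Fin r) (i : Fin s),
      1 ≤ Nat.card {x : Fin m // g x = i ∧ M x (c j) = true} ∧
      (i.val ≠ 0 → i.val ≠ s - 1 → 2 ≤ Nat.card {x : Fin m // g x = i ∧ M x (c j) = true})

/-! ## The functions R, D, β -/

/-- Nivasch's hierarchy `R_s(d)` (shifted as in the paper). -/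
def Rfun : ℕ → ℕ → ℕ
  | 0, _ => 0
  | 1, _ => 0
  | 2, _ => 2
  | 3, _ => 3
  | 4, d => 2 * d + 1
  | _ + 5, 0 => 0
  | _ + 5, 1 => 0
  | s + 5, 2 => 2 ^ (s + 3) + 1
  | s + 5, d + 3 =>
      2 * (Rfun (s + 4) (d + 3) - 1) + (Rfun (s + 3) (d + 3) - 1) * (Rfun (s + 5) (d + 2) - 3) + 1
  termination_by s d => (s, d)

/-- The hierarchy `D_s(d)`. -/
def Dfun : ℕ → ℕ → ℕ
  | 0, _ => 0
  | 1, _ => 0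
  | 2, _ => 2
  | _ + 3, 0 => 0
  | _ + 3, 1 => 0
  | s + 3, 2 => 2 ^ (s + 2) + 2 ^ (s + 1) - 1
  | s + 3, d + 3 =>
      2 * Dfun (s + 2) (d + 3) + (Dfun (s + 1) (d + 3) + 1) * (Rfun (s + 3) (d + 2) - 3)
        + Dfun (s + 3) (d + 2) - Rfun (s + 3) (d + 2) + 1
  termination_by s d => (s, d)

/-- `β_s(m) = D_s(α(m))`. -/
noncomputable def betaFun (s m : ℕ) : ℕ := Dfun s (invAck m)

/-! ## Sequences: MST and formations in sequences -/

/-- The list of column indices of the `1`-entries of a row, in increasing order. -/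
def rowList {n : ℕ} (row : Fin n → Bool) : List (Fin n) :=
  (List.finRange n).filter (fun j => row j)

/-- The matrix → sequence transformation: read the rows top to bottom, writing for each
`1`-entry the index of its column. -/
def MST {m n : ℕ} (M : Fin m → Fin n → Bool) : List (Fin n) :=
  ((List.finRange m).map (fun i => rowList (M i))).flatten

/-- The list `L` contains an `(r,s)`-formation as a subsequence: a concatenation of `s`
permutations of the same `r`-element set of symbols is a sublist of `L`. -/
def IsFormationSeq {A : Type*} [DecidableEq A] (r s : ℕ) (L : List A) : Prop :=
  ∃ (T : Finset A) (F : List (List A)), T.card = r ∧ F.length = s ∧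
    (∀ l ∈ F, l.Nodup ∧ l.toFinset = T) ∧ List.Sublist F.flatten L



theorem iter_fuel (f : ℕ → ℕ) (hf : ∀ x, 2 ≤ x → f x < x) :
    ∀ m N N' : ℕ, m ≤ N → m ≤ N' → iterCount f N m = iterCount f N' m := by
  intro m
  induction m using Nat.strong_induction_on with
  | _ m ih =>
    intro N N' h h'
    by_cases hm : m ≤ 1
    · cases N <;> cases N' <;> simp [iterCount, hm]
    · obtain ⟨N, rfl⟩ : ∃ k, N = k + 1 := ⟨N - 1, by omega⟩
      obtain ⟨N', rfl⟩ : ∃ k, N' = k + 1 := ⟨N' - 1, by omega⟩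
      have := hf m (by omega)
      simp only [iterCount, hm, if_false]
      rw [ih (f m) this N N' (by omega) (by omega)]

theorem alpha_one (m : ℕ) : alphaHier 1 m = (m + 1) / 2 := by simp [alphaHier]

theorem alpha_small (d m : ℕ) (hd : 2 ≤ d) (hm : m ≤ 1) : alphaHier d m = 0 := by
  obtain ⟨d, rfl⟩ : ∃ k, d = k + 2 := ⟨d - 2, by omega⟩
  rw [alphaHier]
  cases m <;> simp [iterCount, hm]

theorem alpha_rec_aux (d : ℕ) (h : ∀ x, 2 ≤ x → alphaHier (d + 1) x < x) (m : ℕ) (hm : 2 ≤ m) :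
    alphaHier (d + 2) m = 1 + alphaHier (d + 2) (alphaHier (d + 1) m) := by
  have h1 := h m hm
  rw [alphaHier, alphaHier]
  obtain ⟨k, rfl⟩ : ∃ k, m = k + 1 := ⟨m - 1, by omega⟩
  rw [iterCount, if_neg (by omega)]
  rw [iter_fuel _ h _ k (alphaHier (d + 1) (k + 1)) (by omega) le_rfl]

theorem alpha_lt (d : ℕ) : ∀ m, 2 ≤ m → alphaHier (d + 1) m < m := by
  induction d with
  | zero => intro m hm; rw [alpha_one]; omega
  | succ d ih =>
    intro m
    induction m using Nat.strong_induction_on with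
    | _ m ih2 =>
      intro hm
      rw [alpha_rec_aux d ih m hm]
      have h1 := ih m hm
      by_cases hy : 2 ≤ alphaHier (d + 1) m
      · have : alphaHier (d + 2) (alphaHier (d + 1) m) < _ := ih2 _ h1 hy
        omega
      · rw [alpha_small (d + 2) (alphaHier (d + 1) m) (by omega) (by omega)]
        omega

theorem alpha_rec (d : ℕ) (m : ℕ) (hm : 2 ≤ m) :
    alphaHier (d + 2) m = 1 + alphaHier (d + 2) (alphaHier (d + 1) m) :=
  alpha_rec_aux d (alpha_lt d) m hm

theorem alpha_pos (d m : ℕ) (hm : 2 ≤ m) : 1 ≤ alphaHier (d + 1) m := by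
  cases d with
  | zero => rw [alpha_one]; omega
  | succ d => rw [alpha_rec d m hm]; omega

theorem alpha_mono (d : ℕ) : ∀ m m' : ℕ, m ≤ m' → alphaHier (d + 1) m ≤ alphaHier (d + 1) m' := by
  induction d with
  | zero => intro m m' h; rw [alpha_one, alpha_one]; omega
  | succ d ih =>
    intro m
    induction m using Nat.strong_induction_on with
    | _ m ih2 =>
      intro m' h
      by_cases hm : m ≤ 1
      · rw [alpha_small (d + 1 + 1) m (by omega) hm]; omega
      · rw [alpha_rec d m (by omega), alpha_rec d m' (by omega)]
        have : alphaHier (d + 2) (alphaHier (d + 1) m) ≤ alphaHier (d + 2) (alphaHier (d + 1) m') :=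
          ih2 (alphaHier (d + 1) m) (alpha_lt d m (by omega)) _ (ih m m' h)
        omega

theorem alpha2_le (j : ℕ) : ∀ m, m ≤ 2 ^ j → alphaHier 2 m ≤ j := by
  induction j with
  | zero => intro m hm; rw [alpha_small 2 m le_rfl (by simpa using hm)]
  | succ j ih =>
    intro m hm
    by_cases h : m ≤ 1
    · rw [alpha_small 2 m le_rfl h]; omega
    · rw [alpha_rec 0 m (by omega), alpha_one]
      have := ih ((m + 1) / 2) (by rw [pow_succ] at hm; omega)
      simp only [Nat.zero_add] at *
      omega

theorem alpha_succ_le (d m : ℕ) : alphaHier (d + 2) m ≤ alphaHier (d + 1) m := by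
  by_cases h : m ≤ 1
  · rw [alpha_small (d + 2) m (by omega) h]; omega
  · rw [alpha_rec d m (by omega)]
    have h1 := alpha_pos d m (by omega)
    by_cases hy : 2 ≤ alphaHier (d + 1) m
    · have : alphaHier (d + 2) (alphaHier (d + 1) m) < _ := alpha_lt (d + 1) _ hy
      omega
    · rw [alpha_small (d + 2) _ (by omega) (by omega)]; omega

theorem alpha_le_two (d m : ℕ) : alphaHier (d + 2) m ≤ alphaHier 2 m := by
  induction d with
  | zero => exact le_rfl
  | succ d ih => exact (alpha_succ_le (d + 1) m).trans ih

theorem alpha_sub_two (d j : ℕ) (hj : 4 ≤ j) : alphaHier (d + 2) j + 2 ≤ j := by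
  have h1 := alpha_le_two d j
  have h2 := alpha2_le (j - 2) j (by
    obtain ⟨i, rfl⟩ : ∃ i, j = i + 4 := ⟨j - 4, by omega⟩
    have : i < 2 ^ i := Nat.lt_two_pow_self
    have e : i + 4 - 2 = i + 2 := by omega
    rw [e, pow_add]
    omega)
  omega

theorem alpha_decr (n k : ℕ) : alphaHier (k + 2) n ≤ max 3 (alphaHier 2 n - k) := by
  induction k with
  | zero => simp
  | succ k ih =>
    by_cases h : 4 ≤ alphaHier (k + 2) n
    · have hn : 2 ≤ n := by
        by_contra hn
        rw [alpha_small (k + 2) n (by omega) (by omega)] at h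
        omega
      have h1 : alphaHier (k + 3) n = 1 + alphaHier (k + 3) (alphaHier (k + 2) n) :=
        alpha_rec (k + 1) n hn
      have h2 : alphaHier (k + 3) (alphaHier (k + 2) n) + 2 ≤ alphaHier (k + 2) n :=
        alpha_sub_two (k + 1) _ h
      change alphaHier (k + 3) n ≤ _
      omega
    · have h1 : alphaHier (k + 3) n ≤ alphaHier (k + 2) n := alpha_succ_le (k + 1) n
      change alphaHier (k + 3) n ≤ _
      omega

theorem invAck_spec (n : ℕ) : 1 ≤ invAck n ∧ alphaHier (invAck n) n ≤ 3 := by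
  have : {k : ℕ | 1 ≤ k ∧ alphaHier k n ≤ 3}.Nonempty := by
    refine ⟨alphaHier 2 n + 2, by omega, ?_⟩
    have := alpha_decr n (alphaHier 2 n)
    simpa using this
  exact Nat.sInf_mem this

theorem invAck_two (n : ℕ) (hn : 7 ≤ n) : 2 ≤ invAck n := by
  have h := invAck_spec n
  by_contra hc
  have : invAck n = 1 := by omega
  rw [this, alpha_one] at h
  omega


/-- `R` with the convention `R_1 = 1`. -/
def Rk (s d : ℕ) : ℕ := if s = 1 then 1 else Rfun s d

theorem Rk_two (d : ℕ) : Rk 2 d = 2 := by simp [Rk, Rfun]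

theorem Rk_three (d : ℕ) : Rk 3 d = 3 := by simp [Rk, Rfun]

theorem Rk_base (s : ℕ) : Rk (s + 2) 2 = 2 ^ s + 1 := by
  match s with
  | 0 => simp [Rk, Rfun]
  | 1 => simp [Rk, Rfun]
  | 2 => simp [Rk, Rfun]
  | s + 3 => simp [Rk, Rfun]

theorem Rk_rec (s d : ℕ) (hs : 1 ≤ s) : Rk (s + 2) (d + 3) =
    2 * (Rk (s + 1) (d + 3) - 1) + (Rk s (d + 3) - 1) * (Rk (s + 2) (d + 2) - 3) + 1 := by
  match s, hs with
  | 1, _ => simp [Rk, Rfun]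
  | 2, _ => simp [Rk, Rfun]; omega
  | s + 3, _ =>
    simp only [Rk]
    rw [if_neg (by omega), if_neg (by omega), if_neg (by omega), if_neg (by omega)]
    rw [show s + 3 + 2 = s + 5 by omega, Rfun]

theorem Rk_ge (s : ℕ) : (∀ d, 2 ≤ d → s + 1 ≤ Rk (s + 1) d) := by
  induction s using Nat.strong_induction_on with
  | _ s ih =>
    match s, ih with
    | 0, _ => intro d _; simp [Rk]
    | 1, _ => intro d _; simp [Rk, Rfun]
    | s + 2, ih =>
      intro d hd
      obtain ⟨d, rfl⟩ : ∃ k, d = k + 2 := ⟨d - 2, by omega⟩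
      cases d with
      | zero =>
        have := Rk_base (s + 1)
        have h2 : s + 1 < 2 ^ (s + 1) := Nat.lt_two_pow_self
        simp only [Nat.zero_add, Nat.add_assoc, Nat.reduceAdd] at *
        omega
      | succ d =>
        have h := Rk_rec (s + 1) d (by omega)
        have h1 := ih (s + 1) (by omega) (d + 3) (by omega)
        simp only [Nat.add_assoc, Nat.reduceAdd] at *
        omega

theorem Rk_mono (s : ℕ) (hs : 1 ≤ s) (d : ℕ) : Rk (s + 2) (d + 2) ≤ Rk (s + 2) (d + 3) := by
  rw [Rk_rec s d hs]
  have h1 := Rk_ge s (d + 3) (by omega)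
  rcases Nat.lt_or_ge s 2 with h | h
  · obtain rfl : s = 1 := by omega
    simp [Rk, Rfun]
  · obtain ⟨q, rfl⟩ : ∃ q, s = q + 1 := ⟨s - 1, by omega⟩
    have h2 := Rk_ge q (d + 3) (by omega)
    have : 1 * (Rk (q + 1 + 2) (d + 2) - 3) ≤
      (Rk (q + 1) (d + 3) - 1) * (Rk (q + 1 + 2) (d + 2) - 3) :=
      Nat.mul_le_mul_right _ (by omega)
    omega

theorem Rk_mono2 (s : ℕ) (hs : 1 ≤ s) (d : ℕ) (hd : 2 ≤ d) : Rk (s + 2) 2 ≤ Rk (s + 2) d := by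
  obtain ⟨d, rfl⟩ : ∃ k, d = k + 2 := ⟨d - 2, by omega⟩
  induction d with
  | zero => exact le_rfl
  | succ d ih => exact (ih (by omega)).trans (Rk_mono s hs d)

theorem D_one (d : ℕ) : Dfun 1 d = 0 := by simp [Dfun]

theorem D_two (d : ℕ) : Dfun 2 d = 2 := by simp [Dfun]

theorem D_base (s : ℕ) : Dfun (s + 3) 2 = 2 * Dfun (s + 2) 2 + 1 := by
  cases s with
  | zero => simp [Dfun]
  | succ s =>
    rw [Dfun, show s + 1 + 2 = s + 3 by omega, Dfun]
    have : 0 < 2 ^ s := by positivity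
    simp only [pow_succ]
    omega

theorem D_rec (s d : ℕ) : Dfun (s + 3) (d + 3) =
    2 * Dfun (s + 2) (d + 3) + (Dfun (s + 1) (d + 3) + 1) * (Rk (s + 3) (d + 2) - 3)
        + Dfun (s + 3) (d + 2) - Rk (s + 3) (d + 2) + 1 := by
  rw [Dfun]; simp [Rk]

theorem D_ge (s : ℕ) : ∀ d, 2 ≤ d → 2 ≤ Dfun (s + 2) d := by
  induction s with
  | zero => intro d _; simp [Dfun]
  | succ s ih =>
    intro d hd
    obtain ⟨d, rfl⟩ : ∃ k, d = k + 2 := ⟨d - 2, by omega⟩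
    induction d with
    | zero =>
      have h1 := D_base s
      have h2 := ih 2 le_rfl
      change 2 ≤ Dfun (s + 3) 2
      omega
    | succ d ih2 =>
      have h1 := ih (d + 3) (by omega)
      have h2 := ih2 (by omega)
      have h := D_rec s d
      have h3 := Rk_ge (s + 2) (d + 2) (by omega)
      have : 1 * (Rk (s + 3) (d + 2) - 3) ≤
        (Dfun (s + 1) (d + 3) + 1) * (Rk (s + 3) (d + 2) - 3) := Nat.mul_le_mul_right _ (by omega)
      simp only [Nat.add_assoc, Nat.reduceAdd] at *
      omega

theorem D_mono (s d : ℕ) : Dfun (s + 3) (d + 2) ≤ Dfun (s + 3) (d + 3) := by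
  have h1 := D_ge s (d + 3) (by omega)
  have h := D_rec s d
  have h3 := Rk_ge (s + 2) (d + 2) (by omega)
  have : 1 * (Rk (s + 3) (d + 2) - 3) ≤
    (Dfun (s + 1) (d + 3) + 1) * (Rk (s + 3) (d + 2) - 3) := Nat.mul_le_mul_right _ (by omega)
  simp only [Nat.add_assoc, Nat.reduceAdd] at *
  omega

theorem D_mono2 (s d : ℕ) (hd : 2 ≤ d) : Dfun (s + 3) 2 ≤ Dfun (s + 3) d := by
  obtain ⟨d, rfl⟩ : ∃ k, d = k + 2 := ⟨d - 2, by omega⟩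
  induction d with
  | zero => exact le_rfl
  | succ d ih => exact (ih (by omega)).trans (D_mono s d)


open Classical in
/-- weights of intervals of a formation -/
def wt (dbl : Bool) (s i : ℕ) : ℕ :=
  if dbl then 2 - (if i = 0 then 1 else 0) - (if i + 1 = s then 1 else 0) else 1

/-- columns `S`, with `A c` the set of rows of 1-entries in column `c`, contain an
`(r,s)`-formation (plain or doubled). -/
def Form {ι : Type} (dbl : Bool) (s r : ℕ) (S : Finset ι) (A : ι → Finset ℕ) : Prop :=
  ∃ T : Finset ι, T ⊆ S ∧ T.card = r ∧ ∃ g : ℕ → ℕ, Monotone g ∧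
    ∀ c ∈ T, ∀ i < s, wt dbl s i ≤ ((A c).filter (fun x => g x = i)).card

/-- number of columns is at most `X` -/
def BD (ι : Type) (dbl : Bool) (s k r m X : ℕ) : Prop :=
  ∀ (S : Finset ι) (A : ι → Finset ℕ) (a : ℕ),
    (∀ c ∈ S, A c ⊆ Finset.Ico a (a + m)) → (∀ c ∈ S, k ≤ (A c).card) →
    ¬ Form dbl s r S A → S.card ≤ X

theorem BD.mono {ι : Type} {dbl : Bool} {s k k' r m m' X X' : ℕ} (h : BD ι dbl s k r m X)
    (hk : k ≤ k') (hm : m' ≤ m) (hX : X ≤ X') : BD ι dbl s k' r m' X' := by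
  intro S A a h1 h2 h3
  refine (h S A a (fun c hc => (h1 c hc).trans ?_) (fun c hc => hk.trans (h2 c hc)) h3).trans hX
  exact Finset.Ico_subset_Ico le_rfl (by omega)

theorem ext_right {ι : Type} {dbl : Bool} {s r : ℕ} (hs : 1 ≤ s) {S S' : Finset ι}
    {A B : ι → Finset ℕ} (e : ℕ) (hS : S' ⊆ S)
    (hBA : ∀ c ∈ S', B c ⊆ A c) (hBe : ∀ c ∈ S', ∀ x ∈ B c, x < e)
    (hA : ∀ c ∈ S', ∃ x ∈ A c, e ≤ x)
    (hz : dbl = true → ∀ c ∈ S', ∃ z ∈ A c, z < e ∧ ∀ y ∈ B c, y < z)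
    (hF : Form dbl s r S' B) : Form dbl (s + 1) r S A := by
  obtain ⟨T, hTS, hTr, g, hg, hT⟩ := hF
  refine ⟨T, hTS.trans hS, hTr, fun x => if x < e then min (g x) (s - 1) else s, ?_, ?_⟩
  · intro x y hxy
    have := hg hxy
    dsimp only
    split_ifs <;> omega
  · intro c hc i hi
    beta_reduce
    have hcS := hTS hc
    rcases Nat.lt_or_ge i s with his | his
    · have hsub : (B c).filter (fun x => g x = i) ⊆
          (A c).filter (fun x => (if x < e then min (g x) (s - 1) else s) = i) := by
        intro x hx
        rw [Finset.mem_filter] at hx ⊢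
        refine ⟨hBA c hcS hx.1, ?_⟩
        rw [if_pos (hBe c hcS x hx.1)]
        omega
      have h1 := hT c hc i his
      by_cases hcase : dbl = true ∧ i + 1 = s
      · obtain ⟨z, hzA, hze, hzB⟩ := hz hcase.1 c hcS
        have hzn : z ∉ (B c).filter (fun x => g x = i) := by
          intro h
          exact lt_irrefl _ (hzB z (Finset.mem_filter.1 h).1)
        have hzin : z ∈ (A c).filter (fun x => (if x < e then min (g x) (s - 1) else s) = i) := by
          rw [Finset.mem_filter]
          refine ⟨hzA, ?_⟩
          rw [if_pos hze]
          by_cases hi0 : i = 0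
          · omega
          · have : 0 < ((B c).filter (fun x => g x = i)).card := by
              refine lt_of_lt_of_le ?_ h1
              simp [wt, hcase.1, hi0, hcase.2]
            obtain ⟨y, hy⟩ := Finset.card_pos.1 this
            rw [Finset.mem_filter] at hy
            have := hg (hzB y hy.1).le
            omega
        have h2 := Finset.card_le_card (Finset.insert_subset hzin hsub)
        rw [Finset.card_insert_of_notMem hzn] at h2
        have : wt dbl (s + 1) i ≤ wt dbl s i + 1 := by
          unfold wt; split_ifs <;> omega
        omega
      · have h2 := Finset.card_le_card hsub
        have : wt dbl (s + 1) i ≤ wt dbl s i := by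
          unfold wt; split_ifs <;> simp_all
        omega
    · obtain rfl : i = s := by omega
      obtain ⟨x, hxA, hxe⟩ := hA c hcS
      have : 0 < ((A c).filter (fun x => (if x < e then min (g x) (i - 1) else i) = i)).card := by
        refine Finset.card_pos.2 ⟨x, ?_⟩
        rw [Finset.mem_filter]
        exact ⟨hxA, by rw [if_neg (by omega)]⟩
      have h2 : wt dbl (i + 1) i ≤ 1 := by
        unfold wt; split_ifs <;> omega
      omega

theorem ext_left {ι : Type} {dbl : Bool} {s r : ℕ} (hs : 1 ≤ s) {S S' : Finset ι}
    {A B : ι → Finset ℕ} (e : ℕ) (hS : S' ⊆ S)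
    (hBA : ∀ c ∈ S', B c ⊆ A c) (hBe : ∀ c ∈ S', ∀ x ∈ B c, e ≤ x)
    (hA : ∀ c ∈ S', ∃ x ∈ A c, x < e)
    (hz : dbl = true → ∀ c ∈ S', ∃ z ∈ A c, e ≤ z ∧ ∀ y ∈ B c, z < y)
    (hF : Form dbl s r S' B) : Form dbl (s + 1) r S A := by
  obtain ⟨T, hTS, hTr, g, hg, hT⟩ := hF
  refine ⟨T, hTS.trans hS, hTr, fun x => if x < e then 0 else min (g x) (s - 1) + 1, ?_, ?_⟩
  · intro x y hxy
    have := hg hxy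
    dsimp only
    split_ifs <;> omega
  · intro c hc i hi
    beta_reduce
    have hcS := hTS hc
    rcases Nat.eq_zero_or_pos i with hi0 | hi0
    · subst hi0
      obtain ⟨x, hxA, hxe⟩ := hA c hcS
      have : 0 < ((A c).filter
          (fun x => (if x < e then 0 else min (g x) (s - 1) + 1) = 0)).card := by
        refine Finset.card_pos.2 ⟨x, ?_⟩
        rw [Finset.mem_filter]
        exact ⟨hxA, by rw [if_pos hxe]⟩
      have h2 : wt dbl (s + 1) 0 ≤ 1 := by
        unfold wt; split_ifs <;> omega
      omega
    · obtain ⟨i, rfl⟩ : ∃ k, i = k + 1 := ⟨i - 1, by omega⟩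
      have his : i < s := by omega
      have hsub : (B c).filter (fun x => g x = i) ⊆
          (A c).filter (fun x => (if x < e then 0 else min (g x) (s - 1) + 1) = i + 1) := by
        intro x hx
        rw [Finset.mem_filter] at hx ⊢
        refine ⟨hBA c hcS hx.1, ?_⟩
        rw [if_neg (by have := hBe c hcS x hx.1; omega)]
        omega
      have h1 := hT c hc i his
      by_cases hcase : dbl = true ∧ i = 0
      · obtain ⟨z, hzA, hze, hzB⟩ := hz hcase.1 c hcS
        have hzn : z ∉ (B c).filter (fun x => g x = i) := by
          intro h
          exact lt_irrefl _ (hzB z (Finset.mem_filter.1 h).1)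
        have hzin : z ∈ (A c).filter
            (fun x => (if x < e then 0 else min (g x) (s - 1) + 1) = i + 1) := by
          rw [Finset.mem_filter]
          refine ⟨hzA, ?_⟩
          rw [if_neg (by omega)]
          by_cases hi0 : s = 1
          · omega
          · have : 0 < ((B c).filter (fun x => g x = i)).card := by
              refine lt_of_lt_of_le ?_ h1
              have : ¬ (1 = s) := by omega
              simp [wt, hcase.1, hcase.2, this]
            obtain ⟨y, hy⟩ := Finset.card_pos.1 this
            rw [Finset.mem_filter] at hy
            have := hg (hzB y hy.1).le
            omega
        have h2 := Finset.card_le_card (Finset.insert_subset hzin hsub)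
        rw [Finset.card_insert_of_notMem hzn] at h2
        have : wt dbl (s + 1) (i + 1) ≤ wt dbl s i + 1 := by
          unfold wt; split_ifs <;> omega
        omega
      · have h2 := Finset.card_le_card hsub
        have : wt dbl (s + 1) (i + 1) ≤ wt dbl s i := by
          unfold wt; split_ifs <;> simp_all
        omega

theorem Form.mono {ι : Type} {dbl : Bool} {s r : ℕ} {S S' : Finset ι}
    {A B : ι → Finset ℕ} (hS : S' ⊆ S) (hBA : ∀ c ∈ S', B c ⊆ A c)
    (hF : Form dbl s r S' B) : Form dbl s r S A := by
  obtain ⟨T, hTS, hTr, g, hg, hT⟩ := hF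
  exact ⟨T, hTS.trans hS, hTr, g, hg, fun c hc i hi =>
    (hT c hc i hi).trans (Finset.card_le_card (Finset.filter_subset_filter _ (hBA c (hTS hc))))⟩

theorem form_contract {ι : Type} {dbl : Bool} {s r : ℕ} {S S' : Finset ι}
    {A L : ι → Finset ℕ} (lay : ℕ → ℕ) (hlay : Monotone lay) (hS : S' ⊆ S)
    (hL : ∀ c ∈ S', L c ⊆ (A c).image lay)
    (hF : Form dbl s r S' L) : Form dbl s r S A := by
  obtain ⟨T, hTS, hTr, g, hg, hT⟩ := hF
  refine ⟨T, hTS.trans hS, hTr, g ∘ lay, hg.comp hlay, fun c hc i hi =>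
    (hT c hc i hi).trans ?_⟩
  refine (Finset.card_le_card (t := ((A c).filter (fun x => (g ∘ lay) x = i)).image lay) ?_).trans
    Finset.card_image_le
  intro j hj
  rw [Finset.mem_filter] at hj
  obtain ⟨x, hx, rfl⟩ := Finset.mem_image.1 (hL c (hTS hc) hj.1)
  exact Finset.mem_image.2 ⟨x, Finset.mem_filter.2 ⟨hx, hj.2⟩, rfl⟩

theorem form_contract_fat {ι : Type} {s r : ℕ} {S S' : Finset ι}
    {A L : ι → Finset ℕ} (lay : ℕ → ℕ) (hlay : Monotone lay) (hS : S' ⊆ S)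
    (hL : ∀ c ∈ S', L c ⊆ (A c).image lay)
    (hfat : ∀ c ∈ S', ∀ j ∈ L c, (∃ i ∈ L c, i < j) → (∃ i ∈ L c, j < i) →
      2 ≤ ((A c).filter (fun x => lay x = j)).card)
    (hF : Form false s r S' L) : Form true s r S A := by
  obtain ⟨T, hTS, hTr, g, hg, hT⟩ := hF
  refine ⟨T, hTS.trans hS, hTr, g ∘ lay, hg.comp hlay, fun c hc i hi => ?_⟩
  have key : ∀ i < s, ∃ j ∈ L c, g j = i := by
    intro i hi
    have := hT c hc i hi
    have h0 : 0 < ((L c).filter (fun x => g x = i)).card := by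
      refine lt_of_lt_of_le ?_ this
      simp [wt]
    obtain ⟨j, hj⟩ := Finset.card_pos.1 h0
    exact ⟨j, Finset.mem_filter.1 hj⟩
  obtain ⟨j, hj, hgj⟩ := key i hi
  by_cases hcase : i = 0 ∨ i + 1 = s
  · have h2 : wt true s i ≤ 1 := by
      unfold wt; split_ifs <;> omega
    refine h2.trans ?_
    obtain ⟨x, hx, hxj⟩ := Finset.mem_image.1 (hL c (hTS hc) hj)
    refine Finset.card_pos.2 ⟨x, Finset.mem_filter.2 ⟨hx, ?_⟩⟩
    simp [hxj, hgj]
  · have h2 : wt true s i ≤ 2 := by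
      unfold wt; split_ifs <;> omega
    refine h2.trans ?_
    obtain ⟨j0, hj0, hg0⟩ := key 0 (by omega)
    obtain ⟨j1, hj1, hg1⟩ := key (s - 1) (by omega)
    have l0 : j0 < j := hg.reflect_lt (by omega)
    have l1 : j < j1 := hg.reflect_lt (by omega)
    refine (hfat c (hTS hc) j hj ⟨j0, hj0, l0⟩ ⟨j1, hj1, l1⟩).trans (Finset.card_le_card ?_)
    intro x hx
    rw [Finset.mem_filter] at hx ⊢
    refine ⟨hx.1, ?_⟩
    simp [hx.2, hgj]


theorem drop_max (dbl : Bool) (Q : Finset ℕ) (k : ℕ) (h : k + (if dbl then 1 else 0) ≤ Q.card) :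
    ∃ B ⊆ Q, k ≤ B.card ∧ (dbl = true → ∃ z ∈ Q, ∀ y ∈ B, y < z) := by
  cases dbl with
  | false => exact ⟨Q, le_rfl, by simpa using h, by simp⟩
  | true =>
    simp only [if_true] at h
    have hne : Q.Nonempty := Finset.card_pos.1 (by omega)
    refine ⟨Q.erase (Q.max' hne), Finset.erase_subset _ _, ?_, fun _ => ⟨_, Q.max'_mem hne, ?_⟩⟩
    · rw [Finset.card_erase_of_mem (Q.max'_mem hne)]; omega
    · intro y hy
      exact Finset.lt_max'_of_mem_erase_max' _ hne hy

theorem drop_min (dbl : Bool) (Q : Finset ℕ) (k : ℕ) (h : k + (if dbl then 1 else 0) ≤ Q.card) :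
    ∃ B ⊆ Q, k ≤ B.card ∧ (dbl = true → ∃ z ∈ Q, ∀ y ∈ B, z < y) := by
  cases dbl with
  | false => exact ⟨Q, le_rfl, by simpa using h, by simp⟩
  | true =>
    simp only [if_true] at h
    have hne : Q.Nonempty := Finset.card_pos.1 (by omega)
    refine ⟨Q.erase (Q.min' hne), Finset.erase_subset _ _, ?_, fun _ => ⟨_, Q.min'_mem hne, ?_⟩⟩
    · rw [Finset.card_erase_of_mem (Q.min'_mem hne)]; omega
    · intro y hy
      exact Finset.min'_lt_of_mem_erase_min' _ hne hy

theorem sum_layers (t m : ℕ) : ∀ b, ∑ j ∈ Finset.range b, (min ((j + 1) * t) m - j * t) = min (b * t) m := by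
  intro b
  induction b with
  | zero => simp
  | succ b ih =>
    rw [Finset.sum_range_succ, ih]
    have : (b + 1) * t = b * t + t := by ring
    rw [this]
    omega

theorem lay_eq {t : ℕ} (ht : 1 ≤ t) {x a j : ℕ} (h : (x - a) / t = j) :
    j * t ≤ x - a ∧ x - a < (j + 1) * t := by
  subst h
  exact ⟨Nat.div_mul_le_self _ _, by
    have := Nat.lt_div_mul_add (a := x - a) (b := t) (by omega)
    linarith⟩

theorem lay_gt {t : ℕ} (ht : 1 ≤ t) {x a j : ℕ} (h : j < (x - a) / t) :
    (j + 1) * t ≤ x - a :=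
  (Nat.le_div_iff_mul_le (by omega)).1 h

theorem lay_lt {t : ℕ} (ht : 1 ≤ t) {x a j : ℕ} (h : (x - a) / t < j) :
    x - a < j * t :=
  (Nat.div_lt_iff_lt_mul (by omega)).1 h

theorem rec_core {ι : Type} (dbl : Bool) (s r k k1 k2 m t g H1 H2 : ℕ) (hs : 1 ≤ s) (ht : 1 ≤ t)
    (hloc : ∀ m', 1 ≤ m' → m' ≤ t → m' ≤ m → BD ι dbl (s + 2) k r m' (m' * g))
    (h1 : ∀ m', 1 ≤ m' → m' ≤ t → m' ≤ m → BD ι dbl (s + 1) k1 r m' (m' * H1))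
    (h2 : ∀ m', 1 ≤ m' → m' ≤ t → m' ≤ m → BD ι dbl s k2 r m' (m' * H2))
    (S : Finset ι) (A : ι → Finset ℕ) (a : ℕ)
    (hA : ∀ c ∈ S, A c ⊆ Finset.Ico a (a + m)) (hk : ∀ c ∈ S, k ≤ (A c).card)
    (hF : ¬ Form dbl (s + 2) r S A) :
    ∃ R ⊆ S, S.card ≤ m * (g + 2 * H1 + H2) + R.card ∧ ∀ c ∈ R,
      ∀ j ∈ (A c).image (fun x => (x - a) / t),
        (¬ ∀ x ∈ A c, (x - a) / t = j) ∧
        ((∃ x ∈ A c, j < (x - a) / t) →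
          ((A c).filter (fun x => (x - a) / t = j)).card < k1 + (if dbl then 1 else 0)) ∧
        ((∃ x ∈ A c, (x - a) / t < j) →
          ((A c).filter (fun x => (x - a) / t = j)).card < k1 + (if dbl then 1 else 0)) ∧
        ((∃ x ∈ A c, (x - a) / t < j) → (∃ x ∈ A c, j < (x - a) / t) →
          ((A c).filter (fun x => (x - a) / t = j)).card <
            k2 + (if dbl then 1 else 0) + (if dbl then 1 else 0)) := by
  classical
  set Q : ι → ℕ → Finset ℕ := fun c j => (A c).filter (fun x => (x - a) / t = j) with hQ
  have hQsub : ∀ c j, Q c j ⊆ A c := fun c j => Finset.filter_subset _ _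
  have hQr : ∀ c ∈ S, ∀ j, ∀ x ∈ Q c j, a + j * t ≤ x ∧ x < a + (j + 1) * t ∧ x < a + m ∧ x ∈ A c := by
    intro c hc j x hx
    rw [hQ, Finset.mem_filter] at hx
    have h3 := Finset.mem_Ico.1 (hA c hc hx.1)
    have h4 := lay_eq ht hx.2
    exact ⟨by omega, by omega, h3.2, hx.1⟩
  set ml : ℕ → ℕ := fun j => min ((j + 1) * t) m - j * t with hml
  have hQI : ∀ c ∈ S, ∀ j, Q c j ⊆ Finset.Ico (a + j * t) (a + j * t + ml j) := by
    intro c hc j x hx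
    have := hQr c hc j x hx
    rw [Finset.mem_Ico]
    simp only [hml]
    omega
  have hmt : ∀ j, ml j ≤ t := by
    intro j
    have : (j + 1) * t = j * t + t := by ring
    simp only [hml]
    omega
  have hmm : ∀ j, ml j ≤ m := by intro j; simp only [hml]; omega
  have hm1 : ∀ c ∈ S, ∀ j ∈ (A c).image (fun x => (x - a) / t), 1 ≤ ml j := by
    intro c hc j hj
    obtain ⟨x, hx, hxj⟩ := Finset.mem_image.1 hj
    have : x ∈ Q c j := Finset.mem_filter.2 ⟨hx, hxj⟩
    have := Finset.mem_Ico.1 (hQI c hc j this)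
    omega
  set im : ι → Finset ℕ := fun c => (A c).image (fun x => (x - a) / t) with him
  set K0 : ℕ → Finset ι := fun j => S.filter (fun c => j ∈ im c ∧ ∀ x ∈ A c, (x - a) / t = j)
  set K1 : ℕ → Finset ι := fun j => S.filter (fun c => j ∈ im c ∧ (∃ x ∈ A c, j < (x - a) / t) ∧
    k1 + (if dbl then 1 else 0) ≤ (Q c j).card)
  set K2 : ℕ → Finset ι := fun j => S.filter (fun c => j ∈ im c ∧ (∃ x ∈ A c, (x - a) / t < j) ∧
    k1 + (if dbl then 1 else 0) ≤ (Q c j).card)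
  set K3 : ℕ → Finset ι := fun j => S.filter (fun c => j ∈ im c ∧ (∃ x ∈ A c, (x - a) / t < j) ∧
    (∃ x ∈ A c, j < (x - a) / t) ∧
    k2 + (if dbl then 1 else 0) + (if dbl then 1 else 0) ≤ (Q c j).card)
  have b0 : ∀ j, (K0 j).card ≤ ml j * g := by
    intro j
    rcases (K0 j).eq_empty_or_nonempty with he | ⟨c0, hc0⟩
    · simp [he]
    · have hc0' := Finset.mem_filter.1 hc0
      refine hloc (ml j) (hm1 c0 hc0'.1 j hc0'.2.1) (hmt j) (hmm j) (K0 j) A (a + j * t) ?_ ?_ ?_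
      · intro c hc x hx
        have hc' := Finset.mem_filter.1 hc
        exact hQI c hc'.1 j (Finset.mem_filter.2 ⟨hx, hc'.2.2 x hx⟩)
      · intro c hc
        exact hk c (Finset.mem_filter.1 hc).1
      · intro hf
        exact hF (hf.mono (Finset.filter_subset _ _) (fun c _ => le_rfl))
  have b1 : ∀ j, (K1 j).card ≤ ml j * H1 := by
    intro j
    rcases (K1 j).eq_empty_or_nonempty with he | ⟨c0, hc0⟩
    · simp [he]
    · have hc0' := Finset.mem_filter.1 hc0
      have hex : ∀ c, ∃ B : Finset ℕ, c ∈ K1 j →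
          (B ⊆ Q c j ∧ k1 ≤ B.card ∧ (dbl = true → ∃ z ∈ Q c j, ∀ y ∈ B, y < z)) := by
        intro c
        by_cases hc : c ∈ K1 j
        · obtain ⟨B, hB⟩ := drop_max dbl (Q c j) k1 (Finset.mem_filter.1 hc).2.2.2
          exact ⟨B, fun _ => hB⟩
        · exact ⟨∅, fun h => absurd h hc⟩
      choose B hB using hex
      refine h1 (ml j) (hm1 c0 hc0'.1 j hc0'.2.1) (hmt j) (hmm j) (K1 j) B (a + j * t) ?_ ?_ ?_
      · intro c hc
        exact (hB c hc).1.trans (hQI c (Finset.mem_filter.1 hc).1 j)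
      · intro c hc
        exact (hB c hc).2.1
      · intro hf
        refine hF (ext_right (s := s + 1) (by omega) (a + (j + 1) * t) (Finset.filter_subset _ _)
          ?_ ?_ ?_ ?_ hf)
        · intro c hc
          exact (hB c hc).1.trans (hQsub c j)
        · intro c hc x hx
          exact (hQr c (Finset.mem_filter.1 hc).1 j x ((hB c hc).1 hx)).2.1
        · intro c hc
          obtain ⟨x, hx, hjx⟩ := (Finset.mem_filter.1 hc).2.2.1
          have := lay_gt ht hjx
          have := Finset.mem_Ico.1 (hA c (Finset.mem_filter.1 hc).1 hx)
          exact ⟨x, hx, by omega⟩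
        · intro hd c hc
          obtain ⟨z, hz, hzB⟩ := (hB c hc).2.2 hd
          exact ⟨z, hQsub c j hz, (hQr c (Finset.mem_filter.1 hc).1 j z hz).2.1, hzB⟩
  have b2 : ∀ j, (K2 j).card ≤ ml j * H1 := by
    intro j
    rcases (K2 j).eq_empty_or_nonempty with he | ⟨c0, hc0⟩
    · simp [he]
    · have hc0' := Finset.mem_filter.1 hc0
      have hex : ∀ c, ∃ B : Finset ℕ, c ∈ K2 j →
          (B ⊆ Q c j ∧ k1 ≤ B.card ∧ (dbl = true → ∃ z ∈ Q c j, ∀ y ∈ B, z < y)) := by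
        intro c
        by_cases hc : c ∈ K2 j
        · obtain ⟨B, hB⟩ := drop_min dbl (Q c j) k1 (Finset.mem_filter.1 hc).2.2.2
          exact ⟨B, fun _ => hB⟩
        · exact ⟨∅, fun h => absurd h hc⟩
      choose B hB using hex
      refine h1 (ml j) (hm1 c0 hc0'.1 j hc0'.2.1) (hmt j) (hmm j) (K2 j) B (a + j * t) ?_ ?_ ?_
      · intro c hc
        exact (hB c hc).1.trans (hQI c (Finset.mem_filter.1 hc).1 j)
      · intro c hc
        exact (hB c hc).2.1
      · intro hf
        refine hF (ext_left (s := s + 1) (by omega) (a + j * t) (Finset.filter_subset _ _)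
          ?_ ?_ ?_ ?_ hf)
        · intro c hc
          exact (hB c hc).1.trans (hQsub c j)
        · intro c hc x hx
          exact (hQr c (Finset.mem_filter.1 hc).1 j x ((hB c hc).1 hx)).1
        · intro c hc
          obtain ⟨x, hx, hjx⟩ := (Finset.mem_filter.1 hc).2.2.1
          have := lay_lt ht hjx
          have := Finset.mem_Ico.1 (hA c (Finset.mem_filter.1 hc).1 hx)
          exact ⟨x, hx, by omega⟩
        · intro hd c hc
          obtain ⟨z, hz, hzB⟩ := (hB c hc).2.2 hd
          exact ⟨z, hQsub c j hz, (hQr c (Finset.mem_filter.1 hc).1 j z hz).1, hzB⟩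
  have b3 : ∀ j, (K3 j).card ≤ ml j * H2 := by
    intro j
    rcases (K3 j).eq_empty_or_nonempty with he | ⟨c0, hc0⟩
    · simp [he]
    · have hc0' := Finset.mem_filter.1 hc0
      have hex : ∀ c, ∃ B B1 : Finset ℕ, c ∈ K3 j →
          (B1 ⊆ Q c j ∧ (dbl = true → ∃ z ∈ Q c j, ∀ y ∈ B1, y < z) ∧
          B ⊆ B1 ∧ k2 ≤ B.card ∧ (dbl = true → ∃ z ∈ B1, ∀ y ∈ B, z < y)) := by
        intro c
        by_cases hc : c ∈ K3 j
        · obtain ⟨B1, hB1⟩ := drop_max dbl (Q c j) _ (Finset.mem_filter.1 hc).2.2.2.2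
          obtain ⟨B, hB⟩ := drop_min dbl B1 _ hB1.2.1
          exact ⟨B, B1, fun _ => ⟨hB1.1, hB1.2.2, hB⟩⟩
        · exact ⟨∅, ∅, fun h => absurd h hc⟩
      choose B B1 hB using hex
      refine h2 (ml j) (hm1 c0 hc0'.1 j hc0'.2.1) (hmt j) (hmm j) (K3 j) B (a + j * t) ?_ ?_ ?_
      · intro c hc
        exact ((hB c hc).2.2.1.trans (hB c hc).1).trans (hQI c (Finset.mem_filter.1 hc).1 j)
      · intro c hc
        exact (hB c hc).2.2.2.1
      · intro hf
        have hf2 : Form dbl (s + 1) r (K3 j)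
            (fun c => B1 c ∪ (A c).filter (fun x => x < a + j * t)) := by
          refine ext_left hs (a + j * t) (le_refl (K3 j)) ?_ ?_ ?_ ?_ hf
          · intro c hc
            exact (hB c hc).2.2.1.trans Finset.subset_union_left
          · intro c hc x hx
            exact (hQr c (Finset.mem_filter.1 hc).1 j x ((hB c hc).1 ((hB c hc).2.2.1 hx))).1
          · intro c hc
            obtain ⟨x, hx, hjx⟩ := (Finset.mem_filter.1 hc).2.2.1
            have := lay_lt ht hjx
            have := Finset.mem_Ico.1 (hA c (Finset.mem_filter.1 hc).1 hx)
            exact ⟨x, Finset.mem_union_right _ (Finset.mem_filter.2 ⟨hx, by omega⟩), by omega⟩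
          · intro hd c hc
            obtain ⟨z, hz, hzB⟩ := (hB c hc).2.2.2.2 hd
            exact ⟨z, Finset.mem_union_left _ hz,
              (hQr c (Finset.mem_filter.1 hc).1 j z ((hB c hc).1 hz)).1, hzB⟩
        refine hF (ext_right (s := s + 1) (by omega) (a + (j + 1) * t) (Finset.filter_subset _ _)
          ?_ ?_ ?_ ?_ hf2)
        · intro c hc
          exact Finset.union_subset ((hB c hc).1.trans (hQsub c j)) (Finset.filter_subset _ _)
        · intro c hc x hx
          rcases Finset.mem_union.1 hx with hx | hx
          · exact (hQr c (Finset.mem_filter.1 hc).1 j x ((hB c hc).1 hx)).2.1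
          · have := (Finset.mem_filter.1 hx).2
            have : (j + 1) * t = j * t + t := by ring
            omega
        · intro c hc
          obtain ⟨x, hx, hjx⟩ := (Finset.mem_filter.1 hc).2.2.2.1
          have := lay_gt ht hjx
          have := Finset.mem_Ico.1 (hA c (Finset.mem_filter.1 hc).1 hx)
          exact ⟨x, hx, by omega⟩
        · intro hd c hc
          obtain ⟨z, hz, hzB⟩ := (hB c hc).2.1 hd
          have hzr := hQr c (Finset.mem_filter.1 hc).1 j z hz
          refine ⟨z, hQsub c j hz, hzr.2.1, ?_⟩
          intro y hy
          rcases Finset.mem_union.1 hy with hy | hy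
          · exact hzB y hy
          · have := (Finset.mem_filter.1 hy).2
            omega
  refine ⟨S \ (Finset.range m).biUnion (fun j => K0 j ∪ K1 j ∪ K2 j ∪ K3 j),
    Finset.sdiff_subset, ?_, ?_⟩
  · have e1 := Finset.le_card_sdiff ((Finset.range m).biUnion (fun j => K0 j ∪ K1 j ∪ K2 j ∪ K3 j)) S
    have e2 : ((Finset.range m).biUnion (fun j => K0 j ∪ K1 j ∪ K2 j ∪ K3 j)).card ≤
        m * (g + 2 * H1 + H2) := by
      refine Finset.card_biUnion_le.trans ?_
      calc ∑ j ∈ Finset.range m, (K0 j ∪ K1 j ∪ K2 j ∪ K3 j).card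
          ≤ ∑ j ∈ Finset.range m, (min ((j + 1) * t) m - j * t) * (g + 2 * H1 + H2) := by
            refine Finset.sum_le_sum fun j _ => ?_
            have u1 := Finset.card_union_le (K0 j ∪ K1 j ∪ K2 j) (K3 j)
            have u2 := Finset.card_union_le (K0 j ∪ K1 j) (K2 j)
            have u3 := Finset.card_union_le (K0 j) (K1 j)
            have v0 := b0 j
            have v1 := b1 j
            have v2 := b2 j
            have v3 := b3 j
            change _ ≤ ml j * _
            have : ml j * (g + 2 * H1 + H2) = ml j * g + ml j * H1 + ml j * H1 + ml j * H2 := by ring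
            omega
        _ ≤ m * (g + 2 * H1 + H2) := by
            rw [← Finset.sum_mul, sum_layers]
            exact Nat.mul_le_mul_right _ (min_le_right _ _)
    omega
  · intro c hc j hj
    rw [Finset.mem_sdiff, Finset.mem_biUnion] at hc
    obtain ⟨hcS, hcn⟩ := hc
    have hjm : j ∈ Finset.range m := by
      obtain ⟨x, hx, hxj⟩ := Finset.mem_image.1 hj
      have := Finset.mem_Ico.1 (hA c hcS hx)
      have h5 := Nat.div_le_self (x - a) t
      rw [Finset.mem_range]
      omega
    have hcn' : ¬ (c ∈ K0 j ∪ K1 j ∪ K2 j ∪ K3 j) := fun h => hcn ⟨j, hjm, h⟩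
    simp only [Finset.mem_union, not_or] at hcn'
    obtain ⟨⟨⟨n0, n1⟩, n2⟩, n3⟩ := hcn'
    refine ⟨fun h => n0 (Finset.mem_filter.2 ⟨hcS, hj, h⟩), fun h => ?_, fun h => ?_, fun h h' => ?_⟩
    · by_contra hcon
      exact n1 (Finset.mem_filter.2 ⟨hcS, hj, h, not_lt.1 hcon⟩)
    · by_contra hcon
      exact n2 (Finset.mem_filter.2 ⟨hcS, hj, h, not_lt.1 hcon⟩)
    · by_contra hcon
      exact n3 (Finset.mem_filter.2 ⟨hcS, hj, h, h', not_lt.1 hcon⟩)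


theorem split_cols (A : Finset ℕ) (lay : ℕ → ℕ) (hne : A.Nonempty)
    (hnc : ∀ j ∈ A.image lay, ¬ ∀ x ∈ A, lay x = j) :
    ∃ lo ∈ A.image lay, ∃ hi ∈ A.image lay, lo < hi ∧ (∀ j ∈ A.image lay, lo ≤ j ∧ j ≤ hi) ∧
      A.card = (A.filter (fun x => lay x = lo)).card + (A.filter (fun x => lay x = hi)).card +
        ∑ j ∈ ((A.image lay).erase lo).erase hi, (A.filter (fun x => lay x = j)).card ∧
      (((A.image lay).erase lo).erase hi).card + 2 = (A.image lay).card := by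
  have hL : (A.image lay).Nonempty := hne.image lay
  have hlo := (A.image lay).min'_mem hL
  have hhi := (A.image lay).max'_mem hL
  have hb : ∀ j ∈ A.image lay, (A.image lay).min' hL ≤ j ∧ j ≤ (A.image lay).max' hL :=
    fun j hj => ⟨Finset.min'_le _ _ hj, Finset.le_max' _ _ hj⟩
  generalize (A.image lay).min' hL = lo at *
  generalize (A.image lay).max' hL = hi at *
  have hlt : lo < hi := by
    rcases Nat.lt_or_ge lo hi with h | h
    · exact h
    · exfalso
      refine hnc lo hlo fun x hx => ?_
      have := hb _ (Finset.mem_image_of_mem lay hx)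
      omega
  have hhi' : hi ∈ (A.image lay).erase lo := Finset.mem_erase.2 ⟨by omega, hhi⟩
  refine ⟨lo, hlo, hi, hhi, hlt, hb, ?_, ?_⟩
  · rw [Finset.card_eq_sum_card_image lay A, ← Finset.add_sum_erase _ _ hlo,
      ← Finset.add_sum_erase _ _ hhi', add_assoc]
  · rw [Finset.card_erase_of_mem hhi', Finset.card_erase_of_mem hlo]
    have : ((A.image lay).erase lo).card = (A.image lay).card - 1 := Finset.card_erase_of_mem hlo
    have := Finset.card_pos.2 ⟨hi, hhi'⟩
    omega

theorem lay_mono (a t : ℕ) : Monotone (fun x => (x - a) / t) := by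
  intro x y h
  exact Nat.div_le_div_right (by omega)

theorem lay_bd {m t a x : ℕ} (ht : 1 ≤ t) (hx : x ∈ Finset.Ico a (a + m)) :
    (x - a) / t < (m + t - 1) / t := by
  rw [Finset.mem_Ico] at hx
  have h1 : (x - a) / t + 1 = ((x - a) + t) / t := (Nat.add_div_right _ (by omega)).symm
  have : (x - a) / t + 1 ≤ (m + t - 1) / t := by
    rw [h1]; exact Nat.div_le_div_right (by omega)
  omega

theorem rec_plain {ι : Type} (s r k k1 k2 k3 m t g H1 H2 X : ℕ) (hs : 1 ≤ s) (ht : 1 ≤ t)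
    (hkk : 2 * (k1 - 1) + (k2 - 1) * (k3 - 3) + 1 ≤ k)
    (hloc : ∀ m', 1 ≤ m' → m' ≤ t → m' ≤ m → BD ι false (s + 2) k r m' (m' * g))
    (h1 : ∀ m', 1 ≤ m' → m' ≤ t → m' ≤ m → BD ι false (s + 1) k1 r m' (m' * H1))
    (h2 : ∀ m', 1 ≤ m' → m' ≤ t → m' ≤ m → BD ι false s k2 r m' (m' * H2))
    (htop : BD ι false (s + 2) k3 r ((m + t - 1) / t) X) :
    BD ι false (s + 2) k r m (m * (g + 2 * H1 + H2) + X) := by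
  classical
  intro S A a hA hk hF
  obtain ⟨R, hRS, hcard, hR⟩ := rec_core false s r k k1 k2 m t g H1 H2 hs ht hloc h1 h2 S A a hA hk hF
  refine hcard.trans (Nat.add_le_add_left ?_ _)
  refine htop R (fun c => (A c).image (fun x => (x - a) / t)) 0 ?_ ?_ ?_
  · intro c hc j hj
    obtain ⟨x, hx, rfl⟩ := Finset.mem_image.1 hj
    have := lay_bd ht (hA c (hRS hc) hx)
    rw [Finset.mem_Ico]
    exact ⟨Nat.zero_le _, by rw [Nat.zero_add]; exact this⟩
  · intro c hc
    by_contra hlt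
    have hcR := hR c hc
    have hkc := hk c (hRS hc)
    obtain ⟨lo, hlo, hi, hhi, hlh, hb, hsum, hcd⟩ := split_cols (A c) (fun x => (x - a) / t)
      (Finset.card_pos.1 (by omega)) (fun j hj => (hcR j hj).1)
    have glo : ∃ x ∈ A c, (x - a) / t = lo := by
      obtain ⟨x, hx, h⟩ := Finset.mem_image.1 hlo; exact ⟨x, hx, h⟩
    have ghi : ∃ x ∈ A c, (x - a) / t = hi := by
      obtain ⟨x, hx, h⟩ := Finset.mem_image.1 hhi; exact ⟨x, hx, h⟩
    obtain ⟨xl, hxl, el⟩ := glo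
    obtain ⟨xh, hxh, eh⟩ := ghi
    have q1 := (hcR lo hlo).2.1 ⟨xh, hxh, by omega⟩
    have q2 := (hcR hi hhi).2.2.1 ⟨xl, hxl, by omega⟩
    have q3 : ∑ j ∈ (((A c).image (fun x => (x - a) / t)).erase lo).erase hi,
        ((A c).filter (fun x => (x - a) / t = j)).card ≤
        (((A c).image (fun x => (x - a) / t)).erase lo |>.erase hi).card * (k2 - 1) := by
      rw [← smul_eq_mul]
      refine Finset.sum_le_card_nsmul _ _ _ fun j hj => ?_
      rw [Finset.mem_erase, Finset.mem_erase] at hj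
      have := hb j hj.2.2
      have := (hcR j hj.2.2).2.2.2 ⟨xl, hxl, by omega⟩ ⟨xh, hxh, by omega⟩
      simp only [Bool.false_eq_true, if_false] at this
      omega
    have q4 : (((A c).image (fun x => (x - a) / t)).erase lo |>.erase hi).card * (k2 - 1) ≤
        (k3 - 3) * (k2 - 1) := Nat.mul_le_mul_right _ (by omega)
    have q5 : (k3 - 3) * (k2 - 1) = (k2 - 1) * (k3 - 3) := Nat.mul_comm _ _
    simp only [Bool.false_eq_true, if_false] at q1 q2
    omega
  · intro hf
    exact hF (form_contract _ (lay_mono a t) hRS (fun c _ => le_rfl) hf)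

theorem rec_dbl {ι : Type} (s r k k1 k2 k3 kR m t g H1 H2 X Y : ℕ) (hs : 1 ≤ s) (ht : 1 ≤ t)
    (hkk : 2 * k1 + k2 * (kR - 3) + k3 ≤ k + 2)
    (hk1 : 1 ≤ k)
    (hloc : ∀ m', 1 ≤ m' → m' ≤ t → m' ≤ m → BD ι true (s + 2) k r m' (m' * g))
    (h1 : ∀ m', 1 ≤ m' → m' ≤ t → m' ≤ m → BD ι true (s + 1) k1 r m' (m' * H1))
    (h2 : ∀ m', 1 ≤ m' → m' ≤ t → m' ≤ m → BD ι true s k2 r m' (m' * H2))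
    (htop : BD ι true (s + 2) k3 r ((m + t - 1) / t) X)
    (htop2 : BD ι false (s + 2) kR r ((m + t - 1) / t) Y) :
    BD ι true (s + 2) k r m (m * (g + 2 * H1 + H2) + (X + Y)) := by
  classical
  intro S A a hA hk hF
  obtain ⟨R, hRS, hcard, hR⟩ := rec_core true s r k k1 k2 m t g H1 H2 hs ht hloc h1 h2 S A a hA hk hF
  refine hcard.trans (Nat.add_le_add_left ?_ _)
  set L : ι → Finset ℕ := fun c => (A c).image (fun x => (x - a) / t) with hL
  -- the fat part
  set F : ι → Finset ℕ := fun c => (L c).filter (fun j =>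
    (∃ x ∈ A c, (x - a) / t < j) → (∃ x ∈ A c, j < (x - a) / t) →
      2 ≤ ((A c).filter (fun x => (x - a) / t = j)).card) with hFdef
  have hLsub : ∀ c ∈ R, L c ⊆ Finset.Ico 0 (0 + (m + t - 1) / t) := by
    intro c hc j hj
    obtain ⟨x, hx, rfl⟩ := Finset.mem_image.1 hj
    have := lay_bd ht (hA c (hRS hc) hx)
    rw [Finset.mem_Ico]
    exact ⟨Nat.zero_le _, by rw [Nat.zero_add]; exact this⟩
  set R1 := R.filter (fun c => k3 ≤ (L c).card)
  set R2 := R.filter (fun c => kR ≤ (F c).card)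
  have hR1 : R1.card ≤ X := by
    refine htop R1 L 0 (fun c hc => hLsub c (Finset.mem_filter.1 hc).1)
      (fun c hc => (Finset.mem_filter.1 hc).2) fun hf => ?_
    exact hF (form_contract _ (lay_mono a t) ((Finset.filter_subset _ _).trans hRS)
      (fun c _ => le_rfl) hf)
  have hR2 : R2.card ≤ Y := by
    refine htop2 R2 F 0 (fun c hc => (Finset.filter_subset _ _).trans
      (hLsub c (Finset.mem_filter.1 hc).1)) (fun c hc => (Finset.mem_filter.1 hc).2) fun hf => ?_
    refine hF (form_contract_fat _ (lay_mono a t) ((Finset.filter_subset _ _).trans hRS)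
      (fun c _ => Finset.filter_subset _ _) ?_ hf)
    intro c hc j hj hlo hhi
    refine (Finset.mem_filter.1 hj).2 ?_ ?_
    · obtain ⟨i, hi, hij⟩ := hlo
      obtain ⟨x, hx, rfl⟩ := Finset.mem_image.1 (Finset.mem_filter.1 hi).1
      exact ⟨x, hx, hij⟩
    · obtain ⟨i, hi, hij⟩ := hhi
      obtain ⟨x, hx, rfl⟩ := Finset.mem_image.1 (Finset.mem_filter.1 hi).1
      exact ⟨x, hx, hij⟩
  have hcov : R ⊆ R1 ∪ R2 := by
    intro c hc
    by_contra hcn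
    rw [Finset.mem_union, not_or] at hcn
    have n1 : (L c).card < k3 := by
      by_contra h; exact hcn.1 (Finset.mem_filter.2 ⟨hc, not_lt.1 h⟩)
    have n2 : (F c).card < kR := by
      by_contra h; exact hcn.2 (Finset.mem_filter.2 ⟨hc, not_lt.1 h⟩)
    have hcR := hR c hc
    have hkc := hk c (hRS hc)
    obtain ⟨lo, hlo, hi, hhi, hlh, hb, hsum, hcd⟩ := split_cols (A c) (fun x => (x - a) / t)
      (Finset.card_pos.1 (by omega)) (fun j hj => (hcR j hj).1)
    have glo : ∃ x ∈ A c, (x - a) / t = lo := by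
      obtain ⟨x, hx, h⟩ := Finset.mem_image.1 hlo; exact ⟨x, hx, h⟩
    have ghi : ∃ x ∈ A c, (x - a) / t = hi := by
      obtain ⟨x, hx, h⟩ := Finset.mem_image.1 hhi; exact ⟨x, hx, h⟩
    obtain ⟨xl, hxl, el⟩ := glo
    obtain ⟨xh, hxh, eh⟩ := ghi
    have q1 := (hcR lo hlo).2.1 ⟨xh, hxh, by omega⟩
    have q2 := (hcR hi hhi).2.2.1 ⟨xl, hxl, by omega⟩
    change _ + 2 = (L c).card at hcd
    change ∀ j ∈ L c, _ at hcR
    change ∀ j ∈ L c, _ at hb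
    change lo ∈ L c at hlo
    change hi ∈ L c at hhi
    change _ = _ + _ + ∑ j ∈ ((L c).erase lo).erase hi, _ at hsum
    change (((L c).erase lo).erase hi).card + 2 = _ at hcd
    have q3 : ∑ j ∈ ((L c).erase lo).erase hi,
        ((A c).filter (fun x => (x - a) / t = j)).card ≤
        ∑ j ∈ ((L c).erase lo).erase hi, (1 + if j ∈ F c then k2 else 0) := by
      refine Finset.sum_le_sum fun j hj => ?_
      rw [Finset.mem_erase, Finset.mem_erase] at hj
      have := hb j hj.2.2
      have hm := (hcR j hj.2.2).2.2.2 ⟨xl, hxl, by omega⟩ ⟨xh, hxh, by omega⟩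
      simp only [if_true] at hm
      split_ifs with hjF
      · omega
      · have : ((A c).filter (fun x => (x - a) / t = j)).card < 2 := by
          by_contra hcon
          exact hjF (Finset.mem_filter.2 ⟨hj.2.2, fun _ _ => not_lt.1 hcon⟩)
        omega
    have q4 : ∑ j ∈ ((L c).erase lo).erase hi, (1 + if j ∈ F c then k2 else 0) =
        (((L c).erase lo).erase hi).card +
          ((((L c).erase lo).erase hi).filter (fun j => j ∈ F c)).card * k2 := by
      rw [Finset.sum_add_distrib, ← Finset.sum_filter, Finset.sum_const, Finset.sum_const]
      simp
    have hloF : lo ∈ F c := by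
      refine Finset.mem_filter.2 ⟨hlo, fun ⟨x, hx, h⟩ => ?_⟩
      have := hb _ (Finset.mem_image_of_mem (fun x => (x - a) / t) hx)
      omega
    have hhiF : hi ∈ F c := by
      refine Finset.mem_filter.2 ⟨hhi, fun _ ⟨x, hx, h⟩ => ?_⟩
      have := hb _ (Finset.mem_image_of_mem (fun x => (x - a) / t) hx)
      omega
    have q5 : ((((L c).erase lo).erase hi).filter (fun j => j ∈ F c)).card + 2 ≤ (F c).card := by
      have hhi2 : hi ∈ (F c).erase lo := Finset.mem_erase.2 ⟨by omega, hhiF⟩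
      have e1 : (((L c).erase lo).erase hi).filter (fun j => j ∈ F c) ⊆ ((F c).erase lo).erase hi := by
        intro j hj
        simp only [Finset.mem_filter, Finset.mem_erase] at hj ⊢
        exact ⟨hj.1.1, hj.1.2.1, by simpa using hj.2⟩
      have e2 := Finset.card_le_card e1
      have e3 := Finset.card_erase_of_mem hhi2
      have e4 := Finset.card_erase_of_mem hloF
      have e5 := Finset.card_pos.2 ⟨hi, hhi2⟩
      omega
    have q6 : ((((L c).erase lo).erase hi).filter (fun j => j ∈ F c)).card * k2 ≤ k2 * (kR - 3) := by
      rw [Nat.mul_comm]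
      exact Nat.mul_le_mul_left _ (by omega)
    simp only [if_true] at q1 q2
    omega
  calc R.card ≤ (R1 ∪ R2).card := Finset.card_le_card hcov
    _ ≤ R1.card + R2.card := Finset.card_union_le _ _
    _ ≤ X + Y := Nat.add_le_add hR1 hR2

theorem bd_few_rows (ι : Type) (dbl : Bool) (s k r m : ℕ) (h : m < k) : BD ι dbl s k r m 0 := by
  intro S A a hA hk _
  rw [Nat.le_zero, Finset.card_eq_zero, Finset.eq_empty_iff_forall_notMem]
  intro c hc
  have h1 := Finset.card_le_card (hA c hc)
  have h2 := hk c hc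
  rw [Nat.card_Ico] at h1
  omega

theorem bd_one (ι : Type) (dbl : Bool) (r m : ℕ) :
    BD ι dbl 1 (if dbl then 0 else 1) r m r := by
  intro S A a hA hk hF
  by_contra hlt
  obtain ⟨T, hTS, hTr⟩ := Finset.exists_subset_card_eq (show r ≤ S.card by omega)
  refine hF ⟨T, hTS, hTr, fun _ => 0, monotone_const, fun c hc i hi => ?_⟩
  obtain rfl : i = 0 := by omega
  have := hk c (hTS hc)
  cases dbl <;> simp [wt] at this ⊢
  exact this

theorem bd_two (ι : Type) (dbl : Bool) (r m : ℕ) : BD ι dbl 2 2 r m (m * r) := by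
  classical
  intro S A a hA hk hF
  have hex : ∀ c, ∃ x, c ∈ S → x ∈ A c ∧ ∃ y ∈ A c, x < y := by
    intro c
    by_cases hc : c ∈ S
    · obtain ⟨x, hx, y, hy, hxy⟩ := Finset.one_lt_card.1 (hk c hc)
      rcases Nat.lt_or_gt_of_ne hxy with h | h
      · exact ⟨x, fun _ => ⟨hx, y, hy, h⟩⟩
      · exact ⟨y, fun _ => ⟨hy, x, hx, h⟩⟩
    · exact ⟨0, fun h => absurd h hc⟩
  choose f hf using hex
  have := Finset.card_le_mul_card_image_of_maps_to (s := S) (f := f) (t := Finset.Ico a (a + m))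
    (fun c hc => hA c hc (hf c hc).1) r ?_
  · rw [Nat.card_Ico] at this
    rw [Nat.mul_comm]
    simpa using this
  · intro x _
    by_contra hlt
    obtain ⟨T, hTS, hTr⟩ := Finset.exists_subset_card_eq (not_le.1 hlt).le
    refine hF ⟨T, hTS.trans (Finset.filter_subset _ _), hTr, fun y => if y ≤ x then 0 else 1, ?_, ?_⟩
    · intro y z hyz
      dsimp only
      split_ifs <;> omega
    · intro c hc i hi
      have hc' := Finset.mem_filter.1 (hTS hc)
      have h1 := hf c hc'.1
      have hw : wt dbl 2 i ≤ 1 := by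
        unfold wt; split_ifs <;> omega
      refine hw.trans (Finset.card_pos.2 ?_)
      rcases Nat.lt_or_ge i 1 with h0 | h0
      · refine ⟨f c, Finset.mem_filter.2 ⟨h1.1, ?_⟩⟩
        beta_reduce
        rw [if_pos (by omega)]; omega
      · obtain ⟨y, hy, hlt⟩ := h1.2
        refine ⟨y, Finset.mem_filter.2 ⟨hy, ?_⟩⟩
        beta_reduce
        rw [if_neg (by omega)]; omega


/-- joint bound for plain and doubled formations -/
def UB (ι : Type) (s d r m X : ℕ) : Prop :=
  BD ι false s (Rk s d) r m X ∧ BD ι true s (Dfun s d) r m X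

theorem UB.mono {ι : Type} {s d r m m' X X' : ℕ} (h : UB ι s d r m X) (hm : m' ≤ m)
    (hX : X ≤ X') : UB ι s d r m' X' :=
  ⟨h.1.mono le_rfl hm hX, h.2.mono le_rfl hm hX⟩

theorem UB_one (ι : Type) (d r m : ℕ) (hm : 1 ≤ m) : UB ι 1 d r m (m * r) := by
  have hX : r ≤ m * r := Nat.le_mul_of_pos_left _ hm
  constructor
  · have := bd_one ι false r m
    exact this.mono (by simp [Rk]) le_rfl hX
  · have := bd_one ι true r m
    exact this.mono (by simp [D_one]) le_rfl hX

theorem UB_two (ι : Type) (d r m : ℕ) : UB ι 2 d r m (m * r) := by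
  constructor
  · have := bd_two ι false r m
    exact this.mono (by simp [Rk_two]) le_rfl le_rfl
  · have := bd_two ι true r m
    exact this.mono (by simp [D_two]) le_rfl le_rfl

theorem UB_small (ι : Type) (s d r m : ℕ) (hd : 2 ≤ d) (hm : m ≤ 1) : UB ι (s + 2) d r m 0 := by
  constructor
  · apply bd_few_rows
    have := Rk_ge (s + 1) d hd
    simp only [Nat.add_assoc, Nat.reduceAdd] at this
    omega
  · apply bd_few_rows
    have := D_ge s d hd
    omega

theorem UB_base (ι : Type) (s d r m X : ℕ) (hs : 1 ≤ s) (hd : 2 ≤ d) (h : UB ι (s + 2) 2 r m X) :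
    UB ι (s + 2) d r m X := by
  refine ⟨h.1.mono (Rk_mono2 s hs d hd) le_rfl le_rfl, h.2.mono ?_ le_rfl le_rfl⟩
  obtain ⟨q, rfl⟩ : ∃ q, s = q + 1 := ⟨s - 1, by omega⟩
  exact D_mono2 q d hd

theorem UB_rec (ι : Type) (s d r m t g H X : ℕ) (hs : 1 ≤ s) (ht : 1 ≤ t)
    (hloc : ∀ m', 1 ≤ m' → m' ≤ t → m' ≤ m → UB ι (s + 2) (d + 3) r m' (m' * g))
    (h1 : ∀ m', 1 ≤ m' → m' ≤ t → m' ≤ m → UB ι (s + 1) (d + 3) r m' (m' * H))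
    (h2 : ∀ m', 1 ≤ m' → m' ≤ t → m' ≤ m → UB ι s (d + 3) r m' (m' * H))
    (htop : UB ι (s + 2) (d + 2) r ((m + t - 1) / t) X) :
    UB ι (s + 2) (d + 3) r m (m * (g + 3 * H) + 2 * X) := by
  have e : g + 3 * H = g + 2 * H + H := by ring
  constructor
  · have := rec_plain (ι := ι) s r (Rk (s + 2) (d + 3)) (Rk (s + 1) (d + 3)) (Rk s (d + 3))
      (Rk (s + 2) (d + 2)) m t g H H X hs ht (by rw [Rk_rec s d hs])
      (fun m' a b c => (hloc m' a b c).1) (fun m' a b c => (h1 m' a b c).1)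
      (fun m' a b c => (h2 m' a b c).1) htop.1
    refine this.mono le_rfl le_rfl ?_
    rw [e]; omega
  · have := rec_dbl (ι := ι) s r (Dfun (s + 2) (d + 3)) (Dfun (s + 1) (d + 3)) (Dfun s (d + 3))
      (Dfun (s + 2) (d + 2)) (Rk (s + 2) (d + 2)) m t g H H X X hs ht ?_ ?_
      (fun m' a b c => (hloc m' a b c).2) (fun m' a b c => (h1 m' a b c).2)
      (fun m' a b c => (h2 m' a b c).2) htop.2 htop.1
    · refine this.mono le_rfl le_rfl ?_
      rw [e]; omega
    · obtain ⟨q, rfl⟩ : ∃ q, s = q + 1 := ⟨s - 1, by omega⟩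
      have h := D_rec q d
      have h3 := Rk_ge (q + 2) (d + 2) (by omega)
      simp only [Nat.add_assoc, Nat.reduceAdd] at *
      rw [h, Nat.add_mul, Nat.one_mul]
      omega
    · have := D_ge s (d + 3) (by omega)
      omega

theorem UB_rec2 (ι : Type) (s r m t g H : ℕ) (hs : 1 ≤ s) (ht : 1 ≤ t) (hmt : m ≤ 2 * t)
    (hloc : ∀ m', 1 ≤ m' → m' ≤ t → m' ≤ m → UB ι (s + 2) 2 r m' (m' * g))
    (h1 : ∀ m', 1 ≤ m' → m' ≤ t → m' ≤ m → UB ι (s + 1) 2 r m' (m' * H))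
    (h2 : ∀ m', 1 ≤ m' → m' ≤ t → m' ≤ m → UB ι s 2 r m' (m' * H)) :
    UB ι (s + 2) 2 r m (m * (g + 3 * H)) := by
  have e : g + 3 * H = g + 2 * H + H := by ring
  have hb : (m + t - 1) / t < 3 := by
    rw [Nat.div_lt_iff_lt_mul (by omega)]; omega
  constructor
  · have := rec_plain (ι := ι) s r (Rk (s + 2) 2) (Rk (s + 1) 2) (Rk s 2)
      3 m t g H H 0 hs ht ?_
      (fun m' a b c => (hloc m' a b c).1) (fun m' a b c => (h1 m' a b c).1)
      (fun m' a b c => (h2 m' a b c).1) (bd_few_rows _ _ _ _ _ _ hb)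
    refine this.mono le_rfl le_rfl ?_
    · rw [e]; omega
    · obtain ⟨q, rfl⟩ : ∃ q, s = q + 1 := ⟨s - 1, by omega⟩
      rw [Rk_base, Rk_base, pow_succ]
      omega
  · have := rec_dbl (ι := ι) s r (Dfun (s + 2) 2) (Dfun (s + 1) 2) (Dfun s 2)
      3 3 m t g H H 0 0 hs ht ?_ ?_
      (fun m' a b c => (hloc m' a b c).2) (fun m' a b c => (h1 m' a b c).2)
      (fun m' a b c => (h2 m' a b c).2) (bd_few_rows _ _ _ _ _ _ hb) (bd_few_rows _ _ _ _ _ _ hb)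
    · refine this.mono le_rfl le_rfl ?_
      rw [e]; omega
    · obtain ⟨q, rfl⟩ : ∃ q, s = q + 1 := ⟨s - 1, by omega⟩
      have := D_base q
      simp only [Nat.add_assoc, Nat.reduceAdd] at *
      omega
    · have := D_ge s 2 (by omega)
      omega


theorem pow_step (a q : ℕ) : (a + 1) ^ (q + 1) + (a + 2) ^ q ≤ (a + 2) ^ (q + 1) := by
  have h1 : (a + 1) ^ q ≤ (a + 2) ^ q := Nat.pow_le_pow_left (by omega) q
  rw [pow_succ, pow_succ]
  have : (a + 1) ^ q * (a + 1) ≤ (a + 2) ^ q * (a + 1) := Nat.mul_le_mul_right _ h1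
  nlinarith

theorem poly_exp (p : ℕ) : ∃ K, 1 ≤ K ∧ ∀ j, (j + 1) ^ p ≤ K * 2 ^ j := by
  refine ⟨p.factorial * 2 ^ p, Nat.mul_pos (Nat.factorial_pos _) (by positivity), fun j => ?_⟩
  calc (j + 1) ^ p ≤ (j + 1).ascFactorial p := Nat.pow_succ_le_ascFactorial _ _
    _ = p.factorial * (j + p).choose p := Nat.ascFactorial_eq_factorial_mul_choose _ _
    _ ≤ p.factorial * 2 ^ (j + p) := Nat.mul_le_mul_left _ (Nat.choose_le_two_pow _ _)
    _ = p.factorial * 2 ^ p * 2 ^ j := by rw [pow_add]; ring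

theorem exp_beats (A B p : ℕ) : ∃ e, A + B * (e + p + 1) ^ p ≤ 2 ^ e := by
  obtain ⟨K, hK, h⟩ := poly_exp (p + 1)
  refine ⟨(A + B) * (K * 2 ^ p), ?_⟩
  set e := (A + B) * (K * 2 ^ p) with he
  have h1 := h (e + p)
  have hpos : 0 < K * 2 ^ p := Nat.mul_pos hK (by positivity)
  have h2 : A + B * (e + p + 1) ^ p ≤ (A + B) * (e + p + 1) ^ p := by
    have : 1 ≤ (e + p + 1) ^ p := Nat.one_le_pow _ _ (by omega)
    nlinarith
  refine h2.trans (Nat.le_of_mul_le_mul_left ?_ hpos)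
  calc K * 2 ^ p * ((A + B) * (e + p + 1) ^ p) = e * (e + p + 1) ^ p := by rw [he]; ring
    _ ≤ (e + p + 1) * (e + p + 1) ^ p := Nat.mul_le_mul_right _ (by omega)
    _ = (e + p + 1) ^ (p + 1) := by ring
    _ ≤ K * 2 ^ (e + p) := h1
    _ = K * 2 ^ p * 2 ^ e := by rw [pow_add]; ring

theorem log_bound (p : ℕ) : ∃ K0, ∀ e y, 1 ≤ y →
    (alphaHier 2 (2 ^ e * (y + 1) ^ p) + 1) ^ p ≤ 2 * K0 * (e + p + 1) ^ p * (y + 1) := by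
  obtain ⟨K, hK, h⟩ := poly_exp p
  refine ⟨K, fun e y hy => ?_⟩
  obtain ⟨j, hj1, hj2⟩ : ∃ j, y + 1 ≤ 2 ^ j ∧ 2 ^ j ≤ 2 * (y + 1) := by
    refine ⟨Nat.log 2 (y + 1) + 1, (Nat.lt_pow_succ_log_self (by norm_num) _).le, ?_⟩
    have := Nat.pow_log_le_self 2 (show y + 1 ≠ 0 by omega)
    rw [pow_succ]; omega
  have h1 : alphaHier 2 (2 ^ e * (y + 1) ^ p) ≤ e + j * p := by
    apply alpha2_le
    rw [pow_add, pow_mul]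
    exact Nat.mul_le_mul_left _ (Nat.pow_le_pow_left hj1 p)
  calc (alphaHier 2 (2 ^ e * (y + 1) ^ p) + 1) ^ p ≤ ((e + p + 1) * (j + 1)) ^ p :=
        Nat.pow_le_pow_left (by nlinarith) p
    _ = (e + p + 1) ^ p * (j + 1) ^ p := mul_pow _ _ _
    _ ≤ (e + p + 1) ^ p * (K * (2 * (y + 1))) :=
        Nat.mul_le_mul_left _ ((h j).trans (Nat.mul_le_mul_left _ hj2))
    _ = _ := by ring

theorem ceil_two {m t : ℕ} (ht : 1 ≤ t) (h : 2 ≤ (m + t - 1) / t) : (m + t - 1) / t * t ≤ 2 * m := by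
  have h1 := Nat.div_mul_le_self (m + t - 1) t
  have h2 : 2 * t ≤ (m + t - 1) / t * t := Nat.mul_le_mul_right _ h
  omega

theorem ceil_le {m t : ℕ} (ht : 1 ≤ t) : (m + t - 1) / t ≤ m := by
  rcases Nat.eq_zero_or_pos m with rfl | hm
  · rw [Nat.le_zero]; exact Nat.div_eq_of_lt (by omega)
  rw [Nat.div_le_iff_le_mul_add_pred (by omega)]
  have := Nat.le_mul_of_pos_left m ht
  omega

def Good (ι : Type) (s C p : ℕ) : Prop :=
  ∀ d r m, 2 ≤ d → 1 ≤ m → UB ι s d r m (m * (r * (C * (alphaHier d m + 1) ^ p)))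

theorem alpha_mono' {d m m' : ℕ} (hd : 1 ≤ d) (h : m ≤ m') : alphaHier d m ≤ alphaHier d m' := by
  obtain ⟨q, rfl⟩ : ∃ q, d = q + 1 := ⟨d - 1, by omega⟩
  exact alpha_mono q m m' h

theorem Good.le {ι : Type} {s C p C' p' : ℕ} (h : Good ι s C p) (hC : C ≤ C') (hp : p ≤ p') :
    Good ι s C' p' := fun d r m hd hm => (h d r m hd hm).mono le_rfl (by
      gcongr; omega)

theorem Good.at {ι : Type} {s C p : ℕ} (h : Good ι s C p) (d r m m' : ℕ) (hd : 2 ≤ d) (hm : 1 ≤ m')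
    (hmm : m' ≤ m) : UB ι s d r m' (m' * (r * (C * (alphaHier d m + 1) ^ p))) :=
  (h d r m' hd hm).mono le_rfl (by
    have := alpha_mono' (d := d) (by omega) hmm
    gcongr)

theorem good_base (ι : Type) (s C1 q : ℕ) (hs : 1 ≤ s) (h1 : Good ι (s + 1) C1 q)
    (h2 : Good ι s C1 q) (r m : ℕ) :
    UB ι (s + 2) 2 r m (m * (r * (3 * C1 * (alphaHier 2 m + 1) ^ (q + 1)))) := by
  induction m using Nat.strong_induction_on with
  | _ m ih =>
    rcases Nat.lt_or_ge m 2 with hm | hm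
    · exact (UB_small ι s 2 r m le_rfl (by omega)).mono le_rfl (Nat.zero_le _)
    have hy : alphaHier 1 m = (m + 1) / 2 := by simp [alphaHier]
    have hrec := alpha_rec 0 m hm
    have hlt := alpha_lt 0 m hm
    simp only [Nat.zero_add] at hrec hlt
    set t := alphaHier 1 m with ht
    have key := UB_rec2 ι s r m t (r * (3 * C1 * (alphaHier 2 t + 1) ^ (q + 1)))
      (r * (C1 * (alphaHier 2 m + 1) ^ q)) hs (by omega) (by omega)
      (fun m' a b c => (ih m' (by omega)).mono le_rfl (by
        have := alpha_mono' (d := 2) (by omega) b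
        gcongr))
      (fun m' a b c => h1.at 2 r m m' le_rfl a c) (fun m' a b c => h2.at 2 r m m' le_rfl a c)
    refine key.mono le_rfl (Nat.mul_le_mul_left _ ?_)
    rw [hrec]
    have := pow_step (alphaHier 2 t) q
    rw [show 1 + alphaHier 2 t + 1 = alphaHier 2 t + 2 by omega]
    calc _ = r * (3 * C1 * ((alphaHier 2 t + 1) ^ (q + 1) + (alphaHier 2 t + 2) ^ q)) := by ring
      _ ≤ _ := by gcongr

theorem good_step (ι : Type) (s C1 q K e : ℕ) (hs : 1 ≤ s) (h1 : Good ι (s + 1) C1 q)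
    (h2 : Good ι s C1 q)
    (hK : ∀ y, 1 ≤ y → (alphaHier 2 (2 ^ e * (y + 1) ^ (q + 1)) + 1) ^ (q + 1) ≤ K * (y + 1))
    (hC : 6 * C1 + 4 + 24 * C1 * K ≤ 2 ^ e) (r d : ℕ) :
    ∀ m, UB ι (s + 2) (d + 2) r m (m * (r * (2 ^ e * (alphaHier (d + 2) m + 1) ^ (q + 1)))) := by
  induction d with
  | zero =>
    intro m
    refine (good_base ι s C1 q hs h1 h2 r m).mono le_rfl ?_
    have : 3 * C1 ≤ 2 ^ e := by
      refine le_trans ?_ hC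
      have := Nat.zero_le (24 * C1 * K)
      omega
    gcongr
  | succ d ihd =>
    intro m
    induction m using Nat.strong_induction_on with
    | _ m ih =>
    rcases Nat.lt_or_ge m 2 with hm | hm
    · exact (UB_small ι s _ r m (by omega) (by omega)).mono le_rfl (Nat.zero_le _)
    have hrec := alpha_rec (d + 1) m hm
    have hlt := alpha_lt (d + 1) m hm
    have hypos := alpha_pos (d + 1) m hm
    simp only [Nat.add_assoc, Nat.reduceAdd] at hrec hlt hypos ih ihd ⊢
    set y := alphaHier (d + 2) m with hy
    set C := 2 ^ e with hCdef
    set a := alphaHier (d + 3) y with ha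
    set H := r * (C1 * (alphaHier (d + 3) m + 1) ^ q) with hH
    set gy := r * (C * (a + 1) ^ (q + 1)) with hgy
    have hCpos : 1 ≤ C := Nat.one_le_two_pow
    set t := C * (y + 1) ^ (q + 1) with ht
    have htpos : 1 ≤ t := Nat.mul_pos hCpos (by positivity)
    -- inner step
    have inner : ∀ m', 1 ≤ m' → m' ≤ t → m' ≤ m →
        UB ι (s + 2) (d + 3) r m' (m' * (gy + 3 * H + r * (24 * C1 * K))) := by
      intro m' hm1 hmt hmm
      have htop : UB ι (s + 2) (d + 2) r ((m' + y - 1) / y) (m' * (r * (12 * C1 * K))) := by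
        rcases Nat.lt_or_ge ((m' + y - 1) / y) 2 with hb | hb
        · exact (UB_small ι s _ r _ (by omega) (by omega)).mono le_rfl (Nat.zero_le _)
        · have hb2 := ceil_two hypos hb
          have hble := ceil_le (m := m') hypos
          set b := (m' + y - 1) / y with hbdef
          refine (UB_base ι s (d + 2) r b _ hs (by omega)
            (good_base ι s C1 q hs h1 h2 r b)).mono le_rfl ?_
          have hab := alpha_mono' (d := 2) (by omega) (hble.trans hmt)
          calc b * (r * (3 * C1 * (alphaHier 2 b + 1) ^ (q + 1)))
              ≤ b * (r * (3 * C1 * (alphaHier 2 t + 1) ^ (q + 1))) := by gcongr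
            _ ≤ b * (r * (3 * C1 * (K * (y + 1)))) := by gcongr; exact hK y hypos
            _ ≤ b * (r * (3 * C1 * (K * (2 * y)))) := by gcongr; omega
            _ = (b * y) * (r * (6 * C1 * K)) := by ring
            _ ≤ (2 * m') * (r * (6 * C1 * K)) := by gcongr
            _ = _ := by ring
      have key := UB_rec ι s d r m' y gy H _ hs hypos
        (fun m'' a1 b1 c1 => (ih m'' (by omega)).mono le_rfl (by
          have := alpha_mono' (d := d + 3) (by omega) b1
          rw [hgy]
          gcongr))
        (fun m'' a1 b1 c1 => h1.at (d + 3) r m m'' (by omega) a1 (by omega))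
        (fun m'' a1 b1 c1 => h2.at (d + 3) r m m'' (by omega) a1 (by omega)) htop
      refine key.mono le_rfl (le_of_eq ?_)
      ring
    have htop : UB ι (s + 2) (d + 2) r ((m + t - 1) / t) (m * (2 * r)) := by
      rcases Nat.lt_or_ge ((m + t - 1) / t) 2 with hb | hb
      · exact (UB_small ι s _ r _ (by omega) (by omega)).mono le_rfl (Nat.zero_le _)
      · have hb2 := ceil_two htpos hb
        have hble := ceil_le (m := m) htpos
        set b := (m + t - 1) / t with hbdef
        refine (ihd b).mono le_rfl ?_
        have hab := alpha_mono' (d := d + 2) (by omega) hble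
        calc b * (r * (C * (alphaHier (d + 2) b + 1) ^ (q + 1)))
            ≤ b * (r * (C * (y + 1) ^ (q + 1))) := by gcongr
          _ = (b * t) * r := by rw [ht]; ring
          _ ≤ (2 * m) * r := by gcongr
          _ = _ := by ring
    have key := UB_rec ι s d r m t _ H _ hs htpos inner
      (fun m'' a1 b1 c1 => h1.at (d + 3) r m m'' (by omega) a1 c1)
      (fun m'' a1 b1 c1 => h2.at (d + 3) r m m'' (by omega) a1 c1) htop
    refine key.mono le_rfl ?_
    rw [hrec] at hH
    have e1 : 1 + a + 1 = a + 2 := by omega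
    rw [hrec, e1]
    rw [e1] at hH
    have hp := pow_step a q
    have h1' : 1 ≤ (a + 2) ^ q := Nat.one_le_pow _ _ (by omega)
    calc _ = m * (r * (C * (a + 1) ^ (q + 1) + 6 * C1 * (a + 2) ^ q + (4 + 24 * C1 * K) * 1)) := by
          rw [hgy, hH]; ring
      _ ≤ m * (r * (C * (a + 1) ^ (q + 1) + 6 * C1 * (a + 2) ^ q +
            (4 + 24 * C1 * K) * (a + 2) ^ q)) := by gcongr
      _ = m * (r * (C * (a + 1) ^ (q + 1) + (6 * C1 + 4 + 24 * C1 * K) * (a + 2) ^ q)) := by ring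
      _ ≤ m * (r * (C * (a + 1) ^ (q + 1) + C * (a + 2) ^ q)) := by gcongr
      _ = m * (r * (C * ((a + 1) ^ (q + 1) + (a + 2) ^ q))) := by ring
      _ ≤ _ := by gcongr

theorem good_all (ι : Type) (s : ℕ) : ∃ C p, Good ι (s + 1) C p := by
  induction s using Nat.strong_induction_on with
  | _ s ih =>
    match s, ih with
    | 0, _ => exact ⟨1, 0, fun d r m _ hm => (UB_one ι d r m hm).mono le_rfl (by simp)⟩
    | 1, _ => exact ⟨1, 0, fun d r m _ hm => (UB_two ι d r m).mono le_rfl (by simp)⟩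
    | s + 2, ih =>
      obtain ⟨Ca, pa, ha⟩ := ih s (by omega)
      obtain ⟨Cb, pb, hb⟩ := ih (s + 1) (by omega)
      have ha' := ha.le (Nat.le_add_right Ca Cb) (Nat.le_add_right pa pb)
      have hb' := hb.le (Nat.le_add_left Cb Ca) (Nat.le_add_left pb pa)
      obtain ⟨K0, hK0⟩ := log_bound (pa + pb + 1)
      obtain ⟨e, he⟩ := exp_beats (6 * (Ca + Cb) + 4) (24 * (Ca + Cb) * (2 * K0)) (pa + pb + 1)
      refine ⟨2 ^ e, pa + pb + 1, fun d r m hd hm => ?_⟩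
      obtain ⟨d, rfl⟩ : ∃ k, d = k + 2 := ⟨d - 2, by omega⟩
      exact good_step ι (s + 1) (Ca + Cb) (pa + pb) (2 * K0 * (e + (pa + pb + 1) + 1) ^ (pa + pb + 1))
        e (by omega) hb' ha' (fun y hy => hK0 e y hy) (by rw [← mul_assoc]; exact he) r d m


theorem exists_enum (O : Finset ℕ) : ∃ f : ℕ → ℕ, (∀ i < O.card, f i ∈ O) ∧
    ∀ i j, i < j → j < O.card → f i < f j := by
  classical
  refine ⟨fun i => if h : i < O.card then O.orderEmbOfFin rfl ⟨i, h⟩ else 0, ?_, ?_⟩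
  · intro i hi
    simp only [hi, dif_pos]
    exact O.orderEmbOfFin_mem rfl _
  · intro i j hij hj
    simp only [hj, hij.trans hj, dif_pos]
    exact (O.orderEmbOfFin rfl).strictMono (by simpa using hij)

theorem enum_gap {f : ℕ → ℕ} {N : ℕ} (hf : ∀ i j, i < j → j < N → f i < f j) (i k : ℕ)
    (h : i + k < N) : f i + k ≤ f (i + k) := by
  induction k with
  | zero => simp
  | succ k ih =>
    have h1 := ih (by omega)
    have h2 := hf (i + k) (i + (k + 1)) (by omega) h
    omega

theorem fat_formation (s C p : ℕ) (hs : 2 ≤ s) (hG : Good ((_ : ℕ) × ℕ) s C p)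
    (n d B r : ℕ) (hd : 2 ≤ d) (hB : 1 ≤ B) (O : ℕ → Finset ℕ)
    (hO : ∀ j < n, ∀ x ∈ O j, x < n)
    (hbig : (n / B + 1) * (r * (C * (alphaHier d (n / B + 1) + 1) ^ p)) <
      ∑ j ∈ Finset.range n, (O j).card / (B * (Dfun s d + 1))) :
    ∃ J : Finset ℕ, J ⊆ Finset.range n ∧ J.card = r ∧ ∃ g : ℕ → ℕ, Monotone g ∧
      ∀ j ∈ J, ∀ i < s, B ≤ ((O j).filter (fun x => g x = i)).card := by
  classical
  choose f hfO hf using fun j => exists_enum (O j)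
  set D := Dfun s d with hD
  set W := B * (D + 1) with hW
  set S : Finset ((_ : ℕ) × ℕ) := (Finset.range n).sigma
    (fun j => Finset.range ((O j).card / W)) with hS
  set A : ((_ : ℕ) × ℕ) → Finset ℕ := fun c =>
    (Finset.Icc 1 D).image (fun i => f c.1 (c.2 * W + B * i) / B) with hA
  have hidx : ∀ c ∈ S, c.1 < n ∧ c.2 * W + B * D + B ≤ (O c.1).card := by
    intro c hc
    rw [hS, Finset.mem_sigma, Finset.mem_range, Finset.mem_range] at hc
    refine ⟨hc.1, ?_⟩
    have h1 : (c.2 + 1) * W ≤ (O c.1).card :=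
      (Nat.mul_le_mul_right W hc.2).trans (Nat.div_mul_le_self _ _)
    have h2 : (c.2 + 1) * W = c.2 * W + B * D + B := by rw [hW]; ring
    omega
  have hstep : ∀ c ∈ S, ∀ i1 i2, 1 ≤ i1 → i1 < i2 → i2 ≤ D →
      f c.1 (c.2 * W + B * i1) / B < f c.1 (c.2 * W + B * i2) / B := by
    intro c hc i1 i2 h1 h12 h2
    have hi := (hidx c hc).2
    have e : c.2 * W + B * i2 = c.2 * W + B * i1 + B * (i2 - i1) := by
      have : B * i2 = B * i1 + B * (i2 - i1) := by rw [← Nat.mul_add]; congr 1; omega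
      omega
    have hBle : B * i2 ≤ B * D := Nat.mul_le_mul_left _ h2
    have hgap := enum_gap (hf c.1) (c.2 * W + B * i1) (B * (i2 - i1)) (by omega)
    rw [← e] at hgap
    have hB1 : B * 1 ≤ B * (i2 - i1) := Nat.mul_le_mul_left _ (by omega)
    have : f c.1 (c.2 * W + B * i1) / B + 1 ≤ f c.1 (c.2 * W + B * i2) / B := by
      rw [← Nat.add_div_right _ (by omega)]
      exact Nat.div_le_div_right (by omega)
    omega
  have hform : Form true s r S A := by
    by_contra hF
    have hbd := (hG d r (n / B + 1) hd (Nat.le_add_left 1 _)).2 S A 0 ?_ ?_ hF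
    · rw [hS, Finset.card_sigma] at hbd
      simp only [Finset.card_range] at hbd
      omega
    · intro c hc x hx
      obtain ⟨i, hi, rfl⟩ := Finset.mem_image.1 hx
      rw [Finset.mem_Icc] at hi
      have h1 := hidx c hc
      have hBle : B * i ≤ B * D := Nat.mul_le_mul_left _ hi.2
      have h2 := hO c.1 h1.1 _ (hfO c.1 (c.2 * W + B * i) (by omega))
      have h3 : f c.1 (c.2 * W + B * i) / B ≤ n / B := Nat.div_le_div_right h2.le
      rw [Finset.mem_Ico]
      exact ⟨Nat.zero_le _, by omega⟩
    · intro c hc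
      rw [hA]
      rw [Finset.card_image_of_injOn]
      · simp [hD]
      · intro i1 h1 i2 h2 heq
        rw [Finset.coe_Icc, Set.mem_Icc] at h1 h2
        beta_reduce at heq
        rcases Nat.lt_trichotomy i1 i2 with h | h | h
        · have := hstep c hc i1 i2 h1.1 h h2.2; omega
        · exact h
        · have := hstep c hc i2 i1 h2.1 h h1.2; omega
  obtain ⟨T, hTS, hTr, g, hg, hT⟩ := hform
  set g' : ℕ → ℕ := fun x => min (g (x / B)) (s - 1) with hg'
  have hg'm : Monotone g' := by
    intro x y hxy
    have := hg (Nat.div_le_div_right (c := B) hxy)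
    simp only [hg']
    omega
  have hfm : ∀ j l l', l ≤ l' → l' < (O j).card → f j l ≤ f j l' := by
    intro j l l' h h'
    rcases Nat.eq_or_lt_of_le h with rfl | h
    · exact le_rfl
    · exact (hf j l l' h h').le
  have hblock : ∀ c ∈ T, ∀ i < s, ∃ u ≤ D, ∀ l, c.2 * W + B * u ≤ l → l < c.2 * W + B * u + B →
      g' (f c.1 l) = i := by
    intro c hc i hi
    have hcS := hTS hc
    have hix := (hidx c hcS).2
    have hw := hT c hc i hi
    have hmem : ∀ x ∈ (A c).filter (fun x => g x = i), ∃ i1, 1 ≤ i1 ∧ i1 ≤ D ∧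
        f c.1 (c.2 * W + B * i1) / B = x ∧ g (f c.1 (c.2 * W + B * i1) / B) = i := by
      intro x hx
      rw [Finset.mem_filter] at hx
      obtain ⟨i1, h1, rfl⟩ := Finset.mem_image.1 hx.1
      rw [Finset.mem_Icc] at h1
      exact ⟨i1, h1.1, h1.2, rfl, hx.2⟩
    have hmul : ∀ i1, i1 ≤ D → B * i1 ≤ B * D := fun i1 h => Nat.mul_le_mul_left _ h
    rcases Nat.eq_zero_or_pos i with rfl | hi0
    · have : 1 ≤ wt true s 0 := by unfold wt; simp; split_ifs <;> omega
      obtain ⟨x, hx⟩ := Finset.card_pos.1 (this.trans hw)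
      obtain ⟨i1, h1, h2, -, h3⟩ := hmem x hx
      refine ⟨i1 - 1, by omega, fun l hl1 hl2 => ?_⟩
      have e : B * i1 = B * (i1 - 1) + B := by
        conv_lhs => rw [show i1 = (i1 - 1) + 1 by omega]
        ring
      have := hmul i1 h2
      have hle := hfm c.1 l (c.2 * W + B * i1) (by omega) (by omega)
      have := hg (Nat.div_le_div_right (c := B) hle)
      simp only [hg']
      omega
    · rcases Nat.lt_or_ge (i + 1) s with his | his
      · have : 2 ≤ wt true s i := by
          unfold wt; simp; split_ifs <;> omega
        obtain ⟨x, hx, y, hy, hxy⟩ := Finset.one_lt_card.1 (this.trans hw)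
        obtain ⟨i1, a1, a2, a3, a4⟩ := hmem x hx
        obtain ⟨i2, b1, b2, b3, b4⟩ := hmem y hy
        have main : ∀ i1 i2, i1 < i2 → i2 ≤ D → g (f c.1 (c.2 * W + B * i1) / B) = i →
            g (f c.1 (c.2 * W + B * i2) / B) = i → ∃ u ≤ D, ∀ l, c.2 * W + B * u ≤ l →
            l < c.2 * W + B * u + B → g' (f c.1 l) = i := by
          intro i1 i2 h12 h2 e1 e2
          refine ⟨i1, by omega, fun l hl1 hl2 => ?_⟩
          have e : B * (i1 + 1) ≤ B * i2 := Nat.mul_le_mul_left _ h12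
          rw [Nat.mul_add, Nat.mul_one] at e
          have := hmul i2 h2
          have q1 := hg (Nat.div_le_div_right (c := B)
            (hfm c.1 (c.2 * W + B * i1) l hl1 (by omega)))
          have q2 := hg (Nat.div_le_div_right (c := B)
            (hfm c.1 l (c.2 * W + B * i2) (by omega) (by omega)))
          simp only [hg']
          omega
        rcases Nat.lt_trichotomy i1 i2 with h | h | h
        · exact main i1 i2 h b2 a4 b4
        · subst h; exact absurd (a3.symm.trans b3) hxy
        · exact main i2 i1 h a2 b4 a4
      · have : 1 ≤ wt true s i := by unfold wt; simp; split_ifs <;> omega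
        obtain ⟨x, hx⟩ := Finset.card_pos.1 (this.trans hw)
        obtain ⟨i1, h1, h2, -, h3⟩ := hmem x hx
        refine ⟨i1, h2, fun l hl1 hl2 => ?_⟩
        have := hmul i1 h2
        have hle := hfm c.1 (c.2 * W + B * i1) l hl1 (by omega)
        have := hg (Nat.div_le_div_right (c := B) hle)
        simp only [hg']
        omega
  have hne : ∀ c ∈ T, ∀ c' ∈ T, c.1 = c'.1 → ¬ c.2 < c'.2 := by
    intro c hc c' hc' h1 h2
    obtain ⟨u, hu, hu'⟩ := hblock c hc (s - 1) (by omega)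
    obtain ⟨v, hv, hv'⟩ := hblock c' hc' 0 (by omega)
    have a1 := hu' _ le_rfl (by omega)
    have a2 := hv' _ le_rfl (by omega)
    have hix := (hidx c' (hTS hc')).2
    have q1 : (c.2 + 1) * W ≤ c'.2 * W := Nat.mul_le_mul_right _ h2
    have q2 : (c.2 + 1) * W = c.2 * W + B * D + B := by rw [hW]; ring
    have q3 : B * u ≤ B * D := Nat.mul_le_mul_left _ hu
    have q4 : B * v ≤ B * D := Nat.mul_le_mul_left _ hv
    have := hg'm (hfm c'.1 (c.2 * W + B * u) (c'.2 * W + B * v) (by omega) (by omega))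
    rw [h1] at a1
    omega
  refine ⟨T.image (fun c => c.1), ?_, ?_, g', hg'm, ?_⟩
  · intro j hj
    obtain ⟨c, hc, rfl⟩ := Finset.mem_image.1 hj
    exact Finset.mem_range.2 (hidx c (hTS hc)).1
  · rw [Finset.card_image_of_injOn, hTr]
    intro c hc c' hc' h
    have h1 := hne c hc c' hc' h
    have h2 := hne c' hc' c hc h.symm
    have h3 : c.2 = c'.2 := by omega
    exact Sigma.ext h (heq_of_eq h3)
  · intro j hj i hi
    obtain ⟨c, hc, rfl⟩ := Finset.mem_image.1 hj
    obtain ⟨u, hu, hu'⟩ := hblock c hc i hi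
    have hix := (hidx c (hTS hc)).2
    have q3 : B * u ≤ B * D := Nat.mul_le_mul_left _ hu
    have hsub : (Finset.Ico (c.2 * W + B * u) (c.2 * W + B * u + B)).image (f c.1) ⊆
        (O c.1).filter (fun x => g' x = i) := by
      intro x hx
      obtain ⟨l, hl, rfl⟩ := Finset.mem_image.1 hx
      rw [Finset.mem_Ico] at hl
      exact Finset.mem_filter.2 ⟨hfO c.1 l (by omega), hu' l hl.1 hl.2⟩
    refine le_trans ?_ (Finset.card_le_card hsub)
    rw [Finset.card_image_of_injOn, Nat.card_Ico]
    · omega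
    · intro l hl l' hl' h
      rw [Finset.coe_Ico, Set.mem_Ico] at hl hl'
      rcases Nat.lt_trichotomy l l' with h1 | h1 | h1
      · have := hf c.1 l l' h1 (by omega); omega
      · exact h1
      · have := hf c.1 l' l h1 (by omega); omega


open Classical in
/-- the permutations of `P` that follow the pattern `σ` on the columns `x` -/
noncomputable def Fam {n s t : ℕ} (P : Finset (Equiv.Perm (Fin n))) (g : Fin n → ℕ)
    (x : Fin t → Fin n) (σ : Fin t → Fin s) : Finset (Equiv.Perm (Fin n)) :=
  P.filter (fun π => ∀ l, g (π (x l)) = (σ l : ℕ))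

/-- outcome of the selection -/
def SelDone {n : ℕ} (k r : ℕ) (P : Finset (Equiv.Perm (Fin n))) (J : Finset (Fin n))
    (g : Fin n → ℕ) : Prop :=
  ∃ P' ⊆ P, P.card ≤ P'.card * (2 * (2 * r) ^ k) ∧ ∃ J' ⊆ J,
    r ≤ (k + 1) ^ (k + 1) * J'.card ∧ ∀ j ∈ J', ∃ i < k + 1, ∀ π ∈ P', g (π j) ≠ i

theorem minority {n : ℕ} (r : ℕ) (F : Finset (Equiv.Perm (Fin n))) (X : Finset (Fin n))
    (g : Fin n → ℕ) (i : Fin n → ℕ) (hr : 1 ≤ r) (hX : X.card ≤ r)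
    (h : ∀ j ∈ X, (F.filter (fun π => g (π j) = i j)).card * (2 * r) ≤ F.card) :
    F.card ≤ 2 * (F.filter (fun π => ∀ j ∈ X, g (π j) ≠ i j)).card := by
  classical
  have h1 := Finset.card_filter_add_card_filter_not (s := F) (fun π => ∀ j ∈ X, g (π j) ≠ i j)
  have h2 : (F.filter (fun π => ¬ ∀ j ∈ X, g (π j) ≠ i j)).card ≤
      ∑ j ∈ X, (F.filter (fun π => g (π j) = i j)).card := by
    refine le_trans (Finset.card_le_card ?_) Finset.card_biUnion_le
    intro π hπ
    rw [Finset.mem_filter] at hπ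
    rw [Finset.mem_biUnion]
    have := hπ.2
    push Not at this
    obtain ⟨j, hj, e⟩ := this
    exact ⟨j, hj, Finset.mem_filter.2 ⟨hπ.1, e⟩⟩
  have h3 : (∑ j ∈ X, (F.filter (fun π => g (π j) = i j)).card) * (2 * r) ≤ r * F.card := by
    rw [Finset.sum_mul]
    refine (Finset.sum_le_card_nsmul _ _ _ h).trans ?_
    rw [smul_eq_mul]
    exact Nat.mul_le_mul_right _ hX
  have h4 : (∑ j ∈ X, (F.filter (fun π => g (π j) = i j)).card) * 2 ≤ F.card := by
    refine Nat.le_of_mul_le_mul_left (c := r) ?_ (by omega)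
    calc _ = (∑ j ∈ X, (F.filter (fun π => g (π j) = i j)).card) * (2 * r) := by ring
      _ ≤ _ := h3
  omega

theorem sel_step {n : ℕ} (k r : ℕ) (P : Finset (Equiv.Perm (Fin n))) (J : Finset (Fin n))
    (g : Fin n → ℕ) (hJ : J.card = r) (hr : 1 ≤ r) (hnd : ¬ SelDone k r P J g) (t : ℕ)
    (ht : t ≤ k + 1) : ∃ x : Fin t → Fin n, ∀ σ : Fin t → Fin (k + 1), Function.Injective σ →
      P.card ≤ (Fam P g x σ).card * (2 * r) ^ t := by
  classical
  induction t with
  | zero =>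
    refine ⟨Fin.elim0, fun σ _ => ?_⟩
    simp [Fam]
  | succ t ih =>
    obtain ⟨x, hx⟩ := ih (by omega)
    set K := (k + 1) ^ (k + 1) with hK
    set X : (Fin t → Fin (k + 1)) → Finset (Fin n) := fun σ =>
      J.filter (fun j => ∃ i : Fin (k + 1), (∀ l, σ l ≠ i) ∧
        ((Fam P g x σ).filter (fun π => g (π j) = (i : ℕ))).card * (2 * r) < (Fam P g x σ).card)
      with hXdef
    have hsmall : ∀ σ, Function.Injective σ → K * (X σ).card + 1 ≤ r := by
      intro σ hσ
      by_contra hcon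
      apply hnd
      have hex : ∀ j, ∃ i, j ∈ X σ → i < k + 1 ∧
          ((Fam P g x σ).filter (fun π => g (π j) = i)).card * (2 * r) ≤ (Fam P g x σ).card := by
        intro j
        by_cases hj : j ∈ X σ
        · obtain ⟨i, -, hi⟩ := (Finset.mem_filter.1 hj).2
          exact ⟨i, fun _ => ⟨i.2, hi.le⟩⟩
        · exact ⟨0, fun h => absurd h hj⟩
      choose i hi using hex
      have hm := minority r (Fam P g x σ) (X σ) g i hr
        ((Finset.card_le_card (Finset.filter_subset _ _)).trans hJ.le) (fun j hj => (hi j hj).2)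
      refine ⟨(Fam P g x σ).filter (fun π => ∀ j ∈ X σ, g (π j) ≠ i j),
        (Finset.filter_subset _ _).trans (Finset.filter_subset _ _), ?_, X σ,
        Finset.filter_subset _ _, by rw [← hK]; omega, fun j hj => ⟨i j, (hi j hj).1, fun π hπ =>
          (Finset.mem_filter.1 hπ).2 j hj⟩⟩
      have h1 := hx σ hσ
      have h2 : (2 * r) ^ t ≤ (2 * r) ^ k := Nat.pow_le_pow_right (by omega) (by omega)
      calc P.card ≤ _ := h1
        _ ≤ (2 * _) * (2 * r) ^ k := Nat.mul_le_mul hm h2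
        _ = _ := by ring
    set Sg : Finset (Fin t → Fin (k + 1)) := Finset.univ.filter (fun σ => Function.Injective σ)
      with hSg
    have hcard : Sg.card ≤ K := by
      refine (Finset.card_le_univ _).trans ?_
      rw [Fintype.card_fun, Fintype.card_fin, Fintype.card_fin]
      exact Nat.pow_le_pow_right (by omega) (by omega)
    have hKpos : 0 < K := by positivity
    have hsum : ∑ σ ∈ Sg, (X σ).card ≤ r - 1 := by
      refine Nat.le_of_mul_le_mul_left (c := K) ?_ hKpos
      rw [Finset.mul_sum]
      refine (Finset.sum_le_card_nsmul _ _ (r - 1) ?_).trans ?_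
      · intro σ hσ
        have := hsmall σ (Finset.mem_filter.1 hσ).2
        omega
      · rw [smul_eq_mul]; exact Nat.mul_le_mul_right _ hcard
    have hex : ∃ x0 ∈ J, x0 ∉ Sg.biUnion X := by
      apply Finset.exists_mem_notMem_of_card_lt_card
      have := Finset.card_biUnion_le (s := Sg) (t := X)
      omega
    obtain ⟨x0, hx0J, hx0⟩ := hex
    refine ⟨Fin.snoc x x0, fun σ' hσ' => ?_⟩
    set σ : Fin t → Fin (k + 1) := fun l => σ' l.castSucc with hσdef
    have hσ : Function.Injective σ := fun a b h => Fin.castSucc_injective _ (hσ' h)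
    have hne : ∀ l, σ l ≠ σ' (Fin.last t) := by
      intro l h
      exact absurd (hσ' h) (Fin.castSucc_lt_last l).ne
    have hge : (Fam P g x σ).card ≤
        ((Fam P g x σ).filter (fun π => g (π x0) = (σ' (Fin.last t) : ℕ))).card * (2 * r) := by
      by_contra hcon
      refine hx0 (Finset.mem_biUnion.2 ⟨σ, Finset.mem_filter.2 ⟨Finset.mem_univ _, hσ⟩, ?_⟩)
      exact Finset.mem_filter.2 ⟨hx0J, σ' (Fin.last t), hne, not_le.1 hcon⟩
    have hsub : (Fam P g x σ).filter (fun π => g (π x0) = (σ' (Fin.last t) : ℕ)) ⊆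
        Fam P g (Fin.snoc x x0) σ' := by
      intro π hπ
      simp only [Fam, Finset.mem_filter] at hπ ⊢
      refine ⟨hπ.1.1, fun l => ?_⟩
      refine Fin.lastCases ?_ (fun l => ?_) l
      · simpa using hπ.2
      · simpa using hπ.1.2 l
    calc P.card ≤ _ := hx σ hσ
      _ ≤ (_ * (2 * r)) * (2 * r) ^ t := Nat.mul_le_mul_right _ hge
      _ ≤ ((Fam P g (Fin.snoc x x0) σ').card * (2 * r)) * (2 * r) ^ t :=
        Nat.mul_le_mul_right _ (Nat.mul_le_mul_right _ (Finset.card_le_card hsub))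
      _ = _ := by rw [pow_succ]; ring

theorem selection {n : ℕ} (k r : ℕ) (P : Finset (Equiv.Perm (Fin n))) (J : Finset (Fin n))
    (g : Fin n → ℕ) (hP : P.Nonempty) (hVC : VCDimLE n k P) (hg : Monotone g)
    (hJ : J.card = r) (hr : 1 ≤ r) : SelDone k r P J g := by
  classical
  by_contra hnd
  obtain ⟨x, hx⟩ := sel_step k r P J g hJ hr hnd (k + 1) le_rfl
  have hne : ∀ σ : Equiv.Perm (Fin (k + 1)), ∃ π ∈ P, ∀ l, g (π (x l)) = (σ l : ℕ) := by
    intro σ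
    have h1 := hx σ σ.injective
    have h2 : 0 < (Fam P g x σ).card := by
      rcases Nat.eq_zero_or_pos (Fam P g x σ).card with h | h
      · rw [h, Nat.zero_mul] at h1
        have := Finset.card_pos.2 hP
        omega
      · exact h
    obtain ⟨π, hπ⟩ := Finset.card_pos.1 h2
    exact ⟨π, (Finset.mem_filter.1 hπ).1, (Finset.mem_filter.1 hπ).2⟩
  have hinj : Function.Injective x := by
    intro a b hab
    obtain ⟨π, -, hπ⟩ := hne 1
    have h1 := hπ a
    have h2 := hπ b
    rw [hab, h2] at h1
    exact (Fin.ext (by simpa using h1)).symm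
  set τ := Tuple.sort x
  refine hVC (x ∘ τ) ⟨(Tuple.monotone_sort x).strictMono_of_injective
    (hinj.comp τ.injective), fun σ => ?_⟩
  obtain ⟨π, hπP, hπ⟩ := hne (τ.symm.trans σ)
  refine ⟨π, hπP, fun i j => ?_⟩
  have hi : g (π ((x ∘ τ) i)) = (σ i : ℕ) := by simpa using hπ (τ i)
  have hj : g (π ((x ∘ τ) j)) = (σ j : ℕ) := by simpa using hπ (τ j)
  constructor
  · intro h
    apply hg.reflect_lt
    rw [hi, hj]
    exact h
  · intro h
    have h1 := hg h.le
    rw [hi, hj] at h1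
    refine lt_of_le_of_ne h1 fun e => ?_
    have : i = j := σ.injective e
    subst this
    exact lt_irrefl _ h


/-- rows of the 1-entries of column `j` -/
def colSet {n : ℕ} (P : Finset (Equiv.Perm (Fin n))) (j : Fin n) : Finset (Fin n) :=
  P.image (fun π => π j)

theorem permOnes_eq {n : ℕ} (P : Finset (Equiv.Perm (Fin n))) :
    permOnes P = ∑ j : Fin n, (colSet P j).card := by
  classical
  let e : {p : Fin n × Fin n // ∃ π ∈ P, π p.2 = p.1} ≃
      (j : Fin n) × {i : Fin n // ∃ π ∈ P, π j = i} :=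
    { toFun := fun p => ⟨p.1.2, ⟨p.1.1, p.2⟩⟩
      invFun := fun q => ⟨(q.2.1, q.1), q.2.2⟩
      left_inv := fun _ => rfl
      right_inv := fun _ => rfl }
  rw [permOnes, Nat.card_congr e, Nat.card_sigma]
  refine Finset.sum_congr rfl fun j _ => ?_
  exact Nat.subtype_card _ (fun x => by simp [colSet])

theorem permOnes_drop {n : ℕ} (P P' : Finset (Equiv.Perm (Fin n))) (hPP : P' ⊆ P)
    (J : Finset (Fin n)) (B : ℕ) (h : ∀ j ∈ J, (colSet P' j).card + B ≤ (colSet P j).card) :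
    permOnes P' + J.card * B ≤ permOnes P := by
  classical
  rw [permOnes_eq, permOnes_eq]
  have e : J.card * B = ∑ j : Fin n, if j ∈ J then B else 0 := by
    rw [← Finset.sum_filter, Finset.sum_const, smul_eq_mul]
    congr 2
    ext; simp
  rw [e, ← Finset.sum_add_distrib]
  refine Finset.sum_le_sum fun j _ => ?_
  split_ifs with hj
  · exact h j hj
  · exact Finset.card_le_card (Finset.image_subset_image hPP)

/-- the columns as sets of natural numbers -/
def natCol {n : ℕ} (P : Finset (Equiv.Perm (Fin n))) (j : ℕ) : Finset ℕ :=
  if h : j < n then (colSet P ⟨j, h⟩).image (fun i : Fin n => (i : ℕ)) else ∅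

theorem natCol_card {n : ℕ} (P : Finset (Equiv.Perm (Fin n))) (j : Fin n) :
    (natCol P j).card = (colSet P j).card := by
  simp only [natCol, j.2, dif_pos]
  exact Finset.card_image_of_injective _ Fin.val_injective

theorem core (k C p : ℕ) (hk : 1 ≤ k) (hG : Good ((_ : ℕ) × ℕ) (k + 1) C p)
    (n B : ℕ) (hn : 7 ≤ n) (hB : 2 ≤ B) (hBn : B ≤ n) (P : Finset (Equiv.Perm (Fin n)))
    (hP : P.Nonempty) (hVC : VCDimLE n k P) (G : ℕ)
    (hGbig : 4 * ((k + 1) ^ (k + 1) * C * 4 ^ p) + 3 ≤ G)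
    (hN : B * G * (betaFun (k + 1) n + 2) * n ≤ 2 * permOnes P) :
    ∃ P' ⊆ P, P.card ≤ P'.card * (2 * (2 * ((k + 1) ^ (k + 1) * B)) ^ k) ∧
      permOnes P' + B * B ≤ permOnes P := by
  classical
  set K := (k + 1) ^ (k + 1) with hK
  have hKpos : 0 < K := by positivity
  have hd := invAck_two n hn
  have hspec := (invAck_spec n).2
  unfold betaFun at hN
  set d := invAck n with hddef
  set D := Dfun (k + 1) d with hDdef
  set W := B * (D + 1) with hW
  have hWpos : 0 < W := by positivity
  set m := n / B + 1 with hm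
  have hmB : m * B ≤ 2 * n := by
    have := Nat.div_mul_le_self n B
    rw [hm, Nat.add_mul]; omega
  have hmn : m ≤ n := by
    have : n / B ≤ n / 2 := Nat.div_le_div_left hB (by omega)
    omega
  have hal : alphaHier d m ≤ 3 := (alpha_mono' (by omega) hmn).trans hspec
  have hNsum : permOnes P = ∑ j ∈ Finset.range n, (natCol P j).card := by
    rw [permOnes_eq, Finset.sum_range]
    exact Finset.sum_congr rfl fun j _ => (natCol_card P j).symm
  set Sm := ∑ j ∈ Finset.range n, (natCol P j).card / W with hSm
  have hS1 : permOnes P ≤ W * (Sm + n) := by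
    have : W * (Sm + n) = ∑ j ∈ Finset.range n, (W * ((natCol P j).card / W) + W) := by
      rw [Finset.sum_add_distrib, ← Finset.mul_sum, Finset.sum_const, Finset.card_range,
        smul_eq_mul]
      ring
    rw [this, hNsum]
    refine Finset.sum_le_sum fun j _ => ?_
    have h1 := Nat.div_add_mod (natCol P j).card W
    have h2 := Nat.mod_lt (natCol P j).card hWpos
    omega
  have hS2 : G * n ≤ 2 * (Sm + n) := by
    refine Nat.le_of_mul_le_mul_left (c := W) ?_ hWpos
    calc W * (G * n) = B * G * (D + 1) * n := by rw [hW]; ring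
      _ ≤ B * G * (D + 2) * n := by gcongr; omega
      _ ≤ 2 * permOnes P := hN
      _ ≤ 2 * (W * (Sm + n)) := by gcongr
      _ = _ := by ring
  have hbig : m * ((K * B) * (C * (alphaHier d m + 1) ^ p)) < Sm := by
    have h1 : m * ((K * B) * (C * (alphaHier d m + 1) ^ p)) ≤ 2 * n * (K * C * 4 ^ p) := by
      calc m * ((K * B) * (C * (alphaHier d m + 1) ^ p))
          ≤ m * ((K * B) * (C * 4 ^ p)) := by gcongr; omega
        _ = (m * B) * (K * C * 4 ^ p) := by ring
        _ ≤ _ := by gcongr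
    have h2 : (4 * (K * C * 4 ^ p) + 3) * n ≤ G * n := Nat.mul_le_mul_right _ hGbig
    have h3 : (4 * (K * C * 4 ^ p) + 3) * n = 2 * (2 * n * (K * C * 4 ^ p)) + 3 * n := by ring
    omega
  obtain ⟨J, hJn, hJr, g, hg, hJ⟩ := fat_formation (k + 1) C p (by omega) hG n d B (K * B) hd
    (by omega) (natCol P) (by
      intro j hj x hx
      simp only [natCol, hj, dif_pos] at hx
      obtain ⟨i, -, rfl⟩ := Finset.mem_image.1 hx
      exact i.2) hbig
  set JF : Finset (Fin n) := Finset.univ.filter (fun j : Fin n => (j : ℕ) ∈ J) with hJF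
  have hJFc : JF.card = K * B := by
    rw [← hJr, ← Finset.card_image_of_injective JF Fin.val_injective]
    congr 1
    ext x
    simp only [Finset.mem_image, hJF, Finset.mem_filter, Finset.mem_univ, true_and]
    constructor
    · rintro ⟨j, hj, rfl⟩; exact hj
    · intro hx; exact ⟨⟨x, Finset.mem_range.1 (hJn hx)⟩, hx, rfl⟩
  obtain ⟨P', hP'P, hcard, J', hJ'J, hJ'c, hJ'⟩ := selection k (K * B) P JF (fun x => g x) hP hVC
    (fun x y h => hg h) hJFc (Nat.mul_pos hKpos (by omega))
  refine ⟨P', hP'P, hcard, ?_⟩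
  have hBJ : B ≤ J'.card := Nat.le_of_mul_le_mul_left hJ'c hKpos
  refine le_trans (Nat.add_le_add_left (Nat.mul_le_mul_right B hBJ) _)
    (permOnes_drop P P' hP'P J' B fun j hj => ?_)
  obtain ⟨i, hi, hmiss⟩ := hJ' j hj
  have hfat := hJ j (Finset.mem_filter.1 (hJ'J hj)).2 i hi
  have hfat' : B ≤ ((colSet P j).filter (fun x : Fin n => g (x : ℕ) = i)).card := by
    refine hfat.trans ?_
    rw [← Finset.card_image_of_injective _ Fin.val_injective]
    refine Finset.card_le_card ?_
    intro x hx
    rw [Finset.mem_filter] at hx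
    have hx1 := hx.1
    simp only [natCol, j.2, dif_pos] at hx1
    obtain ⟨y, hy, rfl⟩ := Finset.mem_image.1 hx1
    exact Finset.mem_image.2 ⟨y, Finset.mem_filter.2 ⟨hy, hx.2⟩, rfl⟩
  have hdisj : Disjoint (colSet P' j) ((colSet P j).filter (fun x : Fin n => g (x : ℕ) = i)) := by
    rw [Finset.disjoint_left]
    intro x hx hx2
    obtain ⟨π, hπ, rfl⟩ := Finset.mem_image.1 hx
    exact hmiss π hπ (Finset.mem_filter.1 hx2).2
  calc (colSet P' j).card + B ≤ (colSet P' j).card +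
        ((colSet P j).filter (fun x : Fin n => g (x : ℕ) = i)).card := Nat.add_le_add_left hfat' _
    _ = (colSet P' j ∪ (colSet P j).filter (fun x : Fin n => g (x : ℕ) = i)).card :=
        (Finset.card_union_of_disjoint hdisj).symm
    _ ≤ _ := Finset.card_le_card (Finset.union_subset (Finset.image_subset_image hP'P)
        (Finset.filter_subset _ _))


/-- For every `k ≥ 1` there is a constant `γ₀ > 0` such that, setting
`γ_k(n) = γ₀·(β_{k+1}(n)+2)`, for every `n ≥ 1` and every nonempty family `P` of
`n`-permutations with VC-dimension at most `k` and `v(P) ≥ 2·γ_k(n)`, there is a subfamily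
`P′ ⊆ P` with `v(P′) ≤ v(P) − v(P)²/(γ_k(n)²·n)` and `|P′| ≥ |P|/(2·v(P)^(2k))`. -/
theorem iteration_lemma :
    ∀ k : ℕ, 1 ≤ k → ∃ γ₀ : ℝ, 0 < γ₀ ∧
      ∀ n : ℕ, 1 ≤ n → ∀ P : Finset (Equiv.Perm (Fin n)), P.Nonempty → VCDimLE n k P →
        2 * (γ₀ * ((betaFun (k + 1) n : ℝ) + 2)) ≤ vPerm P →
          ∃ P' : Finset (Equiv.Perm (Fin n)), P' ⊆ P ∧
            vPerm P' ≤ vPerm P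
              - (vPerm P) ^ 2 / ((γ₀ * ((betaFun (k + 1) n : ℝ) + 2)) ^ 2 * (n : ℝ)) ∧
            (P.card : ℝ) / (2 * (vPerm P) ^ (2 * k)) ≤ (P'.card : ℝ) := by

  intro k hk
  obtain ⟨C, p, hG⟩ := good_all ((_ : ℕ) × ℕ) k
  set K := (k + 1) ^ (k + 1) with hK
  set G : ℕ := 4 * (K * C * 4 ^ p) + 4 * K + 8 with hGdef
  refine ⟨(G : ℝ), by rw [hGdef]; positivity, ?_⟩
  intro n hn P hP hVC hv
  have hn0 : (0 : ℝ) < n := by exact_mod_cast hn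
  set b := betaFun (k + 1) n with hb
  set v := vPerm P with hvdef
  set γ : ℝ := (G : ℝ) * ((b : ℝ) + 2) with hγ
  have hvn : v * n = permOnes P := by
    rw [hvdef, vPerm]; field_simp
  have hones : permOnes P ≤ n * n := by
    rw [permOnes_eq]
    calc _ ≤ ∑ j : Fin n, n := Finset.sum_le_sum fun j _ => by
          have := Finset.card_le_univ (colSet P j)
          rwa [Fintype.card_fin] at this
      _ = n * n := by simp
  have hvle : v ≤ n := by
    have : (permOnes P : ℝ) ≤ (n : ℝ) * n := by exact_mod_cast hones
    rw [← hvn] at this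
    exact le_of_mul_le_mul_right this hn0
  have hG8 : (8 : ℝ) ≤ G := by
    have : 8 ≤ G := by rw [hGdef]; exact Nat.le_add_left _ _
    exact_mod_cast this
  have hGK : (4 : ℝ) * K ≤ G := by
    have : 4 * K ≤ G := by rw [hGdef]; omega
    exact_mod_cast this
  have hb0 : (0 : ℝ) ≤ b := Nat.cast_nonneg _
  have hγ16 : (16 : ℝ) ≤ γ := by rw [hγ]; nlinarith
  have hγG : (G : ℝ) ≤ γ := by rw [hγ]; nlinarith
  have hγ0 : 0 < γ := by linarith
  have hn7 : 7 ≤ n := by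
    have : (7 : ℝ) ≤ n := by linarith
    exact_mod_cast this
  set B := ⌈v / γ⌉₊ with hB
  have hB1 : v / γ ≤ B := Nat.le_ceil _
  have hq2 : 2 ≤ v / γ := by rw [le_div_iff₀ hγ0]; exact hv
  have hB2 : (B : ℝ) ≤ 2 * (v / γ) := by
    have := Nat.ceil_lt_add_one (show 0 ≤ v / γ by linarith)
    linarith
  have hBγ : (B : ℝ) * γ ≤ 2 * v := by
    calc (B : ℝ) * γ ≤ 2 * (v / γ) * γ := by gcongr
      _ = 2 * v := by field_simp
  have hBge : 2 ≤ B := by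
    have : (2 : ℝ) ≤ B := by linarith
    exact_mod_cast this
  have hB0 : (0 : ℝ) ≤ B := Nat.cast_nonneg _
  have hBn : B ≤ n := by
    have : (B : ℝ) ≤ n := by nlinarith
    exact_mod_cast this
  obtain ⟨P', hPP, hcard, hdrop⟩ := core k C p hk hG n B hn7 hBge hBn P hP hVC G
    (by rw [hGdef, ← hK]; omega) (by
      have : ((B * G * (b + 2) * n : ℕ) : ℝ) ≤ ((2 * permOnes P : ℕ) : ℝ) := by
        push_cast
        rw [← hvn]
        calc (B : ℝ) * G * (b + 2) * n = (B * γ) * n := by rw [hγ]; ring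
          _ ≤ (2 * v) * n := by gcongr
          _ = _ := by ring
      exact_mod_cast this)
  refine ⟨P', hPP, ?_, ?_⟩
  · have h1 : (permOnes P' : ℝ) + B * B ≤ permOnes P := by exact_mod_cast hdrop
    have h2 : v ^ 2 / (γ ^ 2 * n) = (v / γ) ^ 2 / n := by field_simp
    rw [h2, vPerm, div_le_iff₀ hn0, sub_mul, div_mul_cancel₀ _ hn0.ne', hvn]
    nlinarith
  · have hv1 : 1 ≤ v := by linarith
    have h3 : 2 * ((K : ℝ) * B) ≤ v ^ 2 := by
      have : 4 * K * (B : ℝ) ≤ γ * B := by gcongr; linarith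
      nlinarith
    have h4 : (2 * ((K : ℝ) * B)) ^ k ≤ v ^ (2 * k) := by
      rw [pow_mul]
      exact pow_le_pow_left₀ (by positivity) h3 k
    have h5 : (P.card : ℝ) ≤ P'.card * (2 * (2 * ((K : ℝ) * B)) ^ k) := by exact_mod_cast hcard
    rw [div_le_iff₀ (by positivity)]
    refine h5.trans ?_
    gcongr
end

section
/- There exists a constant C such that for every integer n ≥ 1 there exists an n×n (0,1)-matrix that avoids DS₄ and has at least 2·α(n) − C 1-entries in every column. -/
/-! ## Block configurations -/

namespace DSFour

/-- A finite configuration of columns `K` over an ordered set of rows `R`. -/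
structure Cfg (w m1 m2 F L : ℕ) where
  R : Type
  K : Type
  loR : LinearOrder R
  loK : LinearOrder K
  ftK : Fintype K
  rows : K → Finset R
  used : Finset R
  Fs : Finset R
  Ls : Finset R
  ff : K → R
  lf : K → R
  fr : K → Fin m1
  lr : K → Fin m2
  card_rows : ∀ k, (rows k).card = w
  rows_used : ∀ k, ∀ r ∈ rows k, r ∈ used
  Fs_used : ∀ r ∈ Fs, r ∈ used
  Ls_used : ∀ r ∈ Ls, r ∈ used
  card_Fs : Fs.card = F
  card_Ls : Ls.card = L
  disj : ∀ r ∈ Fs, r ∈ Ls → False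
  ff_mem : ∀ k, ff k ∈ Fs
  lf_mem : ∀ k, lf k ∈ Ls
  ff_rows : ∀ k, ff k ∈ rows k
  lf_rows : ∀ k, lf k ∈ rows k
  ff_le : ∀ k, ∀ r ∈ rows k, ff k ≤ r
  le_lf : ∀ k, ∀ r ∈ rows k, r ≤ lf k
  ff_only : ∀ k, ∀ r ∈ rows k, r ∈ Fs → ff k = r
  lf_only : ∀ k, ∀ r ∈ rows k, r ∈ Ls → lf k = r
  fr_lt : ∀ a b, a < b → ff a = ff b → fr a < fr b
  lr_lt : ∀ a b, a < b → lf a = lf b → lr a < lr b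
  not_both : ∀ a b, a < b → ff a = ff b → lf a = lf b → False
  tail : ∀ a b, a < b → ff a = ff b → ∀ r ∈ rows a, ∀ s ∈ rows b, ff a < s → s < r → False
  head : ∀ a b, a < b → lf a = lf b → ∀ r ∈ rows a, ∀ s ∈ rows b, r < lf a → s < r → False
  avoid : ∀ a b, a < b → ∀ s1 ∈ rows b, ∀ r1 ∈ rows a, ∀ s2 ∈ rows b, ∀ r2 ∈ rows a,
    s1 < r1 → r1 < s2 → s2 < r2 → False
  card_used : used.card + 2 ≤ 2 * (F + L)
  card_K1 : @Fintype.card K ftK = F * m1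
  card_K2 : @Fintype.card K ftK = L * m2

attribute [instance] Cfg.loR Cfg.loK Cfg.ftK

/-- Base grid configuration. -/
def base (m1 m2 : ℕ) (h : 2 ≤ m1 + m2) : Cfg 2 m1 m2 m2 m1 where
  R := Fin m2 ⊕ₗ Fin m1
  K := Fin m2 ×ₗ Fin m1
  loR := inferInstance
  loK := inferInstance
  ftK := inferInstanceAs (Fintype (Fin m2 × Fin m1))
  rows k := {toLex (Sum.inl (ofLex k).1), toLex (Sum.inr (ofLex k).2)}
  used := (Finset.univ : Finset (Fin m2 ⊕ Fin m1)).map toLex.toEmbedding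
  Fs := (Finset.univ : Finset (Fin m2)).map (Function.Embedding.inl.trans toLex.toEmbedding)
  Ls := (Finset.univ : Finset (Fin m1)).map (Function.Embedding.inr.trans toLex.toEmbedding)
  ff k := toLex (Sum.inl (ofLex k).1)
  lf k := toLex (Sum.inr (ofLex k).2)
  fr k := (ofLex k).2
  lr k := (ofLex k).1
  card_rows k := by rw [Finset.card_pair]; simp
  rows_used := by intro k r _; simp
  Fs_used := by intro r _; simp
  Ls_used := by intro r _; simp
  card_Fs := by simp
  card_Ls := by simp
  disj := by
    intro r hr h
    simp only [Finset.mem_map] at hr h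
    obtain ⟨a, -, rfl⟩ := hr
    simp at h
  ff_mem := by intro k; simp
  lf_mem := by intro k; simp
  ff_rows := by intro k; simp
  lf_rows := by intro k; simp
  ff_le := by
    intro k r hr
    simp only [Finset.mem_insert, Finset.mem_singleton] at hr
    rcases hr with rfl | rfl
    · exact le_rfl
    · exact (Sum.Lex.inl_lt_inr _ _).le
  le_lf := by
    intro k r hr
    simp only [Finset.mem_insert, Finset.mem_singleton] at hr
    rcases hr with rfl | rfl
    · exact (Sum.Lex.inl_lt_inr _ _).le
    · exact le_rfl
  ff_only := by
    intro k r hr h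
    simp only [Finset.mem_insert, Finset.mem_singleton] at hr
    rcases hr with rfl | rfl
    · rfl
    · simp at h
  lf_only := by
    intro k r hr h
    simp only [Finset.mem_insert, Finset.mem_singleton] at hr
    rcases hr with rfl | rfl
    · simp at h
    · rfl
  fr_lt := by
    intro a b hab h
    simp only [Prod.Lex.lt_iff, EmbeddingLike.apply_eq_iff_eq, Sum.inl.injEq] at hab h
    grind
  lr_lt := by
    intro a b hab h
    simp only [Prod.Lex.lt_iff, EmbeddingLike.apply_eq_iff_eq, Sum.inr.injEq] at hab h
    grind
  not_both := by
    intro a b hab h h'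
    simp only [Prod.Lex.lt_iff, EmbeddingLike.apply_eq_iff_eq, Sum.inr.injEq,
      Sum.inl.injEq] at hab h h'
    grind
  tail := by
    intro a b hab h r hr s hs
    simp only [Finset.mem_insert, Finset.mem_singleton] at hr hs
    simp only [Prod.Lex.lt_iff, EmbeddingLike.apply_eq_iff_eq, Sum.inl.injEq] at hab h
    rcases hr with rfl | rfl <;> rcases hs with rfl | rfl <;>
      simp [Sum.Lex.inl_lt_inr, h] <;> grind
  head := by
    intro a b hab h r hr s hs
    simp only [Finset.mem_insert, Finset.mem_singleton] at hr hs
    simp only [Prod.Lex.lt_iff, EmbeddingLike.apply_eq_iff_eq, Sum.inr.injEq] at hab h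
    rcases hr with rfl | rfl <;> rcases hs with rfl | rfl <;>
      simp [Sum.Lex.inl_lt_inr, h] <;> grind
  avoid := by
    intro a b hab s1 hs1 r1 hr1 s2 hs2 r2 hr2
    simp only [Finset.mem_insert, Finset.mem_singleton] at hs1 hr1 hs2 hr2
    simp only [Prod.Lex.lt_iff] at hab
    rcases hs1 with rfl | rfl <;> rcases hr1 with rfl | rfl <;> rcases hs2 with rfl | rfl <;>
      rcases hr2 with rfl | rfl <;>
      simp [Sum.Lex.inl_lt_inr] <;> grind
  card_used := by simp; omega
  card_K1 := by
    change Fintype.card (Fin m2 × Fin m1) = _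
    simp
  card_K2 := by
    change Fintype.card (Fin m2 × Fin m1) = _
    simp [mul_comm]

/-- Boundary configuration without columns, two first-rows. -/
def bdF (w m2 : ℕ) : Cfg w 0 m2 2 0 where
  R := Fin 2
  K := Fin 0
  loR := inferInstance
  loK := inferInstance
  ftK := inferInstance
  rows _ := ∅
  used := Finset.univ
  Fs := Finset.univ
  Ls := ∅
  ff k := k.elim0
  lf k := k.elim0
  fr k := k.elim0
  lr k := k.elim0
  card_rows k := k.elim0
  rows_used k := k.elim0
  Fs_used := by simp
  Ls_used := by simp
  card_Fs := by simp
  card_Ls := by simp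
  disj := by simp
  ff_mem k := k.elim0
  lf_mem k := k.elim0
  ff_rows k := k.elim0
  lf_rows k := k.elim0
  ff_le k := k.elim0
  le_lf k := k.elim0
  ff_only k := k.elim0
  lf_only k := k.elim0
  fr_lt k := k.elim0
  lr_lt k := k.elim0
  not_both k := k.elim0
  tail k := k.elim0
  head k := k.elim0
  avoid k := k.elim0
  card_used := by simp
  card_K1 := by simp
  card_K2 := by simp

/-- Boundary configuration without columns, two last-rows. -/
def bdL (w m1 : ℕ) : Cfg w m1 0 0 2 where
  R := Fin 2
  K := Fin 0
  loR := inferInstance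
  loK := inferInstance
  ftK := inferInstance
  rows _ := ∅
  used := Finset.univ
  Fs := ∅
  Ls := Finset.univ
  ff k := k.elim0
  lf k := k.elim0
  fr k := k.elim0
  lr k := k.elim0
  card_rows k := k.elim0
  rows_used k := k.elim0
  Fs_used := by simp
  Ls_used := by simp
  card_Fs := by simp
  card_Ls := by simp
  disj := by simp
  ff_mem k := k.elim0
  lf_mem k := k.elim0
  ff_rows k := k.elim0
  lf_rows k := k.elim0
  ff_le k := k.elim0
  le_lf k := k.elim0
  ff_only k := k.elim0
  lf_only k := k.elim0
  fr_lt k := k.elim0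
  lr_lt k := k.elim0
  not_both k := k.elim0
  tail k := k.elim0
  head k := k.elim0
  avoid k := k.elim0
  card_used := by simp
  card_K1 := by simp
  card_K2 := by simp

/-! ## Ordered types used in the inductive step -/

section Types

/-- Rows of the composed configuration. -/
abbrev RR (X Y Z : Type) : Type := X ×ₗ (Y ⊕ₗ (Unit ⊕ₗ Z))

variable {X Y Z : Type}

/-- Row `y` of the copy placed before row `x`. -/
def fc (x : X) (y : Y) : RR X Y Z := toLex (x, toLex (Sum.inl y))
/-- The old row `x`. -/
def md (x : X) : RR X Y Z := toLex (x, toLex (Sum.inr (toLex (Sum.inl ()))))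
/-- Row `z` of the copy placed after row `x`. -/
def lc (x : X) (z : Z) : RR X Y Z := toLex (x, toLex (Sum.inr (toLex (Sum.inr z))))

theorem fc_inj (x x' : X) (y y' : Y) :
    (fc x y : RR X Y Z) = fc x' y' ↔ x = x' ∧ y = y' := by simp [fc]
theorem md_inj (x x' : X) : (md x : RR X Y Z) = md x' ↔ x = x' := by simp [md]
theorem lc_inj (x x' : X) (y y' : Z) :
    (lc x y : RR X Y Z) = lc x' y' ↔ x = x' ∧ y = y' := by simp [lc]
theorem fc_md (x x' : X) (y : Y) : (fc x y : RR X Y Z) = md x' ↔ False := by simp [fc, md]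
theorem md_fc (x x' : X) (y : Y) : (md x' : RR X Y Z) = fc x y ↔ False := by simp [fc, md]
theorem fc_lc (x x' : X) (y : Y) (z : Z) : (fc x y : RR X Y Z) = lc x' z ↔ False := by
  simp [fc, lc]
theorem lc_fc (x x' : X) (y : Y) (z : Z) : (lc x' z : RR X Y Z) = fc x y ↔ False := by
  simp [fc, lc]
theorem md_lc (x x' : X) (z : Z) : (md x : RR X Y Z) = lc x' z ↔ False := by simp [md, lc]
theorem lc_md (x x' : X) (z : Z) : (lc x' z : RR X Y Z) = md x ↔ False := by simp [md, lc]

variable [LinearOrder X] [LinearOrder Y] [LinearOrder Z]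

theorem fc_lt_fc (x x' : X) (y y' : Y) :
    (fc x y : RR X Y Z) < fc x' y' ↔ x < x' ∨ x = x' ∧ y < y' := by
  simp [fc, Prod.Lex.toLex_lt_toLex]
theorem fc_lt_md (x x' : X) (y : Y) :
    (fc x y : RR X Y Z) < md x' ↔ x < x' ∨ x = x' := by
  simp [fc, md, Prod.Lex.toLex_lt_toLex]
theorem fc_lt_lc (x x' : X) (y : Y) (z : Z) :
    (fc x y : RR X Y Z) < lc x' z ↔ x < x' ∨ x = x' := by
  simp [fc, lc, Prod.Lex.toLex_lt_toLex]
theorem md_lt_fc (x x' : X) (y : Y) :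
    (md x : RR X Y Z) < fc x' y ↔ x < x' := by
  simp [fc, md, Prod.Lex.toLex_lt_toLex]
theorem md_lt_md (x x' : X) :
    (md x : RR X Y Z) < md x' ↔ x < x' := by
  simp [md, Prod.Lex.toLex_lt_toLex]
theorem md_lt_lc (x x' : X) (z : Z) :
    (md x : RR X Y Z) < lc x' z ↔ x < x' ∨ x = x' := by
  simp [lc, md, Prod.Lex.toLex_lt_toLex]
theorem lc_lt_fc (x x' : X) (y : Y) (z : Z) :
    (lc x z : RR X Y Z) < fc x' y ↔ x < x' := by
  simp [fc, lc, Prod.Lex.toLex_lt_toLex]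
theorem lc_lt_md (x x' : X) (z : Z) :
    (lc x z : RR X Y Z) < md x' ↔ x < x' := by
  simp [lc, md, Prod.Lex.toLex_lt_toLex]
theorem lc_lt_lc (x x' : X) (z z' : Z) :
    (lc x z : RR X Y Z) < lc x' z' ↔ x < x' ∨ x = x' ∧ z < z' := by
  simp [lc, Prod.Lex.toLex_lt_toLex]

/-- Columns of the composed configuration. -/
abbrev KK (S A B T C : Type) : Type := (S ×ₗ A) ⊕ₗ (B ⊕ₗ (T ×ₗ C))

variable {S A B T C : Type}

/-- Column in a copy placed before. -/
def kf (s : S) (a : A) : KK S A B T C := toLex (Sum.inl (toLex (s, a)))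
/-- Old column. -/
def km (b : B) : KK S A B T C := toLex (Sum.inr (toLex (Sum.inl b)))
/-- Column in a copy placed after. -/
def kl (t : T) (c : C) : KK S A B T C := toLex (Sum.inr (toLex (Sum.inr (toLex (t, c)))))

/-- Case analysis on columns. -/
def kcase {β : Type} (f : S → A → β) (g : B → β) (h : T → C → β) (k : KK S A B T C) : β :=
  match ofLex k with
  | Sum.inl p => f (ofLex p).1 (ofLex p).2
  | Sum.inr q =>
    match ofLex q with
    | Sum.inl b => g b
    | Sum.inr p => h (ofLex p).1 (ofLex p).2

theorem kcase_kf {β : Type} (f : S → A → β) (g : B → β) (h : T → C → β) (s : S) (a : A) :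
    kcase f g h (kf s a) = f s a := rfl
theorem kcase_km {β : Type} (f : S → A → β) (g : B → β) (h : T → C → β) (b : B) :
    kcase f g h (km b) = g b := rfl
theorem kcase_kl {β : Type} (f : S → A → β) (g : B → β) (h : T → C → β) (s : T) (a : C) :
    kcase f g h (kl s a) = h s a := rfl

theorem kk_cases (k : KK S A B T C) :
    (∃ s a, k = kf s a) ∨ (∃ b, k = km b) ∨ (∃ t c, k = kl t c) := by
  rcases k with p | (b | p)
  · exact Or.inl ⟨(ofLex p).1, (ofLex p).2, rfl⟩
  · exact Or.inr (Or.inl ⟨b, rfl⟩)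
  · exact Or.inr (Or.inr ⟨(ofLex p).1, (ofLex p).2, rfl⟩)

variable [LinearOrder S] [LinearOrder A] [LinearOrder B] [LinearOrder T] [LinearOrder C]

theorem kf_lt_kf (s s' : S) (a a' : A) :
    (kf s a : KK S A B T C) < kf s' a' ↔ s < s' ∨ s = s' ∧ a < a' := by
  simp [kf, Prod.Lex.toLex_lt_toLex]
theorem kf_lt_km (s : S) (a : A) (b : B) : (kf s a : KK S A B T C) < km b ↔ True := by
  simp [kf, km]
theorem kf_lt_kl (s : S) (a : A) (t : T) (c : C) : (kf s a : KK S A B T C) < kl t c ↔ True := by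
  simp [kf, kl]
theorem km_lt_kf (s : S) (a : A) (b : B) : (km b : KK S A B T C) < kf s a ↔ False := by
  simp [kf, km]
theorem km_lt_km (b b' : B) : (km b : KK S A B T C) < km b' ↔ b < b' := by
  simp [km]
theorem km_lt_kl (b : B) (t : T) (c : C) : (km b : KK S A B T C) < kl t c ↔ True := by
  simp [km, kl]
theorem kl_lt_kf (s : S) (a : A) (t : T) (c : C) : (kl t c : KK S A B T C) < kf s a ↔ False := by
  simp [kf, kl]
theorem kl_lt_km (b : B) (t : T) (c : C) : (kl t c : KK S A B T C) < km b ↔ False := by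
  simp [km, kl]
theorem kl_lt_kl (s s' : T) (a a' : C) :
    (kl s a : KK S A B T C) < kl s' a' ↔ s < s' ∨ s = s' ∧ a < a' := by
  simp [kl, Prod.Lex.toLex_lt_toLex]

end Types

/-! ## The inductive step -/

section Step

variable {w m1 m2 f1 l1 f2 l2 F L : ℕ} (C0 : Cfg w f1 l2 F L) (C1 : Cfg (w + 2) m1 (m2 + 1) f1 l1)
  (C2 : Cfg (w + 2) (m1 + 1) m2 f2 l2)

/-- Rows of the new configuration. -/
abbrev SR : Type := RR C0.R C1.R C2.R
/-- Columns of the new configuration. -/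
abbrev SK : Type := KK {r // r ∈ C0.Fs} C1.K C0.K {r // r ∈ C0.Ls} C2.K

/-- Row of the first copy into which an old column is inserted. -/
def insF (k : C0.K) : C1.R := C1.Fs.orderEmbOfFin C1.card_Fs (C0.fr k)
/-- Row of the last copy into which an old column is inserted. -/
def insL (k : C0.K) : C2.R := C2.Ls.orderEmbOfFin C2.card_Ls (C0.lr k)

theorem insF_mem (k : C0.K) : insF C0 C1 k ∈ C1.Fs := Finset.orderEmbOfFin_mem _ _ _
theorem insL_mem (k : C0.K) : insL C0 C2 k ∈ C2.Ls := Finset.orderEmbOfFin_mem _ _ _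
theorem insF_lt (a b : C0.K) (h : C0.fr a < C0.fr b) : insF C0 C1 a < insF C0 C1 b :=
  (C1.Fs.orderEmbOfFin C1.card_Fs).strictMono h
theorem insL_lt (a b : C0.K) (h : C0.lr a < C0.lr b) : insL C0 C2 a < insL C0 C2 b :=
  (C2.Ls.orderEmbOfFin C2.card_Ls).strictMono h

/-- Embedding of rows. -/
def fcE : C0.R × C1.R ↪ SR C0 C1 C2 :=
  ⟨fun p => fc p.1 p.2, fun _ _ h => Prod.ext_iff.2 ((fc_inj _ _ _ _).1 h)⟩
/-- Embedding of rows. -/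
def lcE : C0.R × C2.R ↪ SR C0 C1 C2 :=
  ⟨fun p => lc p.1 p.2, fun _ _ h => Prod.ext_iff.2 ((lc_inj _ _ _ _).1 h)⟩
/-- Embedding of rows. -/
def mdE : C0.R ↪ SR C0 C1 C2 := ⟨md, fun _ _ h => (md_inj _ _).1 h⟩
/-- Embedding of rows. -/
def fcE1 (x : C0.R) : C1.R ↪ SR C0 C1 C2 := ⟨fc x, fun _ _ h => ((fc_inj _ _ _ _).1 h).2⟩
/-- Embedding of rows. -/
def lcE1 (x : C0.R) : C2.R ↪ SR C0 C1 C2 := ⟨lc x, fun _ _ h => ((lc_inj _ _ _ _).1 h).2⟩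

theorem fcE_apply (p : C0.R × C1.R) : fcE C0 C1 C2 p = fc p.1 p.2 := rfl
theorem lcE_apply (p : C0.R × C2.R) : lcE C0 C1 C2 p = lc p.1 p.2 := rfl
theorem mdE_apply (p : C0.R) : mdE C0 C1 C2 p = md p := rfl
theorem fcE1_apply (x : C0.R) (y : C1.R) : fcE1 C0 C1 C2 x y = fc x y := rfl
theorem lcE1_apply (x : C0.R) (y : C2.R) : lcE1 C0 C1 C2 x y = lc x y := rfl

/-- Rows of an old column. -/
def srM (b : C0.K) : Finset (SR C0 C1 C2) :=
  insert (fc (C0.ff b) (insF C0 C1 b))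
    (insert (lc (C0.lf b) (insL C0 C2 b)) ((C0.rows b).map (mdE C0 C1 C2)))

/-- Rows of a new column. -/
def srows : SK C0 C1 C2 → Finset (SR C0 C1 C2) :=
  kcase (fun s a => (C1.rows a).map (fcE1 C0 C1 C2 s.1)) (srM C0 C1 C2)
    (fun t c => (C2.rows c).map (lcE1 C0 C1 C2 t.1))

/-- First rows. -/
def sff : SK C0 C1 C2 → SR C0 C1 C2 :=
  kcase (fun s a => fc s.1 (C1.ff a)) (fun b => fc (C0.ff b) (insF C0 C1 b))
    (fun t c => lc t.1 (C2.ff c))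
/-- Last rows. -/
def slf : SK C0 C1 C2 → SR C0 C1 C2 :=
  kcase (fun s a => fc s.1 (C1.lf a)) (fun b => lc (C0.lf b) (insL C0 C2 b))
    (fun t c => lc t.1 (C2.lf c))
/-- Ranks. -/
def sfr : SK C0 C1 C2 → Fin (m1 + 1) :=
  kcase (fun _ a => (C1.fr a).castSucc) (fun _ => Fin.last m1) (fun _ c => C2.fr c)
/-- Ranks. -/
def slr : SK C0 C1 C2 → Fin (m2 + 1) :=
  kcase (fun _ a => C1.lr a) (fun _ => 0) (fun _ c => (C2.lr c).succ)
/-- Set of first rows. -/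
def sFs : Finset (SR C0 C1 C2) :=
  (C0.Fs ×ˢ C1.Fs).map (fcE C0 C1 C2) ∪ (C0.Ls ×ˢ C2.Fs).map (lcE C0 C1 C2)
/-- Set of last rows. -/
def sLs : Finset (SR C0 C1 C2) :=
  (C0.Fs ×ˢ C1.Ls).map (fcE C0 C1 C2) ∪ (C0.Ls ×ˢ C2.Ls).map (lcE C0 C1 C2)
/-- Set of used rows. -/
def sused : Finset (SR C0 C1 C2) :=
  (C0.Fs ×ˢ C1.used).map (fcE C0 C1 C2) ∪
    (C0.used.map (mdE C0 C1 C2) ∪ (C0.Ls ×ˢ C2.used).map (lcE C0 C1 C2))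

theorem mem_srows_f (s : {r // r ∈ C0.Fs}) (a : C1.K) (ρ : SR C0 C1 C2) :
    ρ ∈ srows C0 C1 C2 (kf s a) ↔ ∃ r ∈ C1.rows a, ρ = fc s.1 r := by
  simp [srows, kcase_kf, fcE1_apply, eq_comm]
theorem mem_srows_l (s : {r // r ∈ C0.Ls}) (a : C2.K) (ρ : SR C0 C1 C2) :
    ρ ∈ srows C0 C1 C2 (kl s a) ↔ ∃ r ∈ C2.rows a, ρ = lc s.1 r := by
  simp [srows, kcase_kl, lcE1_apply, eq_comm]
theorem mem_srows_m (b : C0.K) (ρ : SR C0 C1 C2) :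
    ρ ∈ srows C0 C1 C2 (km b) ↔ ρ = fc (C0.ff b) (insF C0 C1 b) ∨
      ρ = lc (C0.lf b) (insL C0 C2 b) ∨ ∃ r ∈ C0.rows b, ρ = md r := by
  simp [srows, kcase_km, srM, mdE_apply, eq_comm]

theorem fc_mem_sFs (x : C0.R) (y : C1.R) : fc x y ∈ sFs C0 C1 C2 ↔ x ∈ C0.Fs ∧ y ∈ C1.Fs := by
  simp [sFs, fcE_apply, lcE_apply, fc_inj, lc_fc]
theorem md_mem_sFs (x : C0.R) : md x ∈ sFs C0 C1 C2 ↔ False := by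
  simp [sFs, fcE_apply, lcE_apply, fc_md, lc_md]
theorem lc_mem_sFs (x : C0.R) (y : C2.R) : lc x y ∈ sFs C0 C1 C2 ↔ x ∈ C0.Ls ∧ y ∈ C2.Fs := by
  simp [sFs, fcE_apply, lcE_apply, lc_inj, fc_lc]
theorem fc_mem_sLs (x : C0.R) (y : C1.R) : fc x y ∈ sLs C0 C1 C2 ↔ x ∈ C0.Fs ∧ y ∈ C1.Ls := by
  simp [sLs, fcE_apply, lcE_apply, fc_inj, lc_fc]
theorem md_mem_sLs (x : C0.R) : md x ∈ sLs C0 C1 C2 ↔ False := by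
  simp [sLs, fcE_apply, lcE_apply, fc_md, lc_md]
theorem lc_mem_sLs (x : C0.R) (y : C2.R) : lc x y ∈ sLs C0 C1 C2 ↔ x ∈ C0.Ls ∧ y ∈ C2.Ls := by
  simp [sLs, fcE_apply, lcE_apply, lc_inj, fc_lc]
theorem fc_mem_sused (x : C0.R) (y : C1.R) :
    fc x y ∈ sused C0 C1 C2 ↔ x ∈ C0.Fs ∧ y ∈ C1.used := by
  simp [sused, fcE_apply, lcE_apply, mdE_apply, fc_inj, lc_fc, md_fc]
theorem md_mem_sused (x : C0.R) : md x ∈ sused C0 C1 C2 ↔ x ∈ C0.used := by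
  simp [sused, fcE_apply, lcE_apply, mdE_apply, fc_md, lc_md, md_inj]
theorem lc_mem_sused (x : C0.R) (y : C2.R) :
    lc x y ∈ sused C0 C1 C2 ↔ x ∈ C0.Ls ∧ y ∈ C2.used := by
  simp [sused, fcE_apply, lcE_apply, mdE_apply, lc_inj, fc_lc, md_lc]

theorem rr_cases {X Y Z : Type} (ρ : RR X Y Z) :
    (∃ x y, ρ = fc x y) ∨ (∃ x, ρ = md x) ∨ (∃ x z, ρ = lc x z) := by
  rcases ρ with ⟨x, y | (⟨⟩ | z)⟩
  · exact Or.inl ⟨x, y, rfl⟩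
  · exact Or.inr (Or.inl ⟨x, rfl⟩)
  · exact Or.inr (Or.inr ⟨x, z, rfl⟩)

theorem step_card_rows (k : SK C0 C1 C2) : (srows C0 C1 C2 k).card = w + 2 := by
  rcases kk_cases k with ⟨s, a, rfl⟩ | ⟨b, rfl⟩ | ⟨s, a, rfl⟩
  · simp [srows, kcase_kf, C1.card_rows]
  · rw [srows, kcase_km, srM, Finset.card_insert_of_notMem, Finset.card_insert_of_notMem,
      Finset.card_map, C0.card_rows]
    · simp [mdE_apply, md_lc]
    · simp [mdE_apply, md_fc, fc_lc]
  · simp [srows, kcase_kl, C2.card_rows]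

theorem step_rows_used (k : SK C0 C1 C2) : ∀ r ∈ srows C0 C1 C2 k, r ∈ sused C0 C1 C2 := by
  intro r hr
  rcases kk_cases k with ⟨s, a, rfl⟩ | ⟨b, rfl⟩ | ⟨s, a, rfl⟩
  · obtain ⟨x, hx, rfl⟩ := (mem_srows_f _ _ _ _ _ _).1 hr
    exact (fc_mem_sused _ _ _ _ _).2 ⟨s.2, C1.rows_used _ _ hx⟩
  · rcases (mem_srows_m _ _ _ _ _).1 hr with rfl | rfl | ⟨x, hx, rfl⟩
    · exact (fc_mem_sused _ _ _ _ _).2 ⟨C0.ff_mem _, C1.Fs_used _ (insF_mem _ _ _)⟩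
    · exact (lc_mem_sused _ _ _ _ _).2 ⟨C0.lf_mem _, C2.Ls_used _ (insL_mem _ _ _)⟩
    · exact (md_mem_sused _ _ _ _).2 (C0.rows_used _ _ hx)
  · obtain ⟨x, hx, rfl⟩ := (mem_srows_l _ _ _ _ _ _).1 hr
    exact (lc_mem_sused _ _ _ _ _).2 ⟨s.2, C2.rows_used _ _ hx⟩

theorem step_Fs_used : ∀ r ∈ sFs C0 C1 C2, r ∈ sused C0 C1 C2 := by
  intro r hr
  rcases rr_cases r with ⟨x, y, rfl⟩ | ⟨x, rfl⟩ | ⟨x, y, rfl⟩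
  · rw [fc_mem_sFs] at hr
    exact (fc_mem_sused _ _ _ _ _).2 ⟨hr.1, C1.Fs_used _ hr.2⟩
  · exact ((md_mem_sFs _ _ _ _).1 hr).elim
  · rw [lc_mem_sFs] at hr
    exact (lc_mem_sused _ _ _ _ _).2 ⟨hr.1, C2.Fs_used _ hr.2⟩

theorem step_Ls_used : ∀ r ∈ sLs C0 C1 C2, r ∈ sused C0 C1 C2 := by
  intro r hr
  rcases rr_cases r with ⟨x, y, rfl⟩ | ⟨x, rfl⟩ | ⟨x, y, rfl⟩
  · rw [fc_mem_sLs] at hr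
    exact (fc_mem_sused _ _ _ _ _).2 ⟨hr.1, C1.Ls_used _ hr.2⟩
  · exact ((md_mem_sLs _ _ _ _).1 hr).elim
  · rw [lc_mem_sLs] at hr
    exact (lc_mem_sused _ _ _ _ _).2 ⟨hr.1, C2.Ls_used _ hr.2⟩

theorem step_card_Fs : (sFs C0 C1 C2).card = F * f1 + L * f2 := by
  rw [sFs, Finset.card_union_of_disjoint]
  · simp [C0.card_Fs, C0.card_Ls, C1.card_Fs, C2.card_Fs]
  · rw [Finset.disjoint_left]
    simp only [Finset.mem_map, fcE_apply, lcE]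
    rintro _ ⟨p, -, rfl⟩ ⟨q, -, h⟩
    exact (lc_fc _ _ _ _).1 h

theorem step_card_Ls : (sLs C0 C1 C2).card = F * l1 + L * l2 := by
  rw [sLs, Finset.card_union_of_disjoint]
  · simp [C0.card_Fs, C0.card_Ls, C1.card_Ls, C2.card_Ls]
  · rw [Finset.disjoint_left]
    simp only [Finset.mem_map, fcE_apply, lcE]
    rintro _ ⟨p, -, rfl⟩ ⟨q, -, h⟩
    exact (lc_fc _ _ _ _).1 h

theorem step_disj : ∀ r ∈ sFs C0 C1 C2, r ∈ sLs C0 C1 C2 → False := by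
  intro r hr h
  rcases rr_cases r with ⟨x, y, rfl⟩ | ⟨x, rfl⟩ | ⟨x, y, rfl⟩
  · rw [fc_mem_sFs] at hr
    rw [fc_mem_sLs] at h
    exact C1.disj _ hr.2 h.2
  · exact ((md_mem_sFs _ _ _ _).1 hr).elim
  · rw [lc_mem_sFs] at hr
    rw [lc_mem_sLs] at h
    exact C2.disj _ hr.2 h.2

theorem step_card_used : (sused C0 C1 C2).card + 2 ≤ 2 * (F * f1 + L * f2 + (F * l1 + L * l2)) := by
  have h1 : (sused C0 C1 C2).card ≤ F * C1.used.card + (C0.used.card + L * C2.used.card) := by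
    refine (Finset.card_union_le _ _).trans ?_
    refine add_le_add (by simp [C0.card_Fs]) ?_
    refine (Finset.card_union_le _ _).trans ?_
    simp [C0.card_Ls]
  have h2 := C0.card_used
  have h3 := Nat.mul_le_mul_left F C1.card_used
  have h4 := Nat.mul_le_mul_left L C2.card_used
  nlinarith

theorem card_SK (hF : Fintype (SK C0 C1 C2)) : @Fintype.card (SK C0 C1 C2) hF =
    F * Fintype.card C1.K + (Fintype.card C0.K + L * Fintype.card C2.K) := by
  have e : SK C0 C1 C2 ≃ ({r // r ∈ C0.Fs} × C1.K) ⊕ (C0.K ⊕ ({r // r ∈ C0.Ls} × C2.K)) :=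
    (ofLex.trans (Equiv.sumCongr ofLex (ofLex.trans (Equiv.sumCongr (Equiv.refl _) ofLex))))
  rw [Fintype.card_congr e]
  simp [C0.card_Fs, C0.card_Ls]

theorem step_ff_le (k : SK C0 C1 C2) : ∀ r ∈ srows C0 C1 C2 k, sff C0 C1 C2 k ≤ r := by
  intro r hr
  rw [← not_lt]
  rcases kk_cases k with ⟨s, a, rfl⟩ | ⟨b, rfl⟩ | ⟨s, a, rfl⟩
  · obtain ⟨x, hx, rfl⟩ := (mem_srows_f _ _ _ _ _ _).1 hr
    have := C1.ff_le _ _ hx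
    simp only [sff, kcase_kf, fc_lt_fc]; grind
  · have h1 := C0.ff_le _ _ (C0.lf_rows b)
    rcases (mem_srows_m _ _ _ _ _).1 hr with rfl | rfl | ⟨x, hx, rfl⟩
    · simp [sff, kcase_km]
    · simp only [sff, kcase_km, lc_lt_fc]; grind
    · have := C0.ff_le _ _ hx
      simp only [sff, kcase_km, md_lt_fc]; grind
  · obtain ⟨x, hx, rfl⟩ := (mem_srows_l _ _ _ _ _ _).1 hr
    have := C2.ff_le _ _ hx
    simp only [sff, kcase_kl, lc_lt_lc]; grind

theorem step_le_lf (k : SK C0 C1 C2) : ∀ r ∈ srows C0 C1 C2 k, r ≤ slf C0 C1 C2 k := by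
  intro r hr
  rw [← not_lt]
  rcases kk_cases k with ⟨s, a, rfl⟩ | ⟨b, rfl⟩ | ⟨s, a, rfl⟩
  · obtain ⟨x, hx, rfl⟩ := (mem_srows_f _ _ _ _ _ _).1 hr
    have := C1.le_lf _ _ hx
    simp only [slf, kcase_kf, fc_lt_fc]; grind
  · have h1 := C0.ff_le _ _ (C0.lf_rows b)
    rcases (mem_srows_m _ _ _ _ _).1 hr with rfl | rfl | ⟨x, hx, rfl⟩
    · simp only [slf, kcase_km, lc_lt_fc]; grind
    · simp [slf, kcase_km]
    · have := C0.le_lf _ _ hx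
      simp only [slf, kcase_km, lc_lt_md]; grind
  · obtain ⟨x, hx, rfl⟩ := (mem_srows_l _ _ _ _ _ _).1 hr
    have := C2.le_lf _ _ hx
    simp only [slf, kcase_kl, lc_lt_lc]; grind

theorem step_ff_only (k : SK C0 C1 C2) :
    ∀ r ∈ srows C0 C1 C2 k, r ∈ sFs C0 C1 C2 → sff C0 C1 C2 k = r := by
  intro r hr h
  rcases kk_cases k with ⟨s, a, rfl⟩ | ⟨b, rfl⟩ | ⟨s, a, rfl⟩
  · obtain ⟨x, hx, rfl⟩ := (mem_srows_f _ _ _ _ _ _).1 hr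
    rw [fc_mem_sFs] at h
    simp only [sff, kcase_kf, C1.ff_only _ _ hx h.2]
  · rcases (mem_srows_m _ _ _ _ _).1 hr with rfl | rfl | ⟨x, hx, rfl⟩
    · simp only [sff, kcase_km]
    · rw [lc_mem_sFs] at h
      exact (C2.disj _ h.2 (insL_mem _ _ _)).elim
    · exact ((md_mem_sFs _ _ _ _).1 h).elim
  · obtain ⟨x, hx, rfl⟩ := (mem_srows_l _ _ _ _ _ _).1 hr
    rw [lc_mem_sFs] at h
    simp only [sff, kcase_kl, C2.ff_only _ _ hx h.2]

theorem step_lf_only (k : SK C0 C1 C2) :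
    ∀ r ∈ srows C0 C1 C2 k, r ∈ sLs C0 C1 C2 → slf C0 C1 C2 k = r := by
  intro r hr h
  rcases kk_cases k with ⟨s, a, rfl⟩ | ⟨b, rfl⟩ | ⟨s, a, rfl⟩
  · obtain ⟨x, hx, rfl⟩ := (mem_srows_f _ _ _ _ _ _).1 hr
    rw [fc_mem_sLs] at h
    simp only [slf, kcase_kf, C1.lf_only _ _ hx h.2]
  · rcases (mem_srows_m _ _ _ _ _).1 hr with rfl | rfl | ⟨x, hx, rfl⟩
    · rw [fc_mem_sLs] at h
      exact (C1.disj _ (insF_mem _ _ _) h.2).elim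
    · simp only [slf, kcase_km]
    · exact ((md_mem_sLs _ _ _ _).1 h).elim
  · obtain ⟨x, hx, rfl⟩ := (mem_srows_l _ _ _ _ _ _).1 hr
    rw [lc_mem_sLs] at h
    simp only [slf, kcase_kl, C2.lf_only _ _ hx h.2]

/-- Old columns sharing a first row get distinct insertion rows. -/
theorem insF_inj (a b : C0.K) (hab : a < b) (h : C0.ff a = C0.ff b)
    (heq : insF C0 C1 a = insF C0 C1 b) : False :=
  (insF_lt C0 C1 a b (C0.fr_lt _ _ hab h)).ne heq
theorem insL_inj (a b : C0.K) (hab : a < b) (h : C0.lf a = C0.lf b)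
    (heq : insL C0 C2 a = insL C0 C2 b) : False :=
  (insL_lt C0 C2 a b (C0.lr_lt _ _ hab h)).ne heq

/-- Description of pairs of new columns sharing a first row. -/
theorem share_F (a b : SK C0 C1 C2) (hab : a < b) (h : sff C0 C1 C2 a = sff C0 C1 C2 b) :
    (∃ s x y, a = kf s x ∧ b = kf s y ∧ x < y ∧ C1.ff x = C1.ff y) ∨
    (∃ s x y, a = kf s x ∧ b = km y ∧ s.1 = C0.ff y ∧ C1.ff x = insF C0 C1 y) ∨
    (∃ s x y, a = kl s x ∧ b = kl s y ∧ x < y ∧ C2.ff x = C2.ff y) := by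
  rcases kk_cases a with ⟨s, x, rfl⟩ | ⟨x, rfl⟩ | ⟨s, x, rfl⟩ <;>
  rcases kk_cases b with ⟨t, y, rfl⟩ | ⟨y, rfl⟩ | ⟨t, y, rfl⟩ <;>
  simp only [sff, kcase_kf, kcase_km, kcase_kl, fc_inj, lc_inj, fc_lc, lc_fc, kf_lt_kf, kf_lt_km,
    kf_lt_kl, km_lt_kf, km_lt_km, km_lt_kl, kl_lt_kf, kl_lt_km, kl_lt_kl] at hab h
  · obtain ⟨h1, h2⟩ := h
    obtain rfl := Subtype.ext h1
    simp only [lt_irrefl, true_and, false_or] at hab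
    exact Or.inl ⟨s, x, y, rfl, rfl, hab, h2⟩
  · exact Or.inr (Or.inl ⟨s, x, y, rfl, rfl, h⟩)
  · exact (insF_inj _ _ _ _ hab h.1 h.2).elim
  · obtain ⟨h1, h2⟩ := h
    obtain rfl := Subtype.ext h1
    simp only [lt_irrefl, true_and, false_or] at hab
    exact Or.inr (Or.inr ⟨s, x, y, rfl, rfl, hab, h2⟩)

/-- Description of pairs of new columns sharing a last row. -/
theorem share_L (a b : SK C0 C1 C2) (hab : a < b) (h : slf C0 C1 C2 a = slf C0 C1 C2 b) :
    (∃ s x y, a = kf s x ∧ b = kf s y ∧ x < y ∧ C1.lf x = C1.lf y) ∨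
    (∃ s x y, a = km x ∧ b = kl s y ∧ C0.lf x = s.1 ∧ insL C0 C2 x = C2.lf y) ∨
    (∃ s x y, a = kl s x ∧ b = kl s y ∧ x < y ∧ C2.lf x = C2.lf y) := by
  rcases kk_cases a with ⟨s, x, rfl⟩ | ⟨x, rfl⟩ | ⟨s, x, rfl⟩ <;>
  rcases kk_cases b with ⟨t, y, rfl⟩ | ⟨y, rfl⟩ | ⟨t, y, rfl⟩ <;>
  simp only [slf, kcase_kf, kcase_km, kcase_kl, fc_inj, lc_inj, fc_lc, lc_fc, kf_lt_kf, kf_lt_km,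
    kf_lt_kl, km_lt_kf, km_lt_km, km_lt_kl, kl_lt_kf, kl_lt_km, kl_lt_kl] at hab h
  · obtain ⟨h1, h2⟩ := h
    obtain rfl := Subtype.ext h1
    simp only [lt_irrefl, true_and, false_or] at hab
    exact Or.inl ⟨s, x, y, rfl, rfl, hab, h2⟩
  · exact (insL_inj _ _ _ _ hab h.1 h.2).elim
  · exact Or.inr (Or.inl ⟨t, x, y, rfl, rfl, h⟩)
  · obtain ⟨h1, h2⟩ := h
    obtain rfl := Subtype.ext h1
    simp only [lt_irrefl, true_and, false_or] at hab
    exact Or.inr (Or.inr ⟨s, x, y, rfl, rfl, hab, h2⟩)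

theorem step_fr_lt (a b : SK C0 C1 C2) (hab : a < b) (h : sff C0 C1 C2 a = sff C0 C1 C2 b) :
    sfr C0 C1 C2 a < sfr C0 C1 C2 b := by
  rcases share_F C0 C1 C2 a b hab h with ⟨s, x, y, rfl, rfl, h1, h2⟩ |
    ⟨s, x, y, rfl, rfl, h1, h2⟩ | ⟨s, x, y, rfl, rfl, h1, h2⟩
  · simpa [sfr, kcase_kf] using C1.fr_lt _ _ h1 h2
  · simpa [sfr, kcase_kf, kcase_km] using Fin.castSucc_lt_last _
  · simpa [sfr, kcase_kl] using C2.fr_lt _ _ h1 h2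

theorem step_lr_lt (a b : SK C0 C1 C2) (hab : a < b) (h : slf C0 C1 C2 a = slf C0 C1 C2 b) :
    slr C0 C1 C2 a < slr C0 C1 C2 b := by
  rcases share_L C0 C1 C2 a b hab h with ⟨s, x, y, rfl, rfl, h1, h2⟩ |
    ⟨s, x, y, rfl, rfl, h1, h2⟩ | ⟨s, x, y, rfl, rfl, h1, h2⟩
  · simpa [slr, kcase_kf] using C1.lr_lt _ _ h1 h2
  · simpa [slr, kcase_kl, kcase_km] using Fin.succ_pos _
  · simpa [slr, kcase_kl] using C2.lr_lt _ _ h1 h2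

theorem step_not_both (a b : SK C0 C1 C2) (hab : a < b) (h : sff C0 C1 C2 a = sff C0 C1 C2 b)
    (h' : slf C0 C1 C2 a = slf C0 C1 C2 b) : False := by
  rcases share_F C0 C1 C2 a b hab h with ⟨s, x, y, rfl, rfl, h1, h2⟩ |
    ⟨s, x, y, rfl, rfl, h1, h2⟩ | ⟨s, x, y, rfl, rfl, h1, h2⟩
  · simp only [slf, kcase_kf, fc_inj, true_and] at h'
    exact C1.not_both _ _ h1 h2 h'
  · simp only [slf, kcase_kf, kcase_km, fc_lc] at h'
  · simp only [slf, kcase_kl, lc_inj, true_and] at h'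
    exact C2.not_both _ _ h1 h2 h'

theorem step_tail (a b : SK C0 C1 C2) (hab : a < b) (h : sff C0 C1 C2 a = sff C0 C1 C2 b) :
    ∀ r ∈ srows C0 C1 C2 a, ∀ s ∈ srows C0 C1 C2 b, sff C0 C1 C2 a < s → s < r → False := by
  intro r HR s HS h3 h4
  rcases share_F C0 C1 C2 a b hab h with ⟨t, x, y, rfl, rfl, h1, h2⟩ |
    ⟨t, x, y, rfl, rfl, h1, h2⟩ | ⟨t, x, y, rfl, rfl, h1, h2⟩
  · obtain ⟨r, hr, rfl⟩ := (mem_srows_f _ _ _ _ _ _).1 HR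
    obtain ⟨s, hs, rfl⟩ := (mem_srows_f _ _ _ _ _ _).1 HS
    simp only [sff, kcase_kf, fc_lt_fc, lt_irrefl, true_and, false_or] at h3 h4
    exact C1.tail _ _ h1 h2 _ hr _ hs h3 h4
  · obtain ⟨r, hr, rfl⟩ := (mem_srows_f _ _ _ _ _ _).1 HR
    have h0 := C0.ff_le _ _ (C0.lf_rows y)
    rcases (mem_srows_m _ _ _ _ _).1 HS with rfl | rfl | ⟨s, hs, rfl⟩ <;>
    simp only [sff, kcase_kf, fc_lt_fc, lc_lt_fc, md_lt_fc, fc_lt_lc, fc_lt_md] at h3 h4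
    · grind
    · grind
    · have := C0.ff_le _ _ hs
      grind
  · obtain ⟨r, hr, rfl⟩ := (mem_srows_l _ _ _ _ _ _).1 HR
    obtain ⟨s, hs, rfl⟩ := (mem_srows_l _ _ _ _ _ _).1 HS
    simp only [sff, kcase_kl, lc_lt_lc, lt_irrefl, true_and, false_or] at h3 h4
    exact C2.tail _ _ h1 h2 _ hr _ hs h3 h4

theorem step_head (a b : SK C0 C1 C2) (hab : a < b) (h : slf C0 C1 C2 a = slf C0 C1 C2 b) :
    ∀ r ∈ srows C0 C1 C2 a, ∀ s ∈ srows C0 C1 C2 b, r < slf C0 C1 C2 a → s < r → False := by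
  intro r HR s HS h3 h4
  rcases share_L C0 C1 C2 a b hab h with ⟨t, x, y, rfl, rfl, h1, h2⟩ |
    ⟨t, x, y, rfl, rfl, h1, h2⟩ | ⟨t, x, y, rfl, rfl, h1, h2⟩
  · obtain ⟨r, hr, rfl⟩ := (mem_srows_f _ _ _ _ _ _).1 HR
    obtain ⟨s, hs, rfl⟩ := (mem_srows_f _ _ _ _ _ _).1 HS
    simp only [slf, kcase_kf, fc_lt_fc, lt_irrefl, true_and, false_or] at h3 h4
    exact C1.head _ _ h1 h2 _ hr _ hs h3 h4
  · obtain ⟨s, hs, rfl⟩ := (mem_srows_l _ _ _ _ _ _).1 HS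
    have h0 := C0.ff_le _ _ (C0.lf_rows x)
    rcases (mem_srows_m _ _ _ _ _).1 HR with rfl | rfl | ⟨r, hr, rfl⟩ <;>
    simp only [slf, kcase_km, fc_lt_lc, lc_lt_lc, md_lt_lc, lc_lt_fc, lc_lt_md] at h3 h4
    · grind
    · grind
    · have := C0.le_lf _ _ hr
      grind
  · obtain ⟨r, hr, rfl⟩ := (mem_srows_l _ _ _ _ _ _).1 HR
    obtain ⟨s, hs, rfl⟩ := (mem_srows_l _ _ _ _ _ _).1 HS
    simp only [slf, kcase_kl, lc_lt_lc, lt_irrefl, true_and, false_or] at h3 h4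
    exact C2.head _ _ h1 h2 _ hr _ hs h3 h4

/-- Projection to the old rows. -/
def pr (ρ : SR C0 C1 C2) : C0.R := (ofLex ρ).1
theorem pr_fc (x : C0.R) (y : C1.R) : pr C0 C1 C2 (fc x y) = x := rfl
theorem pr_md (x : C0.R) : pr C0 C1 C2 (md x) = x := rfl
theorem pr_lc (x : C0.R) (y : C2.R) : pr C0 C1 C2 (lc x y) = x := rfl

theorem pr_mem (a : C0.K) (ρ : SR C0 C1 C2) (h : ρ ∈ srows C0 C1 C2 (km a)) :
    pr C0 C1 C2 ρ ∈ C0.rows a := by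
  rcases (mem_srows_m _ _ _ _ _).1 h with rfl | rfl | ⟨x, hx, rfl⟩
  · exact C0.ff_rows a
  · exact C0.lf_rows a
  · exact hx

theorem pr_lt (a b : C0.K) (ρ σ : SR C0 C1 C2) (h : ρ ∈ srows C0 C1 C2 (km a))
    (h' : σ ∈ srows C0 C1 C2 (km b)) (hlt : ρ < σ) :
    pr C0 C1 C2 ρ < pr C0 C1 C2 σ ∨
    (pr C0 C1 C2 ρ = C0.ff a ∧ pr C0 C1 C2 σ = C0.ff a ∧ C0.ff a = C0.ff b) ∨
    (pr C0 C1 C2 ρ = C0.lf a ∧ pr C0 C1 C2 σ = C0.lf a ∧ C0.lf a = C0.lf b) := by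
  have p1 := pr_mem _ _ _ _ _ h
  have p2 := pr_mem _ _ _ _ _ h'
  have a1 := C0.ff_only a
  have a2 := C0.lf_only a
  have b1 := C0.ff_only b
  have b2 := C0.lf_only b
  have a3 := C0.ff_mem a
  have a4 := C0.lf_mem a
  have b3 := C0.ff_mem b
  have b4 := C0.lf_mem b
  rcases (mem_srows_m _ _ _ _ _).1 h with rfl | rfl | ⟨x, hx, rfl⟩ <;>
  rcases (mem_srows_m _ _ _ _ _).1 h' with rfl | rfl | ⟨y, hy, rfl⟩ <;>
  simp only [fc_lt_fc, fc_lt_md, fc_lt_lc, md_lt_fc, md_lt_md, md_lt_lc, lc_lt_fc, lc_lt_md,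
    lc_lt_lc, pr_fc, pr_md, pr_lc] at hlt p1 p2 ⊢ <;> grind

/-- Avoidance between two old columns. -/
theorem avoid_mm (a b : C0.K) (hab : a < b) :
    ∀ s1 ∈ srows C0 C1 C2 (km b), ∀ r1 ∈ srows C0 C1 C2 (km a), ∀ s2 ∈ srows C0 C1 C2 (km b),
    ∀ r2 ∈ srows C0 C1 C2 (km a), s1 < r1 → r1 < s2 → s2 < r2 → False := by
  intro s1 hs1 r1 hr1 s2 hs2 r2 hr2 h1 h2 h3
  have q1 := pr_lt _ _ _ _ _ _ _ hs1 hr1 h1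
  have q2 := pr_lt _ _ _ _ _ _ _ hr1 hs2 h2
  have q3 := pr_lt _ _ _ _ _ _ _ hs2 hr2 h3
  have m1 := pr_mem _ _ _ _ _ hs1
  have m2 := pr_mem _ _ _ _ _ hr1
  have m3 := pr_mem _ _ _ _ _ hs2
  have m4 := pr_mem _ _ _ _ _ hr2
  by_cases hF : C0.ff a = C0.ff b
  · have hL : C0.lf a ≠ C0.lf b := fun h => C0.not_both _ _ hab hF h
    have hi := insF_lt C0 C1 _ _ (C0.fr_lt _ _ hab hF)
    have hd : C0.ff a ≠ C0.lf b := fun h => C0.disj _ (C0.ff_mem a) (h ▸ C0.lf_mem b)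
    have k0 : C0.ff a < pr C0 C1 C2 s2 := by
      have o1 := C0.ff_le _ _ m1
      have o2 := C0.ff_le _ _ m2
      have o3 := C0.ff_le _ _ m3
      have o4 := C0.ff_le _ _ (C0.lf_rows a)
      have o5 := C0.ff_le _ _ (C0.lf_rows b)
      have s1le := step_ff_le C0 C1 C2 _ _ hs1
      have h1' := lt_of_le_of_lt s1le h1
      simp only [sff, kcase_km] at h1'
      rcases (mem_srows_m _ _ _ _ _).1 hr1 with rfl | rfl | ⟨x, hx, rfl⟩ <;>
      rcases (mem_srows_m _ _ _ _ _).1 hs2 with rfl | rfl | ⟨y, hy, rfl⟩ <;>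
      simp only [fc_lt_fc, fc_lt_md, fc_lt_lc, md_lt_fc, md_lt_md, md_lt_lc, lc_lt_fc, lc_lt_md,
        lc_lt_lc, pr_fc, pr_md, pr_lc] at h1' h2 o1 o2 o3 ⊢ <;> grind
    refine C0.tail _ _ hab hF _ m4 _ m3 k0 ?_
    rcases q3 with q3 | q3 | q3
    · exact q3
    · exact (k0.ne (hF.trans q3.1.symm)).elim
    · exact (hL q3.2.2.symm).elim
  · by_cases hL : C0.lf a = C0.lf b
    · have hi := insL_lt C0 C2 _ _ (C0.lr_lt _ _ hab hL)
      have hd : C0.ff a ≠ C0.lf b := fun h => C0.disj _ (C0.ff_mem a) (h ▸ C0.lf_mem b)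
      have k0 : pr C0 C1 C2 r1 < C0.lf a := by
        have o1 := C0.le_lf _ _ m4
        have o2 := C0.le_lf _ _ m2
        have o3 := C0.le_lf _ _ m3
        have o4 := C0.ff_le _ _ (C0.lf_rows a)
        have o5 := C0.ff_le _ _ (C0.lf_rows b)
        have s1le := step_le_lf C0 C1 C2 _ _ hr2
        have h1' := lt_of_lt_of_le h3 s1le
        simp only [slf, kcase_km] at h1'
        rcases (mem_srows_m _ _ _ _ _).1 hr1 with rfl | rfl | ⟨x, hx, rfl⟩ <;>
        rcases (mem_srows_m _ _ _ _ _).1 hs2 with rfl | rfl | ⟨y, hy, rfl⟩ <;>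
        simp only [fc_lt_fc, fc_lt_md, fc_lt_lc, md_lt_fc, md_lt_md, md_lt_lc, lc_lt_fc, lc_lt_md,
          lc_lt_lc, pr_fc, pr_md, pr_lc] at h1' h2 o1 o2 o3 ⊢ <;> grind
      refine C0.head _ _ hab hL _ m2 _ m1 k0 ?_
      rcases q1 with q1 | q1 | q1
      · exact q1
      · exact (hF q1.2.2.symm).elim
      · exact (k0.ne (q1.2.1.trans hL.symm)).elim
    · refine C0.avoid _ _ hab _ m1 _ m2 _ m3 _ m4 ?_ ?_ ?_ <;> grind

theorem step_avoid (a b : SK C0 C1 C2) (hab : a < b) :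
    ∀ s1 ∈ srows C0 C1 C2 b, ∀ r1 ∈ srows C0 C1 C2 a, ∀ s2 ∈ srows C0 C1 C2 b,
    ∀ r2 ∈ srows C0 C1 C2 a, s1 < r1 → r1 < s2 → s2 < r2 → False := by
  intro s1 HS1 r1 HR1 s2 HS2 r2 HR2 h1 h2 h3
  rcases kk_cases a with ⟨s, x, rfl⟩ | ⟨x, rfl⟩ | ⟨s, x, rfl⟩ <;>
  rcases kk_cases b with ⟨t, y, rfl⟩ | ⟨y, rfl⟩ | ⟨t, y, rfl⟩ <;>
  simp only [kf_lt_kf, kf_lt_km, kf_lt_kl, km_lt_kf, km_lt_km, km_lt_kl, kl_lt_kf, kl_lt_km,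
    kl_lt_kl] at hab
  · obtain ⟨s1, hs1, rfl⟩ := (mem_srows_f _ _ _ _ _ _).1 HS1
    obtain ⟨s2, hs2, rfl⟩ := (mem_srows_f _ _ _ _ _ _).1 HS2
    obtain ⟨r1, hr1, rfl⟩ := (mem_srows_f _ _ _ _ _ _).1 HR1
    obtain ⟨r2, hr2, rfl⟩ := (mem_srows_f _ _ _ _ _ _).1 HR2
    simp only [fc_lt_fc] at h1 h2 h3
    rcases hab with hab | ⟨rfl, hab⟩
    · have hab' : s.1 < t.1 := hab
      grind
    · simp only [lt_irrefl, true_and, false_or] at h1 h2 h3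
      exact C1.avoid _ _ hab _ hs1 _ hr1 _ hs2 _ hr2 h1 h2 h3
  · obtain ⟨r1, hr1, rfl⟩ := (mem_srows_f _ _ _ _ _ _).1 HR1
    obtain ⟨r2, hr2, rfl⟩ := (mem_srows_f _ _ _ _ _ _).1 HR2
    have h0 := C0.ff_le _ _ (C0.lf_rows y)
    have h0' := C0.ff_le y
    rcases (mem_srows_m _ _ _ _ _).1 HS1 with rfl | rfl | ⟨s1, hs1, rfl⟩ <;>
    rcases (mem_srows_m _ _ _ _ _).1 HS2 with rfl | rfl | ⟨s2, hs2, rfl⟩ <;>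
    simp only [fc_lt_fc, lc_lt_fc, md_lt_fc, fc_lt_lc, fc_lt_md] at h1 h2 h3 <;> grind
  · obtain ⟨s1, hs1, rfl⟩ := (mem_srows_l _ _ _ _ _ _).1 HS1
    obtain ⟨s2, hs2, rfl⟩ := (mem_srows_l _ _ _ _ _ _).1 HS2
    obtain ⟨r1, hr1, rfl⟩ := (mem_srows_f _ _ _ _ _ _).1 HR1
    obtain ⟨r2, hr2, rfl⟩ := (mem_srows_f _ _ _ _ _ _).1 HR2
    simp only [fc_lt_lc, lc_lt_fc] at h1 h2 h3
    grind
  · exact avoid_mm C0 C1 C2 x y hab _ HS1 _ HR1 _ HS2 _ HR2 h1 h2 h3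
  · obtain ⟨s1, hs1, rfl⟩ := (mem_srows_l _ _ _ _ _ _).1 HS1
    obtain ⟨s2, hs2, rfl⟩ := (mem_srows_l _ _ _ _ _ _).1 HS2
    have h0 := C0.ff_le _ _ (C0.lf_rows x)
    have h0' := C0.le_lf x
    rcases (mem_srows_m _ _ _ _ _).1 HR1 with rfl | rfl | ⟨r1, hr1, rfl⟩ <;>
    rcases (mem_srows_m _ _ _ _ _).1 HR2 with rfl | rfl | ⟨r2, hr2, rfl⟩ <;>
    simp only [fc_lt_lc, lc_lt_lc, md_lt_lc, lc_lt_fc, lc_lt_md] at h1 h2 h3 <;> grind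
  · obtain ⟨s1, hs1, rfl⟩ := (mem_srows_l _ _ _ _ _ _).1 HS1
    obtain ⟨s2, hs2, rfl⟩ := (mem_srows_l _ _ _ _ _ _).1 HS2
    obtain ⟨r1, hr1, rfl⟩ := (mem_srows_l _ _ _ _ _ _).1 HR1
    obtain ⟨r2, hr2, rfl⟩ := (mem_srows_l _ _ _ _ _ _).1 HR2
    simp only [lc_lt_lc] at h1 h2 h3
    rcases hab with hab | ⟨rfl, hab⟩
    · have hab' : s.1 < t.1 := hab
      grind
    · simp only [lt_irrefl, true_and, false_or] at h1 h2 h3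
      exact C2.avoid _ _ hab _ hs1 _ hr1 _ hs2 _ hr2 h1 h2 h3

/-- The composed configuration. -/
noncomputable def step : Cfg (w + 2) (m1 + 1) (m2 + 1) (F * f1 + L * f2) (F * l1 + L * l2) where
  R := SR C0 C1 C2
  K := SK C0 C1 C2
  loR := inferInstance
  loK := inferInstance
  ftK := inferInstanceAs
    (Fintype (({r // r ∈ C0.Fs} × C1.K) ⊕ (C0.K ⊕ ({r // r ∈ C0.Ls} × C2.K))))
  rows := srows C0 C1 C2
  used := sused C0 C1 C2
  Fs := sFs C0 C1 C2
  Ls := sLs C0 C1 C2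
  ff := sff C0 C1 C2
  lf := slf C0 C1 C2
  fr := sfr C0 C1 C2
  lr := slr C0 C1 C2
  card_rows := step_card_rows C0 C1 C2
  rows_used := step_rows_used C0 C1 C2
  Fs_used := step_Fs_used C0 C1 C2
  Ls_used := step_Ls_used C0 C1 C2
  card_Fs := step_card_Fs C0 C1 C2
  card_Ls := step_card_Ls C0 C1 C2
  disj := step_disj C0 C1 C2
  ff_mem := by
    intro k
    rcases kk_cases k with ⟨s, a, rfl⟩ | ⟨b, rfl⟩ | ⟨s, a, rfl⟩
    · exact (fc_mem_sFs _ _ _ _ _).2 ⟨s.2, C1.ff_mem _⟩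
    · exact (fc_mem_sFs _ _ _ _ _).2 ⟨C0.ff_mem _, insF_mem _ _ _⟩
    · exact (lc_mem_sFs _ _ _ _ _).2 ⟨s.2, C2.ff_mem _⟩
  lf_mem := by
    intro k
    rcases kk_cases k with ⟨s, a, rfl⟩ | ⟨b, rfl⟩ | ⟨s, a, rfl⟩
    · exact (fc_mem_sLs _ _ _ _ _).2 ⟨s.2, C1.lf_mem _⟩
    · exact (lc_mem_sLs _ _ _ _ _).2 ⟨C0.lf_mem _, insL_mem _ _ _⟩
    · exact (lc_mem_sLs _ _ _ _ _).2 ⟨s.2, C2.lf_mem _⟩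
  ff_rows := by
    intro k
    rcases kk_cases k with ⟨s, a, rfl⟩ | ⟨b, rfl⟩ | ⟨s, a, rfl⟩
    · exact (mem_srows_f _ _ _ _ _ _).2 ⟨_, C1.ff_rows _, rfl⟩
    · exact (mem_srows_m _ _ _ _ _).2 (Or.inl rfl)
    · exact (mem_srows_l _ _ _ _ _ _).2 ⟨_, C2.ff_rows _, rfl⟩
  lf_rows := by
    intro k
    rcases kk_cases k with ⟨s, a, rfl⟩ | ⟨b, rfl⟩ | ⟨s, a, rfl⟩
    · exact (mem_srows_f _ _ _ _ _ _).2 ⟨_, C1.lf_rows _, rfl⟩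
    · exact (mem_srows_m _ _ _ _ _).2 (Or.inr (Or.inl rfl))
    · exact (mem_srows_l _ _ _ _ _ _).2 ⟨_, C2.lf_rows _, rfl⟩
  ff_le := step_ff_le C0 C1 C2
  le_lf := step_le_lf C0 C1 C2
  ff_only := step_ff_only C0 C1 C2
  lf_only := step_lf_only C0 C1 C2
  fr_lt := step_fr_lt C0 C1 C2
  lr_lt := step_lr_lt C0 C1 C2
  not_both := step_not_both C0 C1 C2
  tail := step_tail C0 C1 C2
  head := step_head C0 C1 C2
  avoid := step_avoid C0 C1 C2
  card_used := step_card_used C0 C1 C2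
  card_K1 := by
    rw [card_SK, C1.card_K1, C0.card_K1, C2.card_K1]; ring
  card_K2 := by
    rw [card_SK, C1.card_K2, C0.card_K2, C2.card_K2]; ring

end Step

/-! ## Ackermann-type bounds -/

/-- Ackermann hierarchy inverse to `alphaHier (k+1)`. -/
def Ak : ℕ → ℕ → ℕ
  | 0, x => 2 * x
  | _ + 1, 0 => 1
  | k + 1, x + 1 => Ak k (Ak (k + 1) x)

theorem iterCount_lt (f A B : ℕ → ℕ) (hB0 : B 0 = 1) (hB : ∀ x, B (x + 1) = A (B x))
    (hf : ∀ m x, x < f m → A x < m) :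
    ∀ fuel m x, x < iterCount f fuel m → B x < m := by
  intro fuel
  induction fuel with
  | zero => intro m x h; simp [iterCount] at h
  | succ fuel ih =>
    intro m x h
    rw [iterCount] at h
    split_ifs at h with h1
    · omega
    · cases x with
      | zero => rw [hB0]; omega
      | succ x =>
        rw [hB]
        exact hf _ _ (ih _ _ (by omega))

theorem alpha_lt (k : ℕ) : ∀ m x, x < alphaHier (k + 1) m → Ak k x < m := by
  induction k with
  | zero => intro m x h; simp only [alphaHier, Ak, Nat.zero_add] at *; omega
  | succ k ih =>
    intro m x h
    have h' : x < iterCount (alphaHier (k + 1)) m m := h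
    exact iterCount_lt (alphaHier (k + 1)) (Ak k) (Ak (k + 1)) (by simp [Ak])
      (by intro x; simp [Ak]) ih _ _ _ h'

theorem Ak_basic (k : ℕ) : (∀ x, x + 1 ≤ Ak (k + 1) x) ∧ (∀ x, 2 * Ak (k + 1) x ≤ Ak (k + 1) (x + 1)) := by
  induction k with
  | zero =>
    have h2 : ∀ x, 2 * Ak 1 x ≤ Ak 1 (x + 1) := by intro x; simp [Ak]
    refine ⟨?_, h2⟩
    intro x
    induction x with
    | zero => simp [Ak]
    | succ x ih => have := h2 x; simp only [Nat.zero_add] at *; omega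
  | succ k ih =>
    obtain ⟨i1, i2⟩ := ih
    have hpos : ∀ x, 1 ≤ Ak (k + 2) x := by
      intro x
      cases x with
      | zero => simp [Ak]
      | succ x =>
        have := i1 (Ak (k + 2) x)
        have e : Ak (k + 2) (x + 1) = Ak (k + 1) (Ak (k + 2) x) := by rw [Ak]
        omega
    have h2 : ∀ x, 2 * Ak (k + 2) x ≤ Ak (k + 2) (x + 1) := by
      intro x
      rw [Ak]
      have hp := hpos x
      obtain ⟨y, hy⟩ : ∃ y, Ak (k + 2) x = y + 1 := ⟨Ak (k + 2) x - 1, by omega⟩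
      rw [hy]
      have := i2 y
      have := i1 y
      omega
    refine ⟨?_, h2⟩
    intro x
    induction x with
    | zero => exact hpos 0
    | succ x ih =>
      have := h2 x
      rw [show k + 1 + 1 = k + 2 from rfl] at *
      omega

theorem Ak_ge (k x : ℕ) : x + 1 ≤ Ak (k + 1) x := (Ak_basic k).1 x
theorem Ak_dbl (k x : ℕ) : 2 * Ak (k + 1) x ≤ Ak (k + 1) (x + 1) := (Ak_basic k).2 x

theorem Ak_mono (k : ℕ) : Monotone (Ak (k + 1)) :=
  monotone_nat_of_le_succ fun x => by have := Ak_dbl k x; omega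

theorem Ak_pow (k x y : ℕ) : 2 ^ y * Ak (k + 1) x ≤ Ak (k + 1) (x + y) := by
  induction y with
  | zero => simp
  | succ y ih =>
    have := Ak_dbl k (x + y)
    rw [pow_succ, ← add_assoc]
    nlinarith

theorem Ak_mul (k x y : ℕ) : y * Ak (k + 1) x ≤ Ak (k + 1) (x + y) :=
  (Nat.mul_le_mul_right _ (Nat.lt_two_pow_self).le).trans (Ak_pow k x y)

theorem Ak_one_eq (x : ℕ) : Ak 1 x = 2 ^ x := by
  induction x with
  | zero => simp [Ak]
  | succ x ih => rw [Ak, ih, Ak, pow_succ, mul_comm]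

theorem Ak_two_pow (k x : ℕ) : 2 ^ x ≤ Ak (k + 1) x := by
  have h := Ak_pow k 0 x
  have h0 : 1 ≤ Ak (k + 1) 0 := Ak_ge k 0
  rw [Nat.zero_add] at h
  nlinarith [Nat.two_pow_pos x]

theorem Ak_small (k : ℕ) : Ak k 1 = 2 ∧ Ak k 2 = 4 := by
  induction k with
  | zero => simp [Ak]
  | succ k ih =>
    have h1 : Ak (k + 1) 1 = 2 := by
      rw [show (1 : ℕ) = 0 + 1 from rfl, Ak, Ak, ih.1]
    refine ⟨h1, ?_⟩
    rw [show (2 : ℕ) = 1 + 1 from rfl, Ak, h1, ih.2]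

theorem Ak_three (k : ℕ) : Ak (k + 2) 3 = Ak k (Ak (k + 1) 3) := by
  have h : Ak (k + 2) 3 = Ak (k + 1) (Ak (k + 2) 2) := by
    rw [show (3 : ℕ) = 2 + 1 from rfl, Ak]
  rw [h, (Ak_small _).2, show (4 : ℕ) = 3 + 1 from rfl, Ak]

theorem Ak_three_ge (k : ℕ) : 21 ≤ Ak (k + 3) 3 := by
  induction k with
  | zero =>
    have h1 : Ak 1 3 = 8 := by rw [Ak_one_eq]; norm_num
    have h2 : Ak 2 3 = 16 := by rw [Ak_three 0, h1]; simp [Ak]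
    have h3 : Ak 3 3 = 2 ^ 16 := by rw [Ak_three 1, h2, Ak_one_eq]
    rw [Nat.zero_add, h3]; norm_num
  | succ k ih =>
    rw [show k + 1 + 3 = (k + 2) + 2 by ring, Ak_three]
    have := Ak_ge (k + 1) (Ak (k + 2 + 1) 3)
    exact ih.trans ((Nat.le_succ _).trans this)

/-- Numbers of first-rows and last-rows. -/
def FL : ℕ → ℕ → ℕ → ℕ × ℕ
  | 0, m1, m2 => (m2, m1)
  | _ + 1, 0, _ => (2, 0)
  | _ + 1, _ + 1, 0 => (0, 2)
  | d + 1, m1 + 1, m2 + 1 =>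
    ((FL d (FL (d + 1) m1 (m2 + 1)).1 (FL (d + 1) (m1 + 1) m2).2).1 * (FL (d + 1) m1 (m2 + 1)).1
      + (FL d (FL (d + 1) m1 (m2 + 1)).1 (FL (d + 1) (m1 + 1) m2).2).2 *
        (FL (d + 1) (m1 + 1) m2).1,
     (FL d (FL (d + 1) m1 (m2 + 1)).1 (FL (d + 1) (m1 + 1) m2).2).1 * (FL (d + 1) m1 (m2 + 1)).2
      + (FL d (FL (d + 1) m1 (m2 + 1)).1 (FL (d + 1) (m1 + 1) m2).2).2 *
        (FL (d + 1) (m1 + 1) m2).2)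
  termination_by d m1 m2 => (d, m1 + m2)

theorem FL_pos (d : ℕ) : ∀ s m1 m2, m1 + m2 = s →
    (1 ≤ m2 → 1 ≤ (FL d m1 m2).1) ∧ (1 ≤ m1 → 1 ≤ (FL d m1 m2).2) := by
  induction d with
  | zero => intro s m1 m2 _; simp [FL]
  | succ d ihd =>
    intro s
    induction s with
    | zero =>
      intro m1 m2 h
      obtain ⟨rfl, rfl⟩ : m1 = 0 ∧ m2 = 0 := by omega
      simp
    | succ s ihs =>
      intro m1 m2 h
      match m1, m2 with
      | 0, m2 => simp [FL]
      | m1 + 1, 0 => simp [FL]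
      | m1 + 1, m2 + 1 =>
        have h1 := (ihs m1 (m2 + 1) (by omega)).1 (by omega)
        have h2 := (ihs (m1 + 1) m2 (by omega)).2 (by omega)
        rw [FL]
        generalize (FL (d + 1) m1 (m2 + 1)).1 = f1 at *
        generalize (FL (d + 1) (m1 + 1) m2).2 = l2 at *
        have h3 := ihd _ f1 l2 rfl
        have h4 := h3.1 h2
        have h5 := h3.2 h1
        refine ⟨fun _ => ?_, fun _ => ?_⟩
        · exact le_add_right (Nat.mul_pos h4 h1)
        · exact le_add_left (Nat.mul_pos h5 h2)

theorem FL_bound (d : ℕ) : ∀ s m1 m2, m1 + m2 = s →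
    4 * (FL d m1 m2).1 + 5 ≤ Ak (d + 1) (s + 4) ∧ 4 * (FL d m1 m2).2 + 5 ≤ Ak (d + 1) (s + 4) := by
  have hb : ∀ k s, 16 ≤ Ak (k + 1) (s + 4) := by
    intro k s
    have h1 := Ak_two_pow k 4
    have h2 := Ak_mono k (show 4 ≤ s + 4 by omega)
    omega
  induction d with
  | zero =>
    intro s m1 m2 h
    have h1 : s + 1 ≤ 2 ^ s := Nat.lt_two_pow_self
    simp only [FL, Nat.zero_add, Ak_one_eq, pow_add]
    omega
  | succ d ihd =>
    intro s
    induction s with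
    | zero =>
      intro m1 m2 h
      obtain ⟨rfl, rfl⟩ : m1 = 0 ∧ m2 = 0 := by omega
      have := hb (d + 1) 0
      simp only [FL]
      omega
    | succ s ihs =>
      intro m1 m2 h
      have hbb := hb (d + 1) (s + 1)
      match m1, m2 with
      | 0, m2 => simp only [FL]; omega
      | m1 + 1, 0 => simp only [FL]; omega
      | m1 + 1, m2 + 1 =>
        obtain ⟨h1, h1'⟩ := ihs m1 (m2 + 1) (by omega)
        obtain ⟨h2, h2'⟩ := ihs (m1 + 1) m2 (by omega)
        rw [FL]
        generalize (FL (d + 1) m1 (m2 + 1)).1 = f1 at *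
        generalize (FL (d + 1) (m1 + 1) m2).2 = l2 at *
        generalize (FL (d + 1) m1 (m2 + 1)).2 = l1 at *
        generalize (FL (d + 1) (m1 + 1) m2).1 = f2 at *
        obtain ⟨h3, h3'⟩ := ihd _ f1 l2 rfl
        generalize (FL d f1 l2).1 = F at *
        generalize (FL d f1 l2).2 = L at *
        rw [show s + 1 + 4 = (s + 4) + 1 by ring] at hbb ⊢
        rw [Ak] at hbb ⊢
        generalize Ak (d + 1 + 1) (s + 4) = H at *
        obtain ⟨g, g1, g2, g3, g4, g5⟩ : ∃ g, f1 ≤ g ∧ f2 ≤ g ∧ l1 ≤ g ∧ l2 ≤ g ∧ 4 * g + 5 ≤ H :=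
          ⟨(H - 5) / 4, by omega, by omega, by omega, by omega, by omega⟩
        have hA := Ak_mono d (show f1 + l2 + 4 ≤ 2 * g + 4 by omega)
        have hB := Ak_mul d (2 * g + 4) (2 * g)
        have hC := Ak_mono d (show 2 * g + 4 + 2 * g ≤ H by omega)
        generalize Ak (d + 1) (2 * g + 4) = X at *
        have key : ∀ u v, u ≤ g → v ≤ g → 4 * (F * u + L * v) + 5 ≤ Ak (d + 1) H := by
          intro u v hu hv
          rcases Nat.eq_zero_or_pos g with rfl | hg
          · obtain rfl : u = 0 := by omega
            obtain rfl : v = 0 := by omega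
            omega
          · have e1 : 4 * F + 5 ≤ X := by omega
            have e2 : 4 * L + 5 ≤ X := by omega
            have e3 : F * u ≤ F * g := Nat.mul_le_mul_left _ hu
            have e4 : L * v ≤ L * g := Nat.mul_le_mul_left _ hv
            have e5 := Nat.mul_le_mul_right g e1
            have e6 := Nat.mul_le_mul_right g e2
            nlinarith
        exact ⟨key _ _ g1 g2, key _ _ g3 g4⟩

/-- If `α_{d+5}(n) ≥ 4` then the level-`d+1` configuration has at most `n` columns. -/
theorem FL_le (d n : ℕ) (h : 3 < alphaHier (d + 5) n) : (FL (d + 1) 8 8).1 * 8 ≤ n := by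
  have h1 : Ak (d + 4) 3 < n := alpha_lt (d + 4) n 3 h
  have h2 : Ak (d + 4) 3 = Ak (d + 2) (Ak (d + 3) 3) := Ak_three (d + 2)
  have h3 : Ak (d + 2) 21 ≤ Ak (d + 2) (Ak (d + 3) 3) := Ak_mono (d + 1) (Ak_three_ge d)
  have h4 : 2 * Ak (d + 2) 20 ≤ Ak (d + 2) 21 := Ak_dbl (d + 1) 20
  have h5 : 4 * (FL (d + 1) 8 8).1 + 5 ≤ Ak (d + 2) 20 := (FL_bound (d + 1) 16 8 8 rfl).1
  omega

/-! ## Existence of configurations and the final matrix -/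

theorem exists_cfg_succ (d : ℕ)
    (ih : ∀ m1 m2, 1 ≤ m1 → 1 ≤ m2 →
      Nonempty (Cfg (2 * d + 2) m1 m2 (FL d m1 m2).1 (FL d m1 m2).2)) :
    ∀ s m1 m2, m1 + m2 = s →
      Nonempty (Cfg (2 * (d + 1) + 2) m1 m2 (FL (d + 1) m1 m2).1 (FL (d + 1) m1 m2).2) := by
  intro s
  induction s with
  | zero =>
    intro m1 m2 h
    obtain ⟨rfl, rfl⟩ : m1 = 0 ∧ m2 = 0 := by omega
    rw [FL]
    exact ⟨bdF _ _⟩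
  | succ s ihs =>
    intro m1 m2 h
    match m1, m2 with
    | 0, m2 => rw [FL]; exact ⟨bdF _ _⟩
    | m1 + 1, 0 => rw [FL]; exact ⟨bdL _ _⟩
    | m1 + 1, m2 + 1 =>
      obtain ⟨C1⟩ := ihs m1 (m2 + 1) (by omega)
      obtain ⟨C2⟩ := ihs (m1 + 1) m2 (by omega)
      obtain ⟨C0⟩ := ih _ _ ((FL_pos (d + 1) _ m1 (m2 + 1) rfl).1 (by omega))
        ((FL_pos (d + 1) _ (m1 + 1) m2 rfl).2 (by omega))
      rw [FL]
      exact ⟨step C0 C1 C2⟩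

theorem exists_cfg (d : ℕ) : ∀ m1 m2, 1 ≤ m1 → 1 ≤ m2 →
    Nonempty (Cfg (2 * d + 2) m1 m2 (FL d m1 m2).1 (FL d m1 m2).2) := by
  induction d with
  | zero =>
    intro m1 m2 h1 h2
    rw [FL]
    exact ⟨base m1 m2 (by omega)⟩
  | succ d ih =>
    intro m1 m2 _ _
    exact exists_cfg_succ d ih _ m1 m2 rfl

theorem mod_lt_mod {U i j : ℕ} (h : i < j) (h' : i / U = j / U) : i % U < j % U := by
  have h1 := Nat.div_add_mod i U
  have h2 := Nat.div_add_mod j U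
  rw [h'] at h1
  omega

theorem exists_matrix {w m1 m2 F L : ℕ} (C : Cfg w m1 m2 F L) (n U N : ℕ)
    (hU : C.used.card = U) (hN : Fintype.card C.K = N) (hUpos : 0 < U) (hUN : 2 * U ≤ N)
    (hNn : N ≤ n) :
    ∃ M : Fin n → Fin n → Bool, ¬ MatContains M (DS 4) ∧ ∀ j : Fin n, w ≤ colOnes M j := by
  classical
  have hNpos : 0 < N := by omega
  let e : Fin N ≃o C.K := monoEquivOfFin C.K hN
  let g : Fin U ↪o C.R := C.used.orderEmbOfFin hU
  let M : Fin n → Fin n → Bool := fun i j => decide (i.1 / U = j.1 / N ∧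
    g ⟨i.1 % U, Nat.mod_lt _ hUpos⟩ ∈ C.rows (e ⟨j.1 % N, Nat.mod_lt _ hNpos⟩))
  have hM : ∀ i j, M i j = true ↔ (i.1 / U = j.1 / N ∧
    g ⟨i.1 % U, Nat.mod_lt _ hUpos⟩ ∈ C.rows (e ⟨j.1 % N, Nat.mod_lt _ hNpos⟩)) := by
    intro i j
    simp [M]
  refine ⟨M, ?_, ?_⟩
  · rintro ⟨r, c, hr, hc, h⟩
    have a0 := (hM _ _).1 (h 0 1 (by decide))
    have a1 := (hM _ _).1 (h 1 0 (by decide))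
    have a2 := (hM _ _).1 (h 2 1 (by decide))
    have a3 := (hM _ _).1 (h 3 0 (by decide))
    have c01 : (c 0).1 < (c 1).1 := hc (by decide)
    have r01 : (r 0).1 < (r 1).1 := hr (by decide)
    have r12 : (r 1).1 < (r 2).1 := hr (by decide)
    have r23 : (r 2).1 < (r 3).1 := hr (by decide)
    have b1 : (c 0).1 / N ≤ (c 1).1 / N := Nat.div_le_div_right c01.le
    have b2 : (r 0).1 / U ≤ (r 1).1 / U := Nat.div_le_div_right r01.le
    refine C.avoid _ _ (e.strictMono (Fin.mk_lt_mk.2 (mod_lt_mod c01 (by omega)))) _ a0.2 _ a1.2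
      _ a2.2 _ a3.2 ?_ ?_ ?_
    · exact g.strictMono (Fin.mk_lt_mk.2 (mod_lt_mod r01 (by omega)))
    · exact g.strictMono (Fin.mk_lt_mk.2 (mod_lt_mod r12 (by omega)))
    · exact g.strictMono (Fin.mk_lt_mk.2 (mod_lt_mod r23 (by omega)))
  · intro j
    set k : C.K := e ⟨j.1 % N, Nat.mod_lt _ hNpos⟩ with hk
    set b := j.1 / N with hb
    have hbN : b * N ≤ j.1 := Nat.div_mul_le_self _ _
    have hb1 : (b + 1) * U ≤ n := by
      have := j.2
      have h3 : (b + 1) * (2 * U) ≤ (b + 1) * N := Nat.mul_le_mul_left _ hUN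
      nlinarith
    have hex : ∀ x : {x // x ∈ C.rows k}, ∃ p : Fin U, g p = x.1 := by
      intro x
      have h1 : x.1 ∈ (C.used : Set C.R) := C.rows_used _ _ x.2
      rw [← Finset.range_orderEmbOfFin C.used hU] at h1
      exact h1
    choose p hp using hex
    have hdiv : ∀ x, (b * U + (p x).1) / U = b := by
      intro x
      rw [mul_comm, Nat.mul_add_div hUpos, Nat.div_eq_of_lt (p x).2, add_zero]
    have hmod : ∀ x, (b * U + (p x).1) % U = (p x).1 := by
      intro x
      rw [mul_comm, Nat.mul_add_mod, Nat.mod_eq_of_lt (p x).2]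
    have hlt : ∀ x, b * U + (p x).1 < n := by
      intro x
      have := (p x).2
      have h3 : (b + 1) * U = b * U + U := by ring
      omega
    let f : {x // x ∈ C.rows k} → {i : Fin n // M i j = true} := fun x =>
      ⟨⟨b * U + (p x).1, hlt x⟩, (hM _ _).2 ⟨hdiv x, by
        have h4 : (⟨(b * U + (p x).1) % U, Nat.mod_lt _ hUpos⟩ : Fin U) = p x :=
          Fin.ext (hmod x)
        rw [h4, hp]
        exact x.2⟩⟩
    have hf : Function.Injective f := by
      intro x y hxy
      have h5 : b * U + (p x).1 = b * U + (p y).1 :=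
        congrArg (fun z : {i : Fin n // M i j = true} => z.1.1) hxy
      have h6 : p x = p y := Fin.ext (by omega)
      exact Subtype.ext (by rw [← hp x, ← hp y, h6])
    have h7 := Nat.card_le_card_of_injective f hf
    rw [colOnes]
    refine le_trans ?_ h7
    rw [Nat.card_eq_fintype_card, Fintype.card_coe, C.card_rows]

theorem exists_big (d n : ℕ) (h : 3 < alphaHier (d + 5) n) :
    ∃ M : Fin n → Fin n → Bool, ¬ MatContains M (DS 4) ∧
      ∀ j : Fin n, 2 * (d + 1) + 2 ≤ colOnes M j := by
  obtain ⟨C⟩ := exists_cfg (d + 1) 8 8 (by omega) (by omega)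
  have h1 := FL_le d n h
  have h2 := (FL_pos (d + 1) _ 8 8 rfl).1 (by omega)
  have h3 := C.card_K1
  have h4 := C.card_K2
  have h5 := C.card_used
  have h6 : (C.used.card : ℕ) ≠ 0 := by
    intro h0
    have h7 : C.Fs ⊆ C.used := C.Fs_used
    have h8 := Finset.card_le_card h7
    rw [C.card_Fs] at h8
    omega
  exact exists_matrix C n _ _ rfl rfl (by omega) (by omega) (by omega)

end DSFour

/-- There is a constant `C` such that for every `n ≥ 1` there exists an
`n × n` (0,1)-matrix avoiding `DS₄` with at least `2·α(n) − C` `1`-entries in every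
column. -/
theorem ds4_avoiding_construction :
    ∃ C : ℝ, ∀ n : ℕ, 1 ≤ n →
      ∃ M : Fin n → Fin n → Bool, ¬ MatContains M (DS 4) ∧
        ∀ j : Fin n, 2 * (invAck n : ℝ) - C ≤ (colOnes M j : ℝ) := by
  refine ⟨14, fun n _ => ?_⟩
  by_cases ha : invAck n ≤ 6
  · refine ⟨fun _ _ => false, ?_, fun j => ?_⟩
    · rintro ⟨r, c, _, _, h⟩
      have h1 := h 0 1 (by decide)
      simp at h1
    · have h1 : (invAck n : ℝ) ≤ 6 := by exact_mod_cast ha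
      have h2 : (0 : ℝ) ≤ colOnes (fun _ _ => false : Fin n → Fin n → Bool) j := Nat.cast_nonneg _
      linarith
  · obtain ⟨d, hd⟩ : ∃ d, invAck n = d + 6 := ⟨invAck n - 6, by omega⟩
    have h3 : 3 < alphaHier (d + 5) n := by
      have h4 : d + 5 < invAck n := by omega
      have h5 := Nat.notMem_of_lt_sInf h4
      by_contra h6
      exact h5 ⟨by omega, by omega⟩
    obtain ⟨M, hM, hc⟩ := DSFour.exists_big d n h3
    refine ⟨M, hM, fun j => ?_⟩
    have h7 : ((2 * (d + 1) + 2 : ℕ) : ℝ) ≤ colOnes M j := by exact_mod_cast hc j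
    rw [hd]
    push_cast at h7 ⊢
    linarith
end
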